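/- Fix κ > 0, an integer m ≥ 3, and a > 0. For all sufficiently large n there is exactly one function φ : ℝ^I → ℝ that is Lipschitz continuous on the closed ball {x ∈ ℝ^I : |x| ≤ κ √n (log n)^m}, twice continuously differentiable on B_κ^n, vanishes at every boundary point x with |x| = κ √n (log n)^m, and satisfies the smoothed HJB equation with parameter a at every x ∈ B_κ^n; moreover there exists α ∈ (0,1] (independent of n and a) such that the second derivatives of this solution are α-Hölder continuous on every compact subset of B_κ^n. -/

import Mathlib

/-!
For large `n` the radius of the ball is `o(n)`, while the constant part of the diffusion coefficients,
`σ_i = (λ_i + μ_i ν_i n) / 2`, grows like `n`. The smoothed HJB equation therefore has the form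
`γ φ = ∑ σ_i ∂²_{ii} φ + min_k (∑ e_{k,i} ∂²_{ii} φ + ∑ b_{k,i} ∂_i φ + c_k)` with bounded Lipschitz
coefficients and a second-order perturbation `|e_{k,i}| ≤ ε σ_i`, where `ε` is as small as needed
(`HJBgen_iff`, `coefG`). This is a fully nonlinear equation, but it is a small perturbation of a
constant-coefficient one, and it can be treated by a Schauder estimate alone.

Existence is proved with a monotone finite-difference scheme on a lattice of mesh `h √σ_i` in
direction `i`, whose principal part is a product `R` of three-point averages. The scheme is solvable
by a contraction argument (`exists_discrete`) and satisfies a comparison principle (`compare`).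

* A discrete Schauder estimate (`schauder_global`, `schauder_local`) bounds the Hölder-`1/2` seminorm of
  the second differences of `u` by that of `(1 - R) u`. It follows from the series `∑ R ^ n` and the
  smoothing of `R ^ n`, which in turn comes from summation by parts against binomial weights (`ibp`).
* Since `ε` is small, the Hölder seminorm of the nonlinearity is absorbed, which gives mesh-independent
  interior bounds for second differences and their weighted Hölder seminorm (`apriori`).
* An exponential barrier (`Coef.barrier`) bounds the discrete solution by a multiple of the distance to
  the boundary; with the interior estimate this gives a Lipschitz bound up to the boundary.

The limit `h → 0` along an ultrafilter produces a function with gradient and Hessian fields satisfying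
Taylor estimates (`Coef.exists_limSol`), hence a classical solution with locally `1/2`-Hölder second
derivatives (`Coef.exists_isCl`). Uniqueness is the maximum principle (`Coef.isCl_unique`), and it
transfers the Hölder property, with exponent `1/2`, to every solution.
-/

open Finset Metric Set

noncomputable section

namespace HW

variable {I : ℕ}

/-- `ℝ^I` with the Euclidean norm. -/
abbrev Euc (I : ℕ) := EuclideanSpace ℝ (Fin I)

/-- First partial derivative `∂_i φ (x)`. -/
noncomputable def pd1 (φ : Euc I → ℝ) (i : Fin I) (x : Euc I) : ℝ :=
  fderiv ℝ φ x (EuclideanSpace.single i 1)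

/-- Second partial derivative `∂²_{ii} φ (x)`. -/
noncomputable def pd2 (φ : Euc I → ℝ) (i : Fin I) (x : Euc I) : ℝ :=
  fderiv ℝ (pd1 φ i) x (EuclideanSpace.single i 1)

/-- The fluid fraction `ν_i = (a_i/μ_i) · μ̄` where `μ̄ = (∑ a_j/μ_j)⁻¹`. -/
noncomputable def nu (μ a : Fin I → ℝ) (i : Fin I) : ℝ :=
  (a i / μ i) * (∑ j, a j / μ j)⁻¹

/-- The radius `κ √n (log n)^m` of the ball `B_κ^n`. -/
noncomputable def Rad (κ : ℝ) (m n : ℕ) : ℝ :=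
  κ * Real.sqrt n * Real.log n ^ m

/-- The HJB equation at `x`, with a general "front" function `g` in place of `(e·x)^+`
(the true HJB equation uses `g y = max y 0`, the smoothed one uses `g = f_a`).
Here `lam = λ^n`, `l_i^n = a_i λ^n − μ_i ν_i n`. -/
def HJBgen (μ a c : Fin I → ℝ) (γ lam : ℝ) (n : ℕ) (g : ℝ → ℝ)
    (φ : Euc I → ℝ) (x : Euc I) : Prop :=
  0 = -γ * φ x
    + g (∑ j, x j) * (⨅ i, (c i + μ i * pd1 φ i x - (1 / 2) * μ i * pd2 φ i x))
    + ∑ i, ((a i * lam - μ i * nu μ a i * n) - μ i * x i) * pd1 φ i x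
    + (1 / 2) * ∑ i, (a i * lam + μ i * (nu μ a i * n + x i)) * pd2 φ i x

/-- A classical solution on `B = ball 0 R`: Lipschitz on the closed ball, `C²` on the open
ball, vanishing on the boundary sphere, and satisfying the (generalized) HJB equation on `B`. -/
def IsSolGen (μ a c : Fin I → ℝ) (γ lam : ℝ) (n : ℕ) (R : ℝ) (g : ℝ → ℝ)
    (φ : Euc I → ℝ) : Prop :=
  (∃ K : NNReal, LipschitzOnWith K φ (closedBall 0 R)) ∧
  ContDiffOn ℝ 2 φ (ball 0 R) ∧
  (∀ x : Euc I, ‖x‖ = R → φ x = 0) ∧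
  (∀ x ∈ ball (0 : Euc I) R, HJBgen μ a c γ lam n g φ x)

/-- α-Hölder continuity of the second derivative on every compact subset of `ball 0 R`. -/
def HolderSecond (α R : ℝ) (φ : Euc I → ℝ) : Prop :=
  ∀ K : Set (Euc I), K ⊆ ball 0 R → IsCompact K →
    ∃ C : ℝ, ∀ x ∈ K, ∀ y ∈ K,
      ‖fderiv ℝ (fderiv ℝ φ) x - fderiv ℝ (fderiv ℝ φ) y‖ ≤ C * ‖x - y‖ ^ α

/-- The smoothing `f_a` of the positive-part function. -/
noncomputable def fa (a y : ℝ) : ℝ :=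
  if 1 / (4 * a) ≤ y then y
  else if -(1 / (4 * a)) ≤ y then a * y ^ 2 + y / 2 + 1 / (16 * a)
  else 0

/-! ### Shift operators on the lattice -/

/-- The lattice `ℤ^I`. As a Pi type it carries the sup norm, which is the norm used for all lattice
estimates. -/
abbrev Lat (I : ℕ) := Fin I → ℤ

/-- The group algebra `ℝ[ℤ^I]`: finite real combinations of lattice shifts. Working in a commutative
algebra makes difference and averaging operators commute by `ring`. -/
abbrev Shf (I : ℕ) := AddMonoidAlgebra ℝ (Lat I)

/-- Translation of lattice functions, `f ↦ f (· + z)`. -/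
def shiftEnd (z : Lat I) : Module.End ℝ (Lat I → ℝ) where
  toFun f := fun p => f (p + z)
  map_add' _ _ := rfl
  map_smul' _ _ := rfl

/-- The action of the group algebra on lattice functions. -/
def ev : Shf I →ₐ[ℝ] Module.End ℝ (Lat I → ℝ) :=
  AddMonoidAlgebra.lift ℝ (Module.End ℝ (Lat I → ℝ)) (Lat I)
    { toFun := fun z => shiftEnd z.toAdd
      map_one' := by ext f p; simp [shiftEnd]
      map_mul' := by
        intro x y; ext f p
        simp [shiftEnd, add_assoc]
         }

/-- The shift by `z`, as an element of the group algebra. -/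
def S (z : Lat I) : Shf I := AddMonoidAlgebra.single z 1

/-- The `i`-th unit vector of the lattice. -/
abbrev e (i : Fin I) : Lat I := Pi.single i 1

/-- The forward difference in direction `i`. -/
def δ (i : Fin I) : Shf I := S (e i) - 1

@[simp] lemma ev_S (z : Lat I) (f : Lat I → ℝ) (p : Lat I) : ev (S z) f p = f (p + z) := by
  simp [ev, S, shiftEnd]
@[simp] lemma ev_add (a b : Shf I) (f : Lat I → ℝ) (p : Lat I) :
    ev (a + b) f p = ev a f p + ev b f p := by simp
@[simp] lemma ev_sub (a b : Shf I) (f : Lat I → ℝ) (p : Lat I) :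
    ev (a - b) f p = ev a f p - ev b f p := by simp
@[simp] lemma ev_smul (c : ℝ) (b : Shf I) (f : Lat I → ℝ) (p : Lat I) :
    ev (c • b) f p = c * ev b f p := by simp
@[simp] lemma ev_one (f : Lat I → ℝ) (p : Lat I) : ev (1 : Shf I) f p = f p := by simp
lemma ev_mul (a b : Shf I) (f : Lat I → ℝ) (p : Lat I) :
    ev (a * b) f p = ev a (ev b f) p := by simp
lemma ev_mul' (a b : Shf I) (f : Lat I → ℝ) : ev (a * b) f = ev a (ev b f) := by simp
@[simp] lemma ev_δ (i : Fin I) (f : Lat I → ℝ) (p : Lat I) :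
    ev (δ i) f p = f (p + e i) - f p := by simp [δ]
lemma S_add (z w : Lat I) : S (z + w) = S z * S w := by
  simp [S, AddMonoidAlgebra.single_mul_single]
lemma S_zero : S (0 : Lat I) = 1 := rfl

/-! ### Averaging operators and summation by parts -/

/-- `a` acts as an average over sup-norm balls of radius `ρ`: upper bounds for `f` on the ball
around `p` are upper bounds for `ev a f p`. Applied to `-f` this gives lower bounds too, so
constants are preserved. -/
def Avg (a : Shf I) (ρ : ℝ) : Prop :=
  ∀ (f : Lat I → ℝ) (p : Lat I) (M : ℝ), (∀ x, ‖x - p‖ ≤ ρ → f x ≤ M) → ev a f p ≤ M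

lemma ev_neg_fun (a : Shf I) (f : Lat I → ℝ) (p : Lat I) :
    ev a (fun x => -f x) p = -ev a f p := by
  have : (fun x => -f x) = -f := rfl
  rw [this, map_neg]; rfl

lemma ev_sub_fun (a : Shf I) (f g : Lat I → ℝ) (p : Lat I) :
    ev a (fun x => f x - g x) p = ev a f p - ev a g p := by
  have : (fun x => f x - g x) = f - g := rfl
  rw [this, map_sub]; rfl

lemma ev_add_fun (a : Shf I) (f g : Lat I → ℝ) (p : Lat I) :
    ev a (fun x => f x + g x) p = ev a f p + ev a g p := by
  have : (fun x => f x + g x) = f + g := rfl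
  rw [this, map_add]; rfl

lemma ev_mul_fun (a : Shf I) (c : ℝ) (f : Lat I → ℝ) (p : Lat I) :
    ev a (fun x => c * f x) p = c * ev a f p := by
  have : (fun x => c * f x) = c • f := rfl
  rw [this, map_smul]; rfl

lemma ev_sum_fun (a : Shf I) {ι : Type*} (s : Finset ι) (f : ι → Lat I → ℝ) (p : Lat I) :
    ev a (fun x => ∑ j ∈ s, f j x) p = ∑ j ∈ s, ev a (f j) p := by
  have : (fun x => ∑ j ∈ s, f j x) = ∑ j ∈ s, f j := by ext; simp
  rw [this, map_sum, Finset.sum_apply]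

namespace Avg
variable {a b : Shf I} {ρ σ : ℝ} {f g : Lat I → ℝ} {p : Lat I} {M c : ℝ}

lemma le (h : Avg a ρ) (hf : ∀ x, ‖x - p‖ ≤ ρ → f x ≤ M) : ev a f p ≤ M := h f p M hf

lemma ge (h : Avg a ρ) (hf : ∀ x, ‖x - p‖ ≤ ρ → M ≤ f x) : M ≤ ev a f p := by
  have := h (fun x => -f x) p (-M) (fun x hx => neg_le_neg (hf x hx))
  rw [ev_neg_fun] at this; linarith

lemma abs_le (h : Avg a ρ) (hf : ∀ x, ‖x - p‖ ≤ ρ → |f x| ≤ M) : |ev a f p| ≤ M :=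
  _root_.abs_le.2 ⟨h.ge fun x hx => (_root_.abs_le.1 (hf x hx)).1,
    h.le fun x hx => (_root_.abs_le.1 (hf x hx)).2⟩

lemma const (h : Avg a ρ) : ev a (fun _ => c) p = c :=
  le_antisymm (h.le fun _ _ => le_rfl) (h.ge fun _ _ => le_rfl)

lemma mono_fun (h : Avg a ρ) (hf : ∀ x, ‖x - p‖ ≤ ρ → f x ≤ g x) : ev a f p ≤ ev a g p := by
  have := h.ge (M := 0) (f := fun x => g x - f x) (p := p) (fun x hx => sub_nonneg.2 (hf x hx))
  rw [ev_sub_fun] at this; linarith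

lemma mono (h : Avg a ρ) (hρ : ρ ≤ σ) : Avg a σ :=
  fun f p M hf => h f p M fun x hx => hf x (hx.trans hρ)

lemma mul (ha : Avg a ρ) (hb : Avg b σ) : Avg (a * b) (ρ + σ) := by
  intro f p M hf
  rw [ev_mul]
  refine ha.le fun x hx => hb.le fun y hy => hf y ?_
  calc ‖y - p‖ = ‖(y - x) + (x - p)‖ := by congr 1; abel
    _ ≤ ‖y - x‖ + ‖x - p‖ := norm_add_le _ _
    _ ≤ ρ + σ := by linarith

lemma one : Avg (1 : Shf I) 0 := by
  intro f p M hf; simpa using hf p (by simp)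

lemma shift (z : Lat I) : Avg (S z) ‖z‖ := by
  intro f p M hf; simpa using hf (p + z) (by simp)

lemma mid (ha : Avg a ρ) (hb : Avg b ρ) : Avg ((1 / 2 : ℝ) • (a + b)) ρ := by
  intro f p M hf
  have h1 := ha.le hf; have h2 := hb.le hf
  rw [ev_smul, ev_add]; linarith

lemma pow (ha : Avg a ρ) (n : ℕ) : Avg (a ^ n) (n * ρ) := by
  induction n with
  | zero => simpa using one
  | succ n ih => rw [pow_succ]; convert ih.mul ha using 1; push_cast; ring

lemma prod {ι : Type*} [DecidableEq ι] {a : ι → Shf I} (h : ∀ i, Avg (a i) ρ) (s : Finset ι) :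
    Avg (∏ i ∈ s, a i) (s.card * ρ) := by
  induction s using Finset.induction_on with
  | empty => simpa using one
  | insert i s hi ih =>
    rw [Finset.prod_insert hi, Finset.card_insert_of_notMem hi]
    convert (h i).mul ih using 1; push_cast; ring

lemma average {ι : Type*} {a : ι → Shf I} (h : ∀ i, Avg (a i) ρ) (s : Finset ι) (hs : s.Nonempty) :
    Avg ((s.card : ℝ)⁻¹ • ∑ i ∈ s, a i) ρ := by
  intro f p M hf
  have hc : (0 : ℝ) < s.card := by exact_mod_cast hs.card_pos
  rw [ev_smul, map_sum, LinearMap.sum_apply, Finset.sum_apply]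
  have : ∑ i ∈ s, ev (a i) f p ≤ s.card * M := by
    rw [← nsmul_eq_mul]; exact Finset.sum_le_card_nsmul _ _ _ fun i _ => (h i).le hf
  calc _ ≤ (s.card : ℝ)⁻¹ * (s.card * M) := by gcongr
    _ = M := by field_simp
end Avg

lemma norm_e (i : Fin I) : ‖e i‖ = 1 := by
  simp [e, Pi.norm_single]

/-- The average of the identity and the unit shift in direction `i`. -/
def Ai (i : Fin I) : Shf I := (1 / 2 : ℝ) • (1 + S (e i))

/-- The product of the one-directional averages in all directions other than `i`. -/
def Ap (i : Fin I) : Shf I := ∏ j ∈ Finset.univ.erase i, Ai j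

/-- The product of all one-directional averages: `ev (Aa ^ N) f p` is the expectation of `f (p + X)`
when the coordinates of `X` are independent binomial variables with parameters `N` and `1/2`. -/
def Aa : Shf I := ∏ j : Fin I, Ai j

lemma Aa_eq (i : Fin I) : (Aa : Shf I) = Ai i * Ap i :=
  (Finset.mul_prod_erase _ _ (Finset.mem_univ i)).symm

lemma avg_Ai (i : Fin I) : Avg (Ai i) 1 :=
  (Avg.one.mono zero_le_one).mid (norm_e i ▸ Avg.shift (e i))
lemma avg_Ap (i : Fin I) : Avg (Ap i) I := by
  refine (Avg.prod avg_Ai _).mono ?_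
  rw [mul_one]; exact_mod_cast (Finset.card_le_univ _).trans (by simp)
lemma avg_Aa : Avg (Aa : Shf I) I := by
  refine (Avg.prod avg_Ai _).mono ?_
  simp

lemma ev_Ai (i : Fin I) (f : Lat I → ℝ) (p : Lat I) :
    ev (Ai i) f p = (f p + f (p + e i)) / 2 := by
  rw [Ai, ev_smul, ev_add, ev_one, ev_S]; ring

lemma ev_Ap_congr (i : Fin I) (s : Finset (Fin I)) (hs : i ∉ s) (f g : Lat I → ℝ) (p : Lat I)
    (h : ∀ x : Lat I, x i = p i → f x = g x) :
    ev (∏ j ∈ s, Ai j) f p = ev (∏ j ∈ s, Ai j) g p := by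
  induction s using Finset.induction_on generalizing p with
  | empty => simpa using h p rfl
  | insert j s hj ih =>
    have hij : i ≠ j := fun hh => hs (hh ▸ Finset.mem_insert_self _ _)
    have hs' : i ∉ s := fun hh => hs (Finset.mem_insert_of_mem hh)
    rw [Finset.prod_insert hj, ev_mul, ev_mul, ev_Ai, ev_Ai, ih hs' p h, ih hs' (p + e j)]
    intro x hx; exact h x (by rw [hx]; simp [hij])

/-- The centred weight of coordinate `i`: twice the deviation of `x i - p i` from the mean `N / 2`
of the binomial distribution. -/
def psi (i : Fin I) (N : ℕ) (p x : Lat I) : ℝ := 2 * ((x i : ℝ) - p i) - N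

/-- Summation by parts against binomial weights. A difference is traded for multiplication by `psi`,
divided by `(N + 1) / 2`; as `psi` is typically of size `√N`, this is the source of all smoothing
estimates. -/
lemma ibp (i : Fin I) (N : ℕ) (f : Lat I → ℝ) (p : Lat I) :
    ev (Aa ^ (N + 1)) (fun x => psi i (N + 1) p x * f x) p
      = ((N : ℝ) + 1) / 2 * ev (Aa ^ N * Ap i * δ i) f p := by
  have step : ∀ (N : ℕ) (p : Lat I), ev (Aa ^ (N + 1)) (fun x => psi i (N + 1) p x * f x) p
      = (ev (Ap i) (fun y => ev (Aa ^ N) (fun x => psi i N y x * f x) y) p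
        + ev (Ap i) (fun y => ev (Aa ^ N) (fun x => psi i N y x * f x) y) (p + e i)) / 2
        + 1 / 2 * ev (Aa ^ N * Ap i * δ i) f p := by
    intro N p
    have key : ∀ q : Lat I, ev (Ap i) (ev (Aa ^ N) (fun x => psi i (N + 1) p x * f x)) q
        = ev (Ap i) (fun y => ev (Aa ^ N) (fun x => psi i N y x * f x) y) q
          + (2 * ((q i : ℝ) - p i) - 1) * ev (Ap i) (ev (Aa ^ N) f) q := by
      intro q
      rw [← ev_mul_fun, ← ev_add_fun]
      refine ev_Ap_congr i _ (by simp) _ _ _ fun y hy => ?_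
      rw [← ev_mul_fun, ← ev_add_fun]
      refine congrArg (fun g => ev (Aa ^ N) g y) (funext fun x => ?_)
      simp only [psi]; rw [hy]; push_cast; ring
    rw [pow_succ', Aa_eq i, mul_assoc, ev_mul, ev_Ai, ← Aa_eq i, ev_mul (Ap i), ev_mul (Ap i), key, key]
    have : ev (Aa ^ N * Ap i * δ i) f p
        = ev (Ap i) (ev (Aa ^ N) f) (p + e i) - ev (Ap i) (ev (Aa ^ N) f) p := by
      rw [show Aa ^ N * Ap i * δ i = δ i * (Ap i * Aa ^ N) by ring, ev_mul, ev_δ, ev_mul']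
    rw [this]
    simp
    ring
  induction N generalizing p with
  | zero =>
    rw [step]
    have : ∀ q, ev (Ap i) (fun y => ev (Aa ^ 0) (fun x => psi i 0 y x * f x) y) q = 0 := by
      intro q
      have : (fun y => ev (Aa ^ 0) (fun x => psi i 0 y x * f x) y) = fun _ => 0 := by
        ext y; simp [psi]
      rw [this, (avg_Ap i).const]
    rw [this, this]; simp
  | succ N ih =>
    rw [step (N + 1)]
    simp only [ih]
    rw [ev_mul_fun, ev_mul_fun]
    have : (ev (Ap i) (ev (Aa ^ N * Ap i * δ i) f) p
        + ev (Ap i) (ev (Aa ^ N * Ap i * δ i) f) (p + e i)) / 2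
        = ev (Aa ^ (N + 1) * Ap i * δ i) f p := by
      rw [show (Aa : Shf I) ^ (N + 1) * Ap i * δ i = Ai i * (Ap i * (Aa ^ N * Ap i * δ i)) by
        rw [pow_succ]; nth_rewrite 2 [Aa_eq i]; ring, ev_mul (Ai i), ev_Ai, ev_mul (Ap i), ev_mul (Ap i)]
    have h2 : ∀ q, ev (Ap i) (fun x => ev (Aa ^ N * Ap i * δ i) f x) q = ev (Ap i) (ev (Aa ^ N * Ap i * δ i) f) q := fun _ => rfl
    rw [← this]
    push_cast
    ring

/-! ### Smoothing estimates for powers of the averaging operator -/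

lemma Avg.abs_ev_le {a : Shf I} {ρ : ℝ} (h : Avg a ρ) {f g : Lat I → ℝ} {p : Lat I}
    (hf : ∀ x, |f x| ≤ g x) : |ev a f p| ≤ ev a g p := by
  rw [_root_.abs_le]
  refine ⟨?_, h.mono_fun fun x _ => (_root_.abs_le.1 (hf x)).2⟩
  rw [← ev_neg_fun]; exact h.mono_fun fun x _ => (_root_.abs_le.1 (hf x)).1

/-- The second moment of the binomial distribution. -/
lemma ev_psi_sq (i : Fin I) (N : ℕ) (p : Lat I) :
    ev (Aa ^ (N + 1)) (fun x => psi i (N + 1) p x ^ 2) p = N + 1 := by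
  have := ibp i N (fun x => psi i (N + 1) p x) p
  simp only [← pow_two] at this
  rw [this, ev_mul, show ev (δ i) (fun x => psi i (N + 1) p x) = fun _ => 2 from ?_,
    ((avg_Aa.pow N).mul (avg_Ap i)).const]
  · ring
  · ext x; simp [psi]; ring

/-- A difference of a binomial average of a bounded function gains `(N + 1)^{-1/2}`: by `ibp`, and
the bound `|ψ| ≤ (ψ² / s + s) / 2` with `s = √(N + 1)` together with the second moment. -/
lemma core_sup (i : Fin I) (N : ℕ) (f : Lat I → ℝ) (p : Lat I) (M : ℝ) (hf : ∀ x, |f x| ≤ M) :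
    |ev (Aa ^ N * Ap i * δ i) f p| ≤ 2 * M / √(N + 1) := by
  have hM : 0 ≤ M := (abs_nonneg _).trans (hf p)
  have hN : (0 : ℝ) < N + 1 := by positivity
  have hs : 0 < √((N : ℝ) + 1) := Real.sqrt_pos.2 hN
  have hss : √((N : ℝ) + 1) ^ 2 = N + 1 := Real.sq_sqrt hN.le
  set s := √((N : ℝ) + 1)
  have h1 := ibp i N f p
  have h2 : |ev (Aa ^ (N + 1)) (fun x => psi i (N + 1) p x * f x) p|
      ≤ ev (Aa ^ (N + 1)) (fun x => M * (s / 2) + M / (2 * s) * psi i (N + 1) p x ^ 2) p := by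
    refine (avg_Aa.pow _).abs_ev_le fun x => ?_
    rw [abs_mul]
    have h3 : |psi i (N + 1) p x| ≤ s / 2 + psi i (N + 1) p x ^ 2 / (2 * s) := by
      rw [← sq_abs (psi i (N + 1) p x)]
      set y := |psi i (N + 1) p x|
      rw [show s / 2 + y ^ 2 / (2 * s) = (s ^ 2 + y ^ 2) / (2 * s) by field_simp,
        le_div_iff₀ (by positivity)]
      nlinarith [sq_nonneg (s - y)]
    calc |psi i (N + 1) p x| * |f x| ≤ (s / 2 + psi i (N + 1) p x ^ 2 / (2 * s)) * M := by
          gcongr; exact hf x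
      _ = _ := by ring
  rw [ev_add_fun, (avg_Aa.pow _).const, ev_mul_fun, ev_psi_sq, h1, abs_mul,
    abs_of_pos (by positivity : ((N : ℝ) + 1) / 2 > 0), ← hss] at h2
  rw [le_div_iff₀ hs]
  have : M * (s / 2) + M / (2 * s) * s ^ 2 = M * s := by field_simp; ring
  rw [this] at h2
  have h4 : s * (s * |ev (Aa ^ N * Ap i * δ i) f p|) ≤ s * (2 * M) := by nlinarith
  have := le_of_mul_le_mul_left h4 hs
  linarith

/-- `f` is Hölder continuous with exponent `1/2` and constant `H`, in the sup norm of the lattice.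
-/
def Ho (f : Lat I → ℝ) (H : ℝ) : Prop := ∀ p q, |f p - f q| ≤ H * √‖p - q‖

/-- The fourth root. For Hölder exponent `1/2` the natural decay rates are odd powers of the fourth
root of the number of steps. -/
def W (x : ℝ) : ℝ := √√x

lemma W_pos {x : ℝ} (hx : 0 < x) : 0 < W x := Real.sqrt_pos.2 (Real.sqrt_pos.2 hx)
lemma W_sq {x : ℝ} : W x ^ 2 = √x := Real.sq_sqrt (Real.sqrt_nonneg _)
lemma W_four {x : ℝ} (hx : 0 ≤ x) : W x ^ 4 = x := by
  rw [show W x ^ 4 = (W x ^ 2) ^ 2 by ring, W_sq, Real.sq_sqrt hx]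
lemma W_mono {x y : ℝ} (h : x ≤ y) : W x ≤ W y := Real.sqrt_le_sqrt (Real.sqrt_le_sqrt h)

lemma Ho.nonneg {f : Lat I → ℝ} {H : ℝ} (h : Ho f H) (i : Fin I) : 0 ≤ H := by
  have := h (e i) 0
  rw [sub_zero, norm_e, Real.sqrt_one, mul_one] at this
  exact (abs_nonneg _).trans this

lemma norm_le_of_sq {x : Lat I} {t : ℝ} (ht : 0 ≤ t) (h : ∀ i, ((x i : ℝ)) ^ 2 ≤ t ^ 2) : ‖x‖ ≤ t := by
  rw [pi_norm_le_iff_of_nonneg ht]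
  intro i
  rw [Int.norm_eq_abs]; exact abs_le_of_sq_le_sq (h i) ht

/-- For Hölder continuous `f` a difference of a binomial average is only of size `N^{-1/4}`. Since
the difference annihilates constants, the value of `f` at the centre of the binomial distribution
may be subtracted before using `ibp`. -/
lemma core_ho (i : Fin I) (k : ℕ) (f : Lat I → ℝ) (p : Lat I) (H : ℝ) (hf : Ho f H) :
    |ev (Aa ^ (2 * k + 1) * Ap i * δ i) f p| ≤ 2 * (I + 2) * H / W (2 * k + 2) := by
  have hH := hf.nonneg i
  have hN : (0 : ℝ) < 2 * k + 2 := by positivity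
  have hw : 0 < W (2 * k + 2) := W_pos hN
  have hw4 : W (2 * k + 2) ^ 4 = 2 * k + 2 := W_four hN.le
  set w := W (2 * k + 2)
  set c : Lat I := p + fun _ => ((k : ℤ) + 1)
  have h0 : ev (Aa ^ (2 * k + 1) * Ap i * δ i) f p
      = ev (Aa ^ (2 * k + 1) * Ap i * δ i) (fun x => f x - f c) p := by
    rw [ev_mul]
    have : ev (δ i) f = ev (δ i) (fun x => f x - f c) := by
      funext x; rw [ev_δ, ev_δ]; ring
    rw [this, ← ev_mul]
  have hsq : ∀ j, ev (Aa ^ (2 * k + 1 + 1)) (fun x => psi j (2 * k + 1 + 1) p x ^ 2) p = w ^ 4 := by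
    intro j; rw [ev_psi_sq, hw4]; push_cast; ring
  have h1 := ibp i (2 * k + 1) (fun x => f x - f c) p
  have h2 : |ev (Aa ^ (2 * k + 1 + 1)) (fun x => psi i (2 * k + 1 + 1) p x * (f x - f c)) p|
      ≤ ev (Aa ^ (2 * k + 1 + 1)) (fun x => H * w ^ 3 + (H / w * psi i (2 * k + 1 + 1) p x ^ 2
        + H / w * ∑ j, psi j (2 * k + 1 + 1) p x ^ 2)) p := by
    refine (avg_Aa.pow _).abs_ev_le fun x => ?_
    rw [abs_mul]
    set y := |psi i (2 * k + 1 + 1) p x|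
    set P := ∑ j, psi j (2 * k + 1 + 1) p x ^ 2
    have hP : 0 ≤ P := Finset.sum_nonneg fun _ _ => sq_nonneg _
    have hd : ‖x - c‖ ≤ √P := by
      refine norm_le_of_sq (Real.sqrt_nonneg _) fun j => ?_
      rw [Real.sq_sqrt hP]
      have : psi j (2 * k + 1 + 1) p x ^ 2 ≤ P :=
        Finset.single_le_sum (f := fun j => psi j (2 * k + 1 + 1) p x ^ 2)
          (fun _ _ => sq_nonneg _) (Finset.mem_univ j)
      have h4 : psi j (2 * k + 1 + 1) p x = 2 * (((x - c) j : ℤ) : ℝ) := by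
        simp [psi, c]; ring
      rw [h4] at this
      nlinarith [sq_nonneg (((x - c) j : ℤ) : ℝ)]
    set b := √‖x - c‖
    have hb : b ^ 4 ≤ P := by
      have : b ^ 2 = ‖x - c‖ := Real.sq_sqrt (norm_nonneg _)
      calc b ^ 4 = (‖x - c‖) ^ 2 := by rw [← this]; ring
        _ ≤ √P ^ 2 := by gcongr
        _ = P := Real.sq_sqrt hP
    have hb0 : 0 ≤ b := Real.sqrt_nonneg _
    have hy0 : 0 ≤ y := abs_nonneg _
    have h5 : y * b ≤ w ^ 3 + (y ^ 2 / w + P / w) := by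
      have h6 : w ^ 3 + (y ^ 2 / w + P / w) = (w ^ 4 + y ^ 2 + P) / w := by field_simp; ring
      rw [h6, le_div_iff₀ hw]
      nlinarith [sq_nonneg (y - b * w), sq_nonneg (b ^ 2 - w ^ 2), sq_nonneg b, sq_nonneg w]
    calc y * |f x - f c| ≤ y * (H * b) := by gcongr; exact hf x c
      _ = H * (y * b) := by ring
      _ ≤ H * (w ^ 3 + (y ^ 2 / w + P / w)) := by gcongr
      _ = _ := by rw [← sq_abs (psi i (2 * k + 1 + 1) p x)]; ring
  rw [ev_add_fun, (avg_Aa.pow _).const, ev_add_fun, ev_mul_fun, ev_mul_fun, ev_sum_fun, h1,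
    abs_mul, ← h0] at h2
  simp only [hsq] at h2
  have h3 : ((2 * k + 1 : ℕ) : ℝ) + 1 = w ^ 4 := by rw [hw4]; push_cast; ring
  rw [h3, abs_of_pos (by positivity : w ^ 4 / 2 > 0)] at h2
  simp only [sum_const, card_univ, Fintype.card_fin, nsmul_eq_mul] at h2
  have h4 : H * w ^ 3 + (H / w * w ^ 4 + H / w * (I * w ^ 4)) = w ^ 3 * ((I + 2) * H) := by
    field_simp; ring
  rw [h4] at h2
  rw [le_div_iff₀ hw]
  set X := |ev (Aa ^ (2 * k + 1) * Ap i * δ i) f p|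
  have : w ^ 3 * (X * w) ≤ w ^ 3 * (2 * (I + 2) * H) := by nlinarith
  exact le_of_mul_le_mul_left this (by positivity)

/-- The one-step operator of the scheme: the centred square of `Aa`, i.e. the product over the
coordinates of the averages with weights `1/4, 1/2, 1/4`. The operator `4 (R - 1)` discretizes the
Laplacian. -/
def Rr : Shf I := S (-1) * Aa ^ 2

lemma S_pow (z : Lat I) (n : ℕ) : S z ^ n = S (n • z) := by
  induction n with
  | zero => simp [S_zero]
  | succ n ih => rw [pow_succ, ih, ← S_add, succ_nsmul]

lemma norm_neg_one_le : ‖(-1 : Lat I)‖ ≤ 1 := by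
  rw [norm_neg, pi_norm_le_iff_of_nonneg zero_le_one]; simp

lemma avg_Rr : Avg (Rr : Shf I) (1 + 2 * I) :=
  ((Avg.shift (-1)).mul (avg_Aa.pow 2)).mono (by push_cast; gcongr; exact norm_neg_one_le)

lemma Rr_pow_δ (i : Fin I) (k : ℕ) : Rr ^ (k + 1) * δ i
    = S ((k + 1) • (-1)) * Ai i * (Aa ^ (2 * k + 1) * Ap i * δ i) := by
  rw [Rr, mul_pow, S_pow, ← pow_mul, show 2 * (k + 1) = (2 * k + 1) + 1 by ring, pow_succ]
  nth_rewrite 2 [Aa_eq i]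
  ring

lemma R_sup (i : Fin I) (n : ℕ) (f : Lat I → ℝ) (p : Lat I) (M : ℝ) (hf : ∀ x, |f x| ≤ M) :
    |ev (Rr ^ n * δ i) f p| ≤ 2 * M / W (n + 1) ^ 2 := by
  have hM : 0 ≤ M := (abs_nonneg _).trans (hf p)
  cases n with
  | zero =>
    simp only [pow_zero, one_mul, ev_δ, W_sq]; simp
    calc _ ≤ |f (p + e i)| + |f p| := abs_sub _ _
      _ ≤ _ := by linarith [hf p, hf (p + e i)]
  | succ k =>
    rw [Rr_pow_δ, ev_mul]
    refine ((Avg.shift _).mul (avg_Ai i)).abs_le fun x _ => (core_sup i _ f x M hf).trans ?_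
    rw [W_sq]
    gcongr
    linarith

lemma R_ho (i : Fin I) (n : ℕ) (f : Lat I → ℝ) (p : Lat I) (H : ℝ) (hf : Ho f H) :
    |ev (Rr ^ n * δ i) f p| ≤ 2 * (I + 2) * H / W (n + 1) := by
  have hH := hf.nonneg i
  cases n with
  | zero =>
    simp only [pow_zero, one_mul, ev_δ, W]; simp
    have := hf (p + e i) p
    rw [add_sub_cancel_left, norm_e, Real.sqrt_one, mul_one] at this
    have : (0:ℝ) ≤ I * H := by positivity
    linarith
  | succ k =>
    rw [Rr_pow_δ, ev_mul]
    refine ((Avg.shift _).mul (avg_Ai i)).abs_le fun x _ => (core_ho i _ f x H hf).trans ?_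
    have := W_pos (x := ((k + 1 : ℕ) : ℝ) + 1) (by positivity)
    gcongr
    refine W_mono ?_
    push_cast; linarith

lemma W_half {x y : ℝ} (h0 : 0 < x) (h : x ≤ 16 * y) : W x / 2 ≤ W y := by
  have hy : 0 < y := by linarith
  have h1 := W_four h0.le
  have h2 := W_four hy.le
  by_contra hc
  push Not at hc
  have : W y ^ 4 < (W x / 2) ^ 4 := by
    have := W_pos hy; gcongr
  rw [h2, div_pow, h1] at this
  linarith

lemma R_sup' (i : Fin I) (n a : ℕ) (ha : n + 1 ≤ 16 * (a + 1)) (f : Lat I → ℝ) (p : Lat I) (M : ℝ)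
    (hf : ∀ x, |f x| ≤ M) :
    |ev (Rr ^ a * δ i) f p| ≤ 8 * M / W (n + 1) ^ 2 := by
  have hM : 0 ≤ M := (abs_nonneg _).trans (hf p)
  refine (R_sup i a f p M hf).trans ?_
  have h1 := W_half (x := n + 1) (y := a + 1) (by positivity) (by exact_mod_cast ha)
  have h2 := W_pos (x := (n : ℝ) + 1) (by positivity)
  calc 2 * M / W (a + 1) ^ 2 ≤ 2 * M / (W (n + 1) / 2) ^ 2 := by gcongr
    _ = _ := by field_simp; ring

lemma R_ho' (i : Fin I) (n a : ℕ) (ha : n + 1 ≤ 16 * (a + 1)) (f : Lat I → ℝ) (p : Lat I) (H : ℝ)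
    (hf : Ho f H) :
    |ev (Rr ^ a * δ i) f p| ≤ 4 * (I + 2) * H / W (n + 1) := by
  have hH := hf.nonneg i
  refine (R_ho i a f p H hf).trans ?_
  have h1 := W_half (x := n + 1) (y := a + 1) (by positivity) (by exact_mod_cast ha)
  have h2 := W_pos (x := (n : ℝ) + 1) (by positivity)
  calc 2 * (I + 2) * H / W (a + 1) ≤ 2 * (I + 2) * H / (W (n + 1) / 2) := by gcongr
    _ = _ := by field_simp; ring

/-- Two differences of `R ^ n`: the power is split into two factors, and each difference is absorbed
by its own factor. -/
lemma R2_sup (i j : Fin I) (n : ℕ) (f : Lat I → ℝ) (p : Lat I) (M : ℝ) (hf : ∀ x, |f x| ≤ M) :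
    |ev (Rr ^ n * (δ i * δ j)) f p| ≤ 64 * M / (n + 1) := by
  rw [show Rr ^ n * (δ i * δ j) = (Rr ^ (n / 2) * δ i) * (Rr ^ (n - n / 2) * δ j) by
    rw [mul_mul_mul_comm, ← pow_add, Nat.add_sub_cancel' (Nat.div_le_self _ _)], ev_mul]
  refine (R_sup' i n _ (by omega) _ p _ fun x =>
    R_sup' j n _ (by omega) f x M hf).trans (le_of_eq ?_)
  have h2 := W_pos (x := (n : ℝ) + 1) (by positivity)
  have h4 := W_four (x := (n : ℝ) + 1) (by positivity)
  generalize W ((n : ℝ) + 1) = w at *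
  rw [← h4]
  field_simp; ring

lemma R2_ho (i j : Fin I) (n : ℕ) (f : Lat I → ℝ) (p : Lat I) (H : ℝ) (hf : Ho f H) :
    |ev (Rr ^ n * (δ i * δ j)) f p| ≤ 32 * (I + 2) * H / W (n + 1) ^ 3 := by
  rw [show Rr ^ n * (δ i * δ j) = (Rr ^ (n / 2) * δ i) * (Rr ^ (n - n / 2) * δ j) by
    rw [mul_mul_mul_comm, ← pow_add, Nat.add_sub_cancel' (Nat.div_le_self _ _)], ev_mul]
  refine (R_sup' i n _ (by omega) _ p _ fun x =>
    R_ho' j n _ (by omega) f x H hf).trans (le_of_eq ?_)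
  have h2 := W_pos (x := (n : ℝ) + 1) (by positivity)
  field_simp; ring

/-- Three differences of `R ^ n` applied to a Hölder function: one difference uses the Hölder bound,
the other two the sup bound. -/
lemma R3_ho (i j k : Fin I) (n : ℕ) (f : Lat I → ℝ) (p : Lat I) (H : ℝ) (hf : Ho f H) :
    |ev (Rr ^ n * (δ i * δ j) * δ k) f p| ≤ 256 * (I + 2) * H / W (n + 1) ^ 5 := by
  have hn : (Rr : Shf I) ^ n = Rr ^ (n / 3) * Rr ^ (n / 3) * Rr ^ (n - (n / 3 + n / 3)) := by
    rw [← pow_add, ← pow_add]; congr 1; omega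
  have hm : (Rr : Shf I) ^ n * (δ i * δ j) * δ k = (Rr ^ (n / 3) * δ i) * ((Rr ^ (n / 3) * δ j) *
      (Rr ^ (n - (n / 3 + n / 3)) * δ k)) := by
    rw [hn]
    generalize (Rr : Shf I) ^ (n / 3) = A
    generalize (Rr : Shf I) ^ (n - (n / 3 + n / 3)) = B
    ac_rfl
  rw [hm, ev_mul]
  have hy : ∀ y, |ev (Rr ^ (n - (n / 3 + n / 3)) * δ k) f y| ≤ 4 * (I + 2) * H / W (n + 1) :=
    fun y => R_ho' k n _ (by omega) f y H hf
  have hx : ∀ x, |ev ((Rr ^ (n / 3) * δ j) * (Rr ^ (n - (n / 3 + n / 3)) * δ k)) f x|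
      ≤ 8 * (4 * (I + 2) * H / W (n + 1)) / W (n + 1) ^ 2 := by
    intro x
    rw [ev_mul]
    exact R_sup' j n _ (by omega) _ x _ hy
  refine (R_sup' i n _ (by omega) _ p _ hx).trans (le_of_eq ?_)
  have h2 := W_pos (x := (n : ℝ) + 1) (by positivity)
  field_simp; ring

/-! ### Global discrete Schauder estimate -/

lemma cube_mem {x c : Lat I} {ρ : ℝ} (hρ : 0 ≤ ρ) : ‖x - c‖ ≤ ρ ↔ ∀ i, |((x i : ℝ)) - c i| ≤ ρ := by
  rw [pi_norm_le_iff_of_nonneg hρ]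
  refine forall_congr' fun i => ?_
  rw [Int.norm_eq_abs]; simp

/-- A function with small increments inside a cube is Lipschitz there: two points of a cube are
joined by a coordinate path that does not leave the cube. -/
lemma box_lip_aux (f : Lat I → ℝ) (c : Lat I) (ρ K : ℝ)
    (h : ∀ (x : Lat I) i, ‖x - c‖ ≤ ρ → ‖x + e i - c‖ ≤ ρ → |f (x + e i) - f x| ≤ K) :
    ∀ (n : ℕ) (p q : Lat I), ‖p - c‖ ≤ ρ → ‖q - c‖ ≤ ρ → ∑ i, (p i - q i).natAbs = n →
      |f p - f q| ≤ K * n := by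
  intro n
  induction n with
  | zero =>
    intro p q _ _ hs
    have : p = q := by
      ext i
      have := (Finset.sum_eq_zero_iff.1 hs) i (Finset.mem_univ i)
      omega
    simp [this]
  | succ n ih =>
    intro p q hp hq hs
    have hρ : 0 ≤ ρ := (norm_nonneg _).trans hp
    have hex : ∃ i, (p i - q i).natAbs ≠ 0 := by
      by_contra hcon
      push Not at hcon
      rw [Finset.sum_eq_zero fun i _ => hcon i] at hs
      omega
    obtain ⟨i, hi⟩ := hex
    have hpi := (cube_mem hρ).1 hp
    have hqi := (cube_mem hρ).1 hq
    have main : ∀ p' : Lat I, (∀ j, j ≠ i → p' j = p j) → (p' i - q i).natAbs + 1 = (p i - q i).natAbs →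
        (p' i - p i).natAbs = 1 →
        ‖p' - c‖ ≤ ρ ∧ |f p' - f q| ≤ K * n := by
      intro p' hj hii hii1
      have hmem : ‖p' - c‖ ≤ ρ := by
        rw [cube_mem hρ]
        intro j
        by_cases hji : j = i
        · subst hji
          have h1 := hpi j; have h2 := hqi j
          rw [abs_le] at *
          rcases le_total (p j) (q j) with h3 | h3
          · have h4 : p j ≤ p' j := by omega
            have h5 : p' j ≤ q j := by omega
            have h4' : (p j : ℝ) ≤ p' j := by exact_mod_cast h4
            have h5' : (p' j : ℝ) ≤ q j := by exact_mod_cast h5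
            constructor <;> linarith
          · have h4 : p' j ≤ p j := by omega
            have h5 : q j ≤ p' j := by omega
            have h4' : (p' j : ℝ) ≤ p j := by exact_mod_cast h4
            have h5' : (q j : ℝ) ≤ p' j := by exact_mod_cast h5
            constructor <;> linarith
        · rw [hj j hji]; exact hpi j
      refine ⟨hmem, ih p' q hmem hq ?_⟩
      rw [← Finset.add_sum_erase _ _ (Finset.mem_univ i)] at hs ⊢
      rw [Finset.sum_congr rfl fun j hj' => by rw [hj j (Finset.ne_of_mem_erase hj')]]
      omega
    rcases lt_or_gt_of_ne (show p i ≠ q i by omega) with h3 | h3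
    · obtain ⟨h4, h5⟩ := main (p + e i) (fun j hj => by simp [hj]) (by simp; omega) (by simp)
      have h6 := h p i hp h4
      push_cast
      rw [abs_le] at *
      constructor <;> linarith
    · obtain ⟨h4, h5⟩ := main (p - e i) (fun j hj => by simp [hj]) (by simp; omega) (by simp)
      have h6 := h (p - e i) i h4 (by rwa [sub_add_cancel])
      rw [sub_add_cancel] at h6
      push_cast
      rw [abs_le] at *
      constructor <;> linarith

lemma box_lip (f : Lat I → ℝ) (c : Lat I) (ρ K : ℝ) (hK : 0 ≤ K)
    (h : ∀ (x : Lat I) i, ‖x - c‖ ≤ ρ → ‖x + e i - c‖ ≤ ρ → |f (x + e i) - f x| ≤ K)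
    (p q : Lat I) (hp : ‖p - c‖ ≤ ρ) (hq : ‖q - c‖ ≤ ρ) : |f p - f q| ≤ K * I * ‖p - q‖ := by
  refine (box_lip_aux f c ρ K h _ p q hp hq rfl).trans ?_
  rw [mul_assoc]
  gcongr
  push_cast
  calc ∑ i, (((p i - q i).natAbs : ℕ) : ℝ) ≤ ∑ i : Fin I, ‖p - q‖ := by
        refine Finset.sum_le_sum fun i _ => ?_
        have := norm_le_pi_norm (p - q) i
        rw [Int.norm_eq_abs] at this
        rw [Nat.cast_natAbs]; simpa using this
    _ = _ := by simp

/-- `∑_{n ≤ K} n^{-3/4}` is at most `4 K^{1/4}`. -/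
lemma sum_W3 (K : ℕ) : ∑ n ∈ range K, 1 / W (n + 1) ^ 3 ≤ 4 * W K := by
  induction K with
  | zero => simp [W]
  | succ K ih =>
    rw [sum_range_succ]
    have ha := W_pos (x := (K : ℝ) + 1) (by positivity)
    have ha4 := W_four (x := (K : ℝ) + 1) (by positivity)
    have hb4 := W_four (x := (K : ℝ)) (by positivity)
    have hab : W K ≤ W (K + 1) := W_mono (by linarith)
    have hb : 0 ≤ W K := Real.sqrt_nonneg _
    push_cast
    generalize W K = b at *
    generalize W ((K : ℝ) + 1) = a at *
    have : 1 / a ^ 3 ≤ 4 * (a - b) := by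
      rw [div_le_iff₀ (by positivity)]
      have h1 : (a - b) * (a ^ 3 + a ^ 2 * b + a * b ^ 2 + b ^ 3) = 1 := by linear_combination ha4 - hb4
      have h2 : a ^ 3 + a ^ 2 * b + a * b ^ 2 + b ^ 3 ≤ 4 * a ^ 3 := by
        have : a ^ 2 * b ≤ a ^ 2 * a := by gcongr
        have : a * b ^ 2 ≤ a * a ^ 2 := by gcongr
        have : b ^ 3 ≤ a ^ 3 := by gcongr
        nlinarith
      nlinarith
    linarith

/-- `∑_{n > K} n^{-5/4}` is at most `4 K^{-1/4}`. -/
lemma sum_W5 (K N : ℕ) (hK : 1 ≤ K) (hKN : K ≤ N) :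
    ∑ n ∈ Ico K N, 1 / W (n + 1) ^ 5 ≤ 4 / W K := by
  suffices H : ∑ n ∈ Ico K N, 1 / W (n + 1) ^ 5 ≤ 4 / W K - 4 / W N by
    have : 0 ≤ 4 / W N := div_nonneg (by norm_num) (Real.sqrt_nonneg _)
    linarith
  induction N, hKN using Nat.le_induction with
  | base => simp
  | succ N hN ih =>
    rw [sum_Ico_succ_top hN]
    have hN1 : (1 : ℝ) ≤ N := by exact_mod_cast hK.trans hN
    have ha := W_pos (x := (N : ℝ) + 1) (by positivity)
    have ha4 := W_four (x := (N : ℝ) + 1) (by positivity)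
    have hb4 := W_four (x := (N : ℝ)) (by positivity)
    have hab : W N ≤ W (N + 1) := W_mono (by linarith)
    have hb : 0 < W N := W_pos (by linarith)
    push_cast
    generalize W N = b at *
    generalize W ((N : ℝ) + 1) = a at *
    have : 1 / a ^ 5 ≤ 4 / b - 4 / a := by
      rw [show 4 / b - 4 / a = 4 * (a - b) / (a * b) by field_simp, div_le_div_iff₀ (by positivity) (by positivity)]
      have h1 : (a - b) * (a ^ 3 + a ^ 2 * b + a * b ^ 2 + b ^ 3) = 1 := by linear_combination ha4 - hb4
      have h2 : a ^ 3 + a ^ 2 * b + a * b ^ 2 + b ^ 3 ≤ 4 * a ^ 3 := by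
        have : a ^ 2 * b ≤ a ^ 2 * a := by gcongr
        have : a * b ^ 2 ≤ a * a ^ 2 := by gcongr
        have : b ^ 3 ≤ a ^ 3 := by gcongr
        nlinarith
      have h3 : 1 ≤ 4 * (a - b) * a ^ 3 := by nlinarith
      have h4 : 1 * (a * a) ≤ 4 * (a - b) * a ^ 3 * (a * a) := by gcongr
      have h5 : a * b ≤ a * a := by gcongr
      nlinarith
    linarith

/-- The constant of the global Schauder estimate. -/
def cG (I : ℕ) : ℝ := 512 * (I + 2) + 1024 * I * (I + 2)

lemma cG_nonneg : 0 ≤ cG I := by unfold cG; positivity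

/-- The telescoped geometric series `1 = (1 - R) ∑_{n < N} R^n + R^N`, applied to second
differences. -/
lemma geom_id (v : Lat I → ℝ) (i j : Fin I) (N : ℕ) (p : Lat I) :
    ev (δ i * δ j) v p = ∑ n ∈ range N, ev (Rr ^ n * (δ i * δ j)) (ev (1 - Rr) v) p
      + ev (Rr ^ N * (δ i * δ j)) v p := by
  induction N with
  | zero => simp
  | succ N ih =>
    rw [ih, sum_range_succ, ← ev_mul, add_assoc, ← ev_add]
    congr 3
    rw [pow_succ]; ring

/-- Global discrete Schauder estimate: the second differences of a bounded `v` inherit the Hölder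
bound of `(1 - R) v`. The bound `M` on `v` itself is only qualitative and does not enter the
conclusion, because the remainder `R ^ N` in `geom_id` vanishes in the limit. -/
theorem schauder_global (v : Lat I → ℝ) (M H : ℝ) (hv : ∀ x, |v x| ≤ M)
    (hH : Ho (ev (1 - Rr) v) H) (i j : Fin I) : Ho (ev (δ i * δ j) v) (cG I * H) := by
  have hH0 := hH.nonneg i
  have hM : 0 ≤ M := (abs_nonneg _).trans (hv 0)
  intro p q
  by_cases hpq : p = q
  · subst hpq; simp
  have hr1 : 1 ≤ ‖p - q‖ := by
    by_contra hlt
    push Not at hlt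
    apply hpq
    ext k
    have := (norm_le_pi_norm (p - q) k).trans_lt hlt
    rw [Int.norm_eq_abs] at this
    have : |p k - q k| < 1 := by exact_mod_cast this
    rw [Int.abs_lt_one_iff] at this; omega
  set r := ‖p - q‖
  set g := ev (1 - Rr) v
  -- The series is split at the diffusive time scale `r ^ 2`: up to `K` the terms at `p` and `q` are
  -- bounded separately, beyond `K` their difference is controlled by third differences.
  set K := ⌈r ^ 2⌉₊
  have hK1 : r ^ 2 ≤ K := Nat.le_ceil _
  have hK2 : (K : ℝ) ≤ 16 * r ^ 2 := by
    have := (Nat.ceil_lt_add_one (by positivity : 0 ≤ r ^ 2)).le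
    nlinarith
  have hK0 : 1 ≤ K := by
    have : (1 : ℝ) ≤ K := by nlinarith
    exact_mod_cast this
  have hWr : W (r ^ 2) = √r := by unfold W; rw [Real.sqrt_sq (by linarith)]
  have hWK1 : √r ≤ W K := hWr ▸ W_mono hK1
  have hWK2 : W K ≤ 2 * √r := by
    have := W_half (x := K) (y := r ^ 2) (by positivity) hK2
    rw [hWr] at this; linarith
  have hsr : 0 < √r := Real.sqrt_pos.2 (by linarith)
  have key : ∀ N, K ≤ N → |ev (δ i * δ j) v p - ev (δ i * δ j) v q|
      ≤ cG I * H * √r + 128 * M / (N + 1) := by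
    intro N hN
    set G : ℕ → ℝ := fun n => ev (Rr ^ n * (δ i * δ j)) g p - ev (Rr ^ n * (δ i * δ j)) g q
    have h1 : ev (δ i * δ j) v p - ev (δ i * δ j) v q = (∑ n ∈ range K, G n + ∑ n ∈ Ico K N, G n)
        + (ev (Rr ^ N * (δ i * δ j)) v p - ev (Rr ^ N * (δ i * δ j)) v q) := by
      rw [sum_range_add_sum_Ico _ hN, geom_id v i j N p, geom_id v i j N q]
      simp only [G, sum_sub_distrib]; ring
    have hA : |∑ n ∈ range K, G n| ≤ 64 * (I + 2) * H * (4 * W K) := by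
      calc _ ≤ ∑ n ∈ range K, |G n| := abs_sum_le_sum_abs _ _
        _ ≤ ∑ n ∈ range K, 64 * (I + 2) * H * (1 / W (n + 1) ^ 3) := by
          refine sum_le_sum fun n _ => ?_
          have a1 := R2_ho i j n g p H hH
          have a2 := R2_ho i j n g q H hH
          have := abs_sub (ev (Rr ^ n * (δ i * δ j)) g p) (ev (Rr ^ n * (δ i * δ j)) g q)
          calc _ ≤ _ := this
            _ ≤ _ := add_le_add a1 a2
            _ = _ := by ring
        _ ≤ _ := by rw [← mul_sum]; gcongr; exact sum_W3 K
    have hB : |∑ n ∈ Ico K N, G n| ≤ 256 * (I + 2) * H * I * r * (4 / W K) := by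
      calc _ ≤ ∑ n ∈ Ico K N, |G n| := abs_sum_le_sum_abs _ _
        _ ≤ ∑ n ∈ Ico K N, 256 * (I + 2) * H * I * r * (1 / W (n + 1) ^ 5) := by
          refine sum_le_sum fun n _ => ?_
          have hW := W_pos (x := (n : ℝ) + 1) (by positivity)
          have := box_lip (ev (Rr ^ n * (δ i * δ j)) g) q ‖p - q‖ (256 * (I + 2) * H / W (n + 1) ^ 5)
            (by positivity) (fun x k _ _ => by
              have := R3_ho i j k n g x H hH
              rw [mul_comm _ (δ k), ev_mul, ev_δ] at this; exact this) p q le_rfl (by simp)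
          refine this.trans (le_of_eq ?_)
          ring
        _ ≤ _ := by rw [← mul_sum]; gcongr; exact sum_W5 K N hK0 hN
    have hC : |ev (Rr ^ N * (δ i * δ j)) v p - ev (Rr ^ N * (δ i * δ j)) v q| ≤ 128 * M / (N + 1) := by
      have a1 := R2_sup i j N v p M hv
      have a2 := R2_sup i j N v q M hv
      calc _ ≤ _ := abs_sub _ _
        _ ≤ _ := add_le_add a1 a2
        _ = _ := by ring
    have hA' : 64 * (I + 2) * H * (4 * W K) ≤ 512 * (I + 2) * H * √r := by
      calc _ ≤ 64 * (I + 2) * H * (4 * (2 * √r)) := by gcongr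
        _ = _ := by ring
    have hB' : 256 * (I + 2) * H * I * r * (4 / W K) ≤ 1024 * I * (I + 2) * H * √r := by
      have : r * (4 / W K) ≤ 4 * √r := by
        calc r * (4 / W K) ≤ r * (4 / √r) := by gcongr
          _ = 4 * (r / √r) := by ring
          _ = _ := by rw [Real.div_sqrt]
      calc _ = 256 * (I + 2) * H * I * (r * (4 / W K)) := by ring
        _ ≤ 256 * (I + 2) * H * I * (4 * √r) := by gcongr
        _ = _ := by ring
    rw [h1]
    refine (abs_add_le _ _).trans (add_le_add ((abs_add_le _ _).trans ?_) hC)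
    unfold cG
    nlinarith
  -- The remainder of the series tends to zero because `v` is bounded.
  refine le_of_forall_pos_le_add fun ε hε => ?_
  obtain ⟨N, hN⟩ := exists_nat_ge (128 * M / ε)
  refine (key (max N K) (le_max_right _ _)).trans ?_
  gcongr
  rw [div_le_iff₀ (by positivity)]
  rw [div_le_iff₀ hε] at hN
  have : (N : ℝ) ≤ (max N K : ℕ) := by exact_mod_cast le_max_left _ _
  nlinarith

/-! ### Mollified cutoffs -/

lemma ev_shift (a : Shf I) (f : Lat I → ℝ) (x w : Lat I) :
    ev a f (x + w) = ev a (fun y => f (y + w)) x := by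
  rw [← ev_S w (ev a f) x, ← ev_mul, mul_comm, ev_mul]
  have : ev (S w) f = fun y => f (y + w) := by funext y; simp
  rw [this]

/-- The average over `ρ` consecutive shifts in direction `i`. -/
def Mi (ρ : ℕ) (i : Fin I) : Shf I := ((range ρ).card : ℝ)⁻¹ • ∑ j ∈ range ρ, S (e i) ^ j

/-- The product mollifier at scale `ρ`; a difference of a mollified bounded function is bounded by
`2 / ρ`. -/
def Mol (ρ : ℕ) : Shf I := ∏ i : Fin I, Mi ρ i

lemma avg_Mi (ρ : ℕ) (hρ : 1 ≤ ρ) (i : Fin I) : Avg (Mi ρ i) ρ := by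
  intro f p M hf
  rw [Mi, ev_smul, map_sum, LinearMap.sum_apply, Finset.sum_apply]
  have hc : (0 : ℝ) < (range ρ).card := by rw [card_range]; exact_mod_cast hρ
  have : ∑ j ∈ range ρ, ev (S (e i) ^ j) f p ≤ (range ρ).card * M := by
    rw [← nsmul_eq_mul]
    refine Finset.sum_le_card_nsmul _ _ _ fun j hj => ?_
    refine (((Avg.shift (e i)).pow j).mono ?_).le hf
    rw [norm_e, mul_one]; exact_mod_cast (mem_range.1 hj).le
  calc _ ≤ ((range ρ).card : ℝ)⁻¹ * ((range ρ).card * M) := by gcongr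
    _ = M := by field_simp

lemma avg_Mol (ρ : ℕ) (hρ : 1 ≤ ρ) : Avg (Mol ρ : Shf I) (I * ρ) := by
  refine (Avg.prod (avg_Mi ρ hρ) _).mono ?_
  simp

lemma Mol_δ (ρ : ℕ) (hρ : 1 ≤ ρ) (i : Fin I) (f : Lat I → ℝ) (M : ℝ) (hf : ∀ x, |f x| ≤ M)
    (p : Lat I) : |ev (Mol ρ * δ i) f p| ≤ 2 / ρ * M := by
  have hr : (0 : ℝ) < ρ := by exact_mod_cast hρ
  have h1 : (Mol ρ * δ i : Shf I) = (ρ : ℝ)⁻¹ • ((∏ j ∈ univ.erase i, Mi ρ j) * (S (e i) ^ ρ - 1)) := by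
    rw [Mol, ← Finset.mul_prod_erase _ _ (Finset.mem_univ i), Mi, card_range, smul_mul_assoc,
      smul_mul_assoc, ← geom_sum_mul (S (e i)) ρ, δ]
    congr 1
    rw [mul_assoc, mul_left_comm]
  rw [h1, ev_smul, ev_mul, abs_mul, abs_of_pos (by positivity)]
  have h2 : ∀ x, |ev (S (e i) ^ ρ - 1) f x| ≤ 2 * M := by
    intro x
    rw [S_pow, ev_sub, ev_S, ev_one]
    refine (abs_sub _ _).trans ?_
    linarith [hf x, hf (x + ρ • e i)]
  calc _ ≤ (ρ : ℝ)⁻¹ * (2 * M) := by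
        gcongr
        exact (Avg.prod (avg_Mi ρ hρ) _).abs_le fun x _ => h2 x
    _ = _ := by ring

/-- A cutoff around `p0` at scale `ρ`: the indicator of a cube, mollified three times so that
differences of order up to three are controlled. It equals `1` within distance `3 ρ` and vanishes
beyond `(3 + 6 I) ρ`. -/
def chi (ρ : ℕ) (p0 : Lat I) : Lat I → ℝ :=
  ev (Mol ρ ^ 3) (fun y => if ‖y - p0‖ ≤ (3 + 3 * I) * ρ then 1 else 0)

lemma norm_sub_le3 (x y z : Lat I) : ‖x - z‖ ≤ ‖x - y‖ + ‖y - z‖ :=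
  norm_sub_le_norm_sub_add_norm_sub x y z

lemma ind_abs (ρ : ℕ) (p0 y : Lat I) : |(if ‖y - p0‖ ≤ (3 + 3 * I) * ρ then (1 : ℝ) else 0)| ≤ 1 := by
  split_ifs <;> simp

section chi
variable {ρ : ℕ} (hρ : 1 ≤ ρ) (p0 : Lat I)
include hρ

lemma chi_abs (x : Lat I) : |chi ρ p0 x| ≤ 1 :=
  ((avg_Mol ρ hρ).pow 3).abs_le fun y _ => by split_ifs <;> simp

lemma chi_one (x : Lat I) (hx : ‖x - p0‖ ≤ 3 * ρ) : chi ρ p0 x = 1 := by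
  have hr : (0 : ℝ) < ρ := by exact_mod_cast hρ
  have : ∀ y, ‖y - x‖ ≤ (3 : ℕ) * (I * ρ : ℝ) → ‖y - p0‖ ≤ (3 + 3 * I) * ρ := by
    intro y hy
    have := norm_sub_le3 y x p0
    push_cast at hy
    linarith
  refine le_antisymm (((avg_Mol ρ hρ).pow 3).le fun y hy => ?_) (((avg_Mol ρ hρ).pow 3).ge fun y hy => ?_)
  · rw [if_pos (this y hy)]
  · rw [if_pos (this y hy)]

lemma chi_zero (x : Lat I) (hx : (3 + 6 * I) * ρ < ‖x - p0‖) : chi ρ p0 x = 0 := by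
  have : ∀ y, ‖y - x‖ ≤ (3 : ℕ) * (I * ρ : ℝ) → ¬ ‖y - p0‖ ≤ (3 + 3 * I) * ρ := by
    intro y hy h2
    have := norm_sub_le3 x y p0
    rw [norm_sub_rev x y] at this
    push_cast at hy
    linarith
  refine le_antisymm (((avg_Mol ρ hρ).pow 3).le fun y hy => ?_) (((avg_Mol ρ hρ).pow 3).ge fun y hy => ?_)
  · rw [if_neg (this y hy)]
  · rw [if_neg (this y hy)]

lemma chi_d1 (i : Fin I) (x : Lat I) : |ev (δ i) (chi ρ p0) x| ≤ 2 / ρ := by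
  rw [chi, ← ev_mul, show δ i * (Mol ρ ^ 3 : Shf I) = Mol ρ ^ 2 * (Mol ρ * δ i) by ring, ev_mul]
  refine ((avg_Mol ρ hρ).pow 2).abs_le fun y _ => ?_
  simpa using Mol_δ ρ hρ i _ 1 (ind_abs ρ p0) y

lemma chi_d2 (i j : Fin I) (x : Lat I) : |ev (δ i * δ j) (chi ρ p0) x| ≤ 4 / ρ ^ 2 := by
  rw [chi, ← ev_mul, show δ i * δ j * (Mol ρ ^ 3 : Shf I) = Mol ρ * ((Mol ρ * δ i) * (Mol ρ * δ j)) by ring,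
    ev_mul]
  refine ((avg_Mol ρ hρ)).abs_le fun y _ => ?_
  rw [ev_mul]
  refine (Mol_δ ρ hρ i _ _ (Mol_δ ρ hρ j _ 1 (ind_abs ρ p0)) y).trans (le_of_eq ?_)
  ring

lemma chi_d3 (i j k : Fin I) (x : Lat I) : |ev (δ i * δ j * δ k) (chi ρ p0) x| ≤ 8 / ρ ^ 3 := by
  rw [chi, ← ev_mul, show δ i * δ j * δ k * (Mol ρ ^ 3 : Shf I)
    = (Mol ρ * δ i) * ((Mol ρ * δ j) * (Mol ρ * δ k)) by ring, ev_mul (Mol ρ * δ i)]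
  have h2 : ∀ z, |ev ((Mol ρ * δ j) * (Mol ρ * δ k))
      (fun y => if ‖y - p0‖ ≤ (3 + 3 * I) * ρ then 1 else 0) z| ≤ 2 / (ρ : ℝ) * (2 / ρ * 1) := by
    intro z
    rw [ev_mul]; exact Mol_δ ρ hρ j _ _ (Mol_δ ρ hρ k _ 1 (ind_abs ρ p0)) z
  refine (Mol_δ ρ hρ i _ _ h2 x).trans (le_of_eq ?_)
  ring
end chi

/-- `R - 1` is a quarter of a sum of averaged pure second differences. -/
lemma Rr_expand : ∃ P : Fin I → Shf I, (∀ i, Avg (P i) (3 * I + 1)) ∧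
    (Rr : Shf I) - 1 = ∑ i, (1 / 4 : ℝ) • (P i * (δ i * δ i)) := by
  classical
  have hq : ∀ i : Fin I, S (-e i) * Ai i ^ 2 = 1 + (1 / 4 : ℝ) • (S (-e i) * (δ i * δ i)) := by
    intro i
    have h1 : S (-e i) * S (e i) = 1 := by rw [← S_add, neg_add_cancel, S_zero]
    have h2 : Ai i ^ 2 = S (e i) + (1 / 4 : ℝ) • (δ i * δ i) := by
      have h3 : (1 / 4 : ℝ) • (1 + S (e i)) ^ 2 = (1 / 4 : ℝ) • ((4 : ℝ) • S (e i) + δ i * δ i) := by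
        congr 1
        rw [ofNat_smul_eq_nsmul, nsmul_eq_mul, δ]
        push_cast
        ring
      rw [Ai, smul_pow, show ((1 / 2 : ℝ)) ^ 2 = 1 / 4 by norm_num, h3, smul_add, smul_smul]
      norm_num
    rw [h2, mul_add, h1, mul_smul_comm]
  have hR : (Rr : Shf I) = ∏ i, (S (-e i) * Ai i ^ 2) := by
    rw [Rr, Aa, prod_mul_distrib, Finset.prod_pow]
    congr 1
    have : ∀ s : Finset (Fin I), ∏ i ∈ s, S (-e i) = S (∑ i ∈ s, -e i) := by
      intro s
      induction s using Finset.induction_on with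
      | empty => simp [S_zero]
      | insert i s hi ih => rw [prod_insert hi, sum_insert hi, S_add, ih]
    rw [this]
    congr 1
    ext k
    simp [e, Pi.single_apply]
  have havg : ∀ i : Fin I, Avg (S (-e i) * Ai i ^ 2) 3 := by
    intro i
    refine ((Avg.shift _).mul ((avg_Ai i).pow 2)).mono ?_
    rw [norm_neg, norm_e]; norm_num
  have main : ∀ s : Finset (Fin I), ∃ P : Fin I → Shf I, (∀ i ∈ s, Avg (P i) (3 * s.card + 1)) ∧
      ∏ i ∈ s, (S (-e i) * Ai i ^ 2) - 1 = ∑ i ∈ s, (1 / 4 : ℝ) • (P i * (δ i * δ i)) := by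
    intro s
    induction s using Finset.induction_on with
    | empty => exact ⟨0, by simp, by simp⟩
    | insert i s hi ih =>
      obtain ⟨P, hP, hs⟩ := ih
      refine ⟨fun j => if j = i then S (-e i) else (S (-e i) * Ai i ^ 2) * P j, ?_, ?_⟩
      · intro j hj
        dsimp only
        rw [card_insert_of_notMem hi]
        push_cast
        split_ifs with hji
        · refine (Avg.shift _).mono ?_
          rw [norm_neg, norm_e]
          have : (0 : ℝ) ≤ s.card := by positivity
          linarith
        · refine ((havg i).mul (hP j ?_)).mono (by linarith)
          exact (mem_insert.1 hj).resolve_left hji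
      · rw [prod_insert hi, sum_insert hi]
        dsimp only
        rw [if_pos rfl]
        have h3 : ∑ x ∈ s, (1 / 4 : ℝ) • ((if x = i then S (-e i) else (S (-e i) * Ai i ^ 2) * P x) * (δ x * δ x))
            = (S (-e i) * Ai i ^ 2) * ∑ x ∈ s, (1 / 4 : ℝ) • (P x * (δ x * δ x)) := by
          rw [mul_sum]
          refine sum_congr rfl fun x hx => ?_
          rw [if_neg (fun h : x = i => hi (h ▸ hx)), mul_smul_comm, mul_assoc]
        rw [h3, ← hs, mul_sub, mul_one, add_comm]
        nth_rewrite 3 [hq i]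
        ring
  obtain ⟨P, hP, hs⟩ := main univ
  refine ⟨P, fun i => ?_, by rw [hR, hs]⟩
  simpa using hP i (mem_univ i)

lemma R1_bound (f : Lat I → ℝ) (x : Lat I) (M : ℝ)
    (hf : ∀ y, ‖y - x‖ ≤ 3 * I + 1 → ∀ i, |ev (δ i * δ i) f y| ≤ M) :
    |ev (Rr - 1) f x| ≤ I / 4 * M := by
  obtain ⟨P, hP, h⟩ := Rr_expand (I := I)
  rw [h, map_sum, LinearMap.sum_apply, Finset.sum_apply]
  calc _ ≤ ∑ i : Fin I, |ev ((1 / 4 : ℝ) • (P i * (δ i * δ i))) f x| := abs_sum_le_sum_abs _ _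
    _ ≤ ∑ i : Fin I, 1 / 4 * M := by
      refine sum_le_sum fun i _ => ?_
      rw [ev_smul, abs_mul, abs_of_pos (by norm_num : (1 / 4 : ℝ) > 0), ev_mul]
      gcongr
      exact (hP i).abs_le fun y hy => hf y hy i
    _ = _ := by simp; ring

lemma one_le_norm_sub {p q : Lat I} (hpq : p ≠ q) : 1 ≤ ‖p - q‖ := by
  by_contra hlt
  push Not at hlt
  apply hpq
  ext k
  have := (norm_le_pi_norm (p - q) k).trans_lt hlt
  rw [Int.norm_eq_abs] at this
  have : |p k - q k| < 1 := by exact_mod_cast this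
  rw [Int.abs_lt_one_iff] at this; omega

/-- A function bounded by `A` with increments at most `A / ρ` is Hölder with constant of order `A /
√ρ`: the increments are used up to distance `ρ`, the sup bound beyond. -/
lemma Ho_of_lip (f : Lat I → ℝ) (ρ A : ℝ) (hρ : 0 < ρ) (hA : 0 ≤ A) (h0 : ∀ x, |f x| ≤ A)
    (h1 : ∀ x i, |f (x + e i) - f x| ≤ A / ρ) : Ho f ((I + 2) * A / √ρ) := by
  intro p q
  set r := ‖p - q‖
  have hr : 0 ≤ r := norm_nonneg _
  have hsρ : 0 < √ρ := Real.sqrt_pos.2 hρ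
  rw [div_mul_eq_mul_div, le_div_iff₀ hsρ]
  rcases le_total r ρ with h | h
  · have h2 := box_lip f q r (A / ρ) (by positivity) (fun x i _ _ => h1 x i) p q le_rfl (by simp [r])
    calc |f p - f q| * √ρ ≤ A / ρ * I * r * √ρ := by gcongr
      _ = A * I * (r / √ρ) := by
        rw [show A / ρ * I * r * √ρ = A * I * (r * (√ρ / ρ)) by ring, Real.sqrt_div_self]
        ring
      _ ≤ A * I * √r := by
        gcongr
        rw [div_le_iff₀ hsρ]
        calc r = √r * √r := (Real.mul_self_sqrt hr).symm
          _ ≤ _ := by gcongr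
      _ ≤ (I + 2) * A * √r := by
        have : 0 ≤ A * √r := by positivity
        nlinarith
  · have h2 : |f p - f q| ≤ 2 * A := (abs_sub _ _).trans (by linarith [h0 p, h0 q])
    calc _ ≤ 2 * A * √r := by gcongr
      _ ≤ (I + 2) * A * √r := by
        have : 0 ≤ A * √r := by positivity
        have : 0 ≤ (I : ℝ) * (A * √r) := by positivity
        nlinarith

/-! ### Local discrete Schauder estimate -/

/-- The discrete carré du champ, which is the correction term in the Leibniz rule for `R - 1`. -/
def Gam (a u : Lat I → ℝ) (x : Lat I) : ℝ := ev Rr (fun y => (a y - a x) * (u y - u x)) x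

lemma ev_R1 (f : Lat I → ℝ) (x : Lat I) : ev (Rr - 1) f x = ev Rr f x - f x := by
  rw [ev_sub, ev_one]

lemma leibniz (a u : Lat I → ℝ) (x : Lat I) :
    ev (Rr - 1) (fun y => a y * u y) x = a x * ev (Rr - 1) u x + u x * ev (Rr - 1) a x + Gam a u x := by
  have h : (fun y => (a y - a x) * (u y - u x))
      = fun y => ((a y * u y - a x * u y) - u x * a y) + a x * u x := by
    funext y; ring
  rw [Gam, h, ev_add_fun, avg_Rr.const, ev_sub_fun, ev_sub_fun, ev_mul_fun, ev_mul_fun, ev_R1, ev_R1, ev_R1]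
  ring

lemma Gam_shift (a u : Lat I → ℝ) (x w : Lat I) :
    Gam a u (x + w) = ev Rr (fun y => (a (y + w) - a (x + w)) * (u (y + w) - u (x + w))) x := by
  rw [Gam, ev_shift]

/-- A radius beyond which `R`, composed with a unit difference, does not look. -/
def rc (I : ℕ) : ℝ := 3 * I + 1
lemma rc_pos : 0 < rc I := by unfold rc; positivity

lemma avg_Rr' : Avg (Rr : Shf I) (rc I) := avg_Rr.mono (by
  unfold rc; have : (0 : ℝ) ≤ I := by positivity
  linarith)

/-- Local oscillation lemma for functions with bounded increments near `x`. -/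
lemma near_lip (f : Lat I → ℝ) (x y : Lat I) (K : ℝ) (hK : 0 ≤ K) (hy : ‖y - x‖ ≤ rc I)
    (h : ∀ z, ‖z - x‖ ≤ rc I → ∀ i, |ev (δ i) f z| ≤ K) : |f y - f x| ≤ I * rc I * K := by
  refine (box_lip f x (rc I) K hK (fun z i hz _ => ?_) y x hy (by simp [rc_pos.le])).trans ?_
  · simpa using h z hz i
  · calc K * I * ‖y - x‖ ≤ K * I * rc I := by gcongr
      _ = _ := by ring

lemma Gam_sup (a u : Lat I → ℝ) (x : Lat I) (A U : ℝ) (hA : 0 ≤ A) (hU : 0 ≤ U)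
    (ha : ∀ z, ‖z - x‖ ≤ rc I → ∀ i, |ev (δ i) a z| ≤ A)
    (hu : ∀ z, ‖z - x‖ ≤ rc I → ∀ i, |ev (δ i) u z| ≤ U) :
    |Gam a u x| ≤ (I * rc I * A) * (I * rc I * U) := by
  refine avg_Rr'.abs_le fun y hy => ?_
  rw [abs_mul]
  have := rc_pos (I := I)
  gcongr
  · exact near_lip a x y A hA hy ha
  · exact near_lip u x y U hU hy hu

lemma Gam_lip (a u : Lat I → ℝ) (x : Lat I) (k : Fin I) (A A2 U U2 : ℝ) (hA : 0 ≤ A) (hU : 0 ≤ U)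
    (hA2 : 0 ≤ A2) (hU2 : 0 ≤ U2)
    (ha : ∀ z, ‖z - x‖ ≤ rc I → ∀ i, |ev (δ i) a z| ≤ A)
    (hu : ∀ z, ‖z - x‖ ≤ rc I → ∀ i, |ev (δ i) u (z + e k)| ≤ U)
    (ha2 : ∀ z, ‖z - x‖ ≤ rc I → ∀ i, |ev (δ i * δ k) a z| ≤ A2)
    (hu2 : ∀ z, ‖z - x‖ ≤ rc I → ∀ i, |ev (δ i * δ k) u z| ≤ U2) :
    |Gam a u (x + e k) - Gam a u x|
      ≤ (I * rc I * A2) * (I * rc I * U) + (I * rc I * A) * (I * rc I * U2) := by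
  rw [Gam_shift, Gam, ← ev_sub_fun]
  refine avg_Rr'.abs_le fun y hy => ?_
  have hc := rc_pos (I := I)
  have e1 := near_lip (ev (δ k) a) x y A2 hA2 hy (fun z hz i => by rw [← ev_mul]; exact ha2 z hz i)
  have e2 := near_lip (ev (δ k) u) x y U2 hU2 hy (fun z hz i => by rw [← ev_mul]; exact hu2 z hz i)
  have e3 := near_lip a x y A hA hy ha
  have e4 := near_lip (fun z => u (z + e k)) x y U hU hy (fun z hz i => by
    have := hu z hz i
    rw [ev_δ] at this ⊢
    rwa [add_right_comm] at this)
  rw [ev_δ, ev_δ] at e1 e2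
  have : (a (y + e k) - a (x + e k)) * (u (y + e k) - u (x + e k)) - (a y - a x) * (u y - u x)
      = ((a (y + e k) - a y) - (a (x + e k) - a x)) * (u (y + e k) - u (x + e k))
        + (a y - a x) * ((u (y + e k) - u y) - (u (x + e k) - u x)) := by ring
  rw [this]
  refine (abs_add_le _ _).trans ?_
  rw [abs_mul, abs_mul]
  gcongr

/-- Size of the cube in the local estimate, in units of `ρ`. -/
def kL (I : ℕ) : ℝ := 3 + 6 * I + 3 * rc I + 3

/-- Constant bounding the commutator of `R - 1` with the cutoff. -/
def cT (I : ℕ) : ℝ := 2 * I + 4 * (I * rc I) ^ 2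

/-- The constant of the local Schauder estimate. -/
def cL (I : ℕ) : ℝ := cG I * (1 + 2 * I * (I + 2) + (I + 2) * cT I)

lemma cT_nonneg : 0 ≤ cT I := by unfold cT; positivity
lemma cL_nonneg : 0 ≤ cL I := by
  unfold cL
  have := cG_nonneg (I := I); have := cT_nonneg (I := I); positivity

set_option maxHeartbeats 1000000 in
/-- Local discrete Schauder estimate, obtained from the global one for `χ u`. The commutator `u (R -
1) χ + Γ(χ, u)` is bounded, and Lipschitz at scale `ρ`, in terms of lower-order norms; hence the
second differences enter on the right only with the factor `ρ ^ (-1/2)`. -/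
theorem schauder_local (u : Lat I → ℝ) (p0 : Lat I) (ρ : ℕ) (hρ : 1 ≤ ρ) (M M1 M2 H : ℝ)
    (hM : 0 ≤ M) (hM1 : 0 ≤ M1) (hM2 : 0 ≤ M2) (hH : 0 ≤ H)
    (h0 : ∀ x, ‖x - p0‖ ≤ kL I * ρ → |u x| ≤ M)
    (h1 : ∀ x, ‖x - p0‖ ≤ kL I * ρ → ∀ i, |ev (δ i) u x| ≤ M1)
    (h2 : ∀ x, ‖x - p0‖ ≤ kL I * ρ → ∀ i j, |ev (δ i * δ j) u x| ≤ M2)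
    (hg : ∀ x y, ‖x - p0‖ ≤ kL I * ρ → ‖y - p0‖ ≤ kL I * ρ →
      |ev (Rr - 1) u x - ev (Rr - 1) u y| ≤ H * √‖x - y‖)
    (p q : Lat I) (hp : ‖p - p0‖ ≤ ρ) (hq : ‖q - p0‖ ≤ ρ) (i j : Fin I) :
    |ev (δ i * δ j) u p - ev (δ i * δ j) u q|
      ≤ cL I * (H + (M2 + M1 / ρ + M / ρ ^ 2) / √ρ) * √‖p - q‖ := by
  have hr : (1 : ℝ) ≤ ρ := by exact_mod_cast hρ
  have hr0 : (0 : ℝ) < ρ := by linarith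
  have hc := rc_pos (I := I)
  have hcr : rc I ≤ rc I * ρ := by nlinarith
  have hsρ : 0 < √(ρ : ℝ) := Real.sqrt_pos.2 hr0
  have hI : (0 : ℝ) ≤ I := by positivity
  have hIr : (0 : ℝ) ≤ I * ρ := by positivity
  set χ := chi ρ p0 with hχ
  set v : Lat I → ℝ := fun x => χ x * u x with hv
  -- `T` is the commutator of `R - 1` with multiplication by the cutoff.
  set T : Lat I → ℝ := fun x => ev (Rr - 1) v x - χ x * ev (Rr - 1) u x with hT
  set A := cT I * (M2 + M1 / ρ + M / ρ ^ 2) with hA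
  have hA0 : 0 ≤ A := by have := cT_nonneg (I := I); positivity
  have hTe : ∀ x, T x = u x * ev (Rr - 1) χ x + Gam χ u x := by
    intro x; simp only [hT, hv, leibniz]; ring
  -- inner region
  set L : ℝ := (3 + 6 * I + rc I + 1) * ρ with hL
  have hin : ∀ x z, ‖x - p0‖ ≤ L → ‖z - x‖ ≤ rc I → ‖z - p0‖ ≤ kL I * ρ := by
    intro x z hx hz
    have := norm_sub_le3 z x p0
    unfold kL; simp only [hL] at hx; nlinarith
  have hine : ∀ x z (k : Fin I), ‖x - p0‖ ≤ L → ‖z - x‖ ≤ rc I → ‖z + e k - p0‖ ≤ kL I * ρ := by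
    intro x z k hx hz
    have h3 := norm_sub_le3 z x p0
    have h4 := norm_add_le (z - p0) (e k)
    rw [norm_e, sub_add_eq_add_sub] at h4
    unfold kL; simp only [hL] at hx; nlinarith
  have hχR : ∀ x, |ev (Rr - 1) χ x| ≤ I / 4 * (4 / ρ ^ 2) := fun x =>
    R1_bound χ x _ fun y _ i => chi_d2 hρ p0 i i y
  have hχR1 : ∀ x k, |ev (δ k) (ev (Rr - 1) χ) x| ≤ I / 4 * (8 / ρ ^ 3) := fun x k => by
    rw [← ev_mul, mul_comm, ev_mul]
    refine R1_bound _ x _ fun y _ i => ?_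
    rw [← ev_mul]; exact chi_d3 hρ p0 i i k y
  -- One unit of room is kept so that `T` vanishes on both sides of an edge crossing the sphere of
  -- radius `L`.
  have hout : ∀ x, L < ‖x - p0‖ + 1 → T x = 0 := by
    intro x hx
    have hz : ∀ y, ‖y - x‖ ≤ rc I → χ y = 0 := by
      intro y hy
      refine chi_zero hρ p0 y ?_
      have := norm_sub_le3 x y p0
      rw [norm_sub_rev x y] at this
      simp only [hL] at hx; nlinarith
    have hx0 : χ x = 0 := hz x (by simp [hc.le])
    simp only [hT, hv]
    rw [ev_R1, hx0]
    have : |ev Rr (fun y => χ y * u y) x| ≤ 0 :=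
      avg_Rr'.abs_le fun y hy => by rw [hz y hy]; simp
    rw [abs_nonpos_iff.1 this]; ring
  have hTsup : ∀ x, |T x| ≤ A := by
    intro x
    rcases lt_or_ge L (‖x - p0‖ + 1) with hx | hx
    · rw [hout x hx]; simpa using hA0
    have hxL : ‖x - p0‖ ≤ L := by linarith
    rw [hTe]
    have a1 : |u x| ≤ M := h0 x (hin x x hxL (by simp [hc.le]))
    have a2 := Gam_sup χ u x (2 / ρ) M1 (by positivity) hM1 (fun z _ i => chi_d1 hρ p0 i z)
      (fun z hz i => h1 z (hin x z hxL hz) i)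
    have a3 : |u x * ev (Rr - 1) χ x| ≤ M * (I / 4 * (4 / ρ ^ 2)) := by
      rw [abs_mul]; gcongr; exact hχR x
    refine (abs_add_le _ _).trans ((add_le_add a3 a2).trans ?_)
    have : A = (M * (I / 4 * (4 / ρ ^ 2)) + (I * rc I * (2 / ρ)) * (I * rc I * M1))
       + (I * (M / ρ ^ 2) + 4 * (I * rc I) ^ 2 * (M / ρ ^ 2) + (2 * I + 2 * (I * rc I) ^ 2) * (M1 / ρ) + cT I * M2) := by
      rw [hA]; unfold cT; ring
    rw [this]
    have := cT_nonneg (I := I)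
    exact le_add_of_nonneg_right (by positivity)
  have hTlip : ∀ x k, |T (x + e k) - T x| ≤ A / ρ := by
    intro x k
    rcases lt_or_ge L ‖x - p0‖ with hx | hx
    · have : ‖x - p0‖ ≤ ‖x + e k - p0‖ + 1 := by
        have := norm_sub_le (x + e k - p0) (e k)
        rwa [norm_e, show x + e k - p0 - e k = x - p0 by abel] at this
      rw [hout x (by linarith), hout (x + e k) (by linarith)]
      simp; positivity
    rw [hTe, hTe]
    have hself : ‖x - x‖ ≤ rc I := by simp [hc.le]
    have b := Gam_lip χ u x k (2 / ρ) (4 / ρ ^ 2) M1 M2 (by positivity) hM1 (by positivity) hM2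
      (fun z _ i => chi_d1 hρ p0 i z) (fun z hz i => h1 _ (hine x z k hx hz) i)
      (fun z _ i => chi_d2 hρ p0 i k z) (fun z hz i => h2 z (hin x z hx hz) i k)
    have a1 : |u (x + e k)| ≤ M := h0 _ (hine x x k hx hself)
    have a2 := h1 x (hin x x hx hself) k
    have a3 := hχR1 x k
    rw [ev_δ] at a2 a3
    have a4 : |(u (x + e k) * ev (Rr - 1) χ (x + e k)) - u x * ev (Rr - 1) χ x|
        ≤ M * (I / 4 * (8 / ρ ^ 3)) + M1 * (I / 4 * (4 / ρ ^ 2)) := by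
      rw [show (u (x + e k) * ev (Rr - 1) χ (x + e k)) - u x * ev (Rr - 1) χ x
        = u (x + e k) * (ev (Rr - 1) χ (x + e k) - ev (Rr - 1) χ x)
          + (u (x + e k) - u x) * ev (Rr - 1) χ x by ring]
      refine (abs_add_le _ _).trans ?_
      rw [abs_mul, abs_mul]
      gcongr
      exact hχR x
    rw [add_sub_add_comm]
    refine (abs_add_le _ _).trans ((add_le_add a4 b).trans ?_)
    have : A / ρ = (M * (I / 4 * (8 / ρ ^ 3)) + M1 * (I / 4 * (4 / ρ ^ 2)) +
        ((I * rc I * (4 / ρ ^ 2)) * (I * rc I * M1) + (I * rc I * (2 / ρ)) * (I * rc I * M2)))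
       + (4 * (I * rc I) ^ 2 * (M / ρ ^ 3) + I * (M1 / ρ ^ 2) + (2 * I + 2 * (I * rc I) ^ 2) * (M2 / ρ)) := by
      rw [hA]; unfold cT; field_simp; ring
    rw [this]
    exact le_add_of_nonneg_right (by positivity)
  have hTH := Ho_of_lip T ρ A hr0 hA0 hTsup hTlip
  have hχH : Ho χ ((I + 2) * 2 / √ρ) := Ho_of_lip χ ρ 2 hr0 (by norm_num)
    (fun x => (chi_abs hρ p0 x).trans (by norm_num)) (fun x k => by
      have := chi_d1 hρ p0 k x
      rwa [ev_δ] at this)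
  have hgsup : ∀ x, ‖x - p0‖ ≤ L → |ev (Rr - 1) u x| ≤ I * M2 := by
    intro x hx
    refine (R1_bound u x M2 fun y hy k => h2 y (hin x y hx hy) k k).trans ?_
    have : 0 ≤ I * M2 := by positivity
    linarith
  have hT1 : ∀ x y, |χ x * ev (Rr - 1) u x - χ y * ev (Rr - 1) u y|
      ≤ (H + 2 * I * (I + 2) * M2 / √ρ) * √‖x - y‖ := by
    -- at least one of the points is inside the support
    have hLk : L ≤ kL I * ρ := by unfold kL; simp only [hL]; nlinarith
    have hfar : ∀ x y, L < ‖x - p0‖ → |χ x * ev (Rr - 1) u x - χ y * ev (Rr - 1) u y|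
      ≤ (H + 2 * I * (I + 2) * M2 / √ρ) * √‖x - y‖ := by
      intro x y hx
      rw [show χ x = 0 from chi_zero hρ p0 x (by simp only [hL] at hx; nlinarith)]
      rcases lt_or_ge ((3 + 6 * (I : ℝ)) * ρ) ‖y - p0‖ with hy | hy
      · rw [show χ y = 0 from chi_zero hρ p0 y hy]; simp; positivity
      have hxy : ρ ≤ ‖x - y‖ := by
        have := norm_sub_le3 x y p0
        simp only [hL] at hx; nlinarith
      have hs : √(ρ : ℝ) ≤ √‖x - y‖ := Real.sqrt_le_sqrt hxy
      have b1 := hgsup y (by simp only [hL]; nlinarith)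
      have b2 := chi_abs hρ p0 y
      calc |0 * ev (Rr - 1) u x - χ y * ev (Rr - 1) u y| = |χ y| * |ev (Rr - 1) u y| := by
            rw [zero_mul, zero_sub, abs_neg, abs_mul]
        _ ≤ 1 * (I * M2) := by gcongr
        _ = (I * M2 / √ρ) * √ρ := by field_simp
        _ ≤ (H + 2 * I * (I + 2) * M2 / √ρ) * √‖x - y‖ := by
          gcongr
          have : I * M2 / √ρ ≤ 2 * I * (I + 2) * M2 / √ρ := by
            gcongr
            have : (0:ℝ) ≤ I * I := by positivity
            nlinarith
          linarith
    intro x y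
    rcases lt_or_ge L ‖x - p0‖ with hx | hx
    · exact hfar x y hx
    rcases lt_or_ge L ‖y - p0‖ with hy | hy
    · rw [abs_sub_comm, norm_sub_rev]; exact hfar y x hy
    have b1 := chi_abs hρ p0 x
    have b2 := hg x y (hx.trans hLk) (hy.trans hLk)
    have b3 := hgsup y hy
    have b4 := hχH x y
    rw [show χ x * ev (Rr - 1) u x - χ y * ev (Rr - 1) u y
      = χ x * (ev (Rr - 1) u x - ev (Rr - 1) u y) + (χ x - χ y) * ev (Rr - 1) u y by ring]
    refine (abs_add_le _ _).trans ?_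
    rw [abs_mul, abs_mul]
    calc _ ≤ 1 * (H * √‖x - y‖) + ((I + 2) * 2 / √ρ * √‖x - y‖) * (I * M2) := by gcongr
      _ = _ := by ring
  have hvH : Ho (ev (1 - Rr) v) ((H + 2 * I * (I + 2) * M2 / √ρ) + (I + 2) * A / √ρ) := by
    intro x y
    have e1 : ∀ x, ev (1 - Rr) v x = - (χ x * ev (Rr - 1) u x + T x) := by
      intro x; simp only [hT]
      rw [ev_R1 v, ev_sub, ev_one]; ring
    rw [e1, e1, show -(χ x * ev (Rr - 1) u x + T x) - -(χ y * ev (Rr - 1) u y + T y)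
      = -((χ x * ev (Rr - 1) u x - χ y * ev (Rr - 1) u y) + (T x - T y)) by ring, abs_neg, add_mul]
    exact (abs_add_le _ _).trans (add_le_add (hT1 x y) (hTH x y))
  have hvM : ∀ x, |v x| ≤ M := by
    intro x
    simp only [hv]
    rcases lt_or_ge ((3 + 6 * (I : ℝ)) * ρ) ‖x - p0‖ with hx | hx
    · rw [show χ x = 0 from chi_zero hρ p0 x hx]; simpa using hM
    · rw [abs_mul]
      have hk : (3 + 6 * (I : ℝ)) * ρ ≤ kL I * ρ := by
        unfold kL; exact mul_le_mul_of_nonneg_right (by linarith) hr0.le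
      have hu := h0 x (hx.trans hk)
      calc _ ≤ 1 * M := mul_le_mul (chi_abs hρ p0 x) hu (abs_nonneg _) zero_le_one
        _ = M := one_mul M
  have fin := schauder_global v M _ hvM hvH i j p q
  have hone : ∀ z, ‖z - p0‖ ≤ ρ → ev (δ i * δ j) v z = ev (δ i * δ j) u z := by
    intro z hz
    have hc1 : ∀ w : Lat I, ‖w‖ ≤ 2 → v (z + w) = u (z + w) := by
      intro w hw
      simp only [hv]
      rw [show χ (z + w) = 1 from chi_one hρ p0 _ ?_, one_mul]
      have := norm_add_le (z - p0) w
      rw [sub_add_eq_add_sub] at this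
      linarith
    have c0 := hc1 0 (by simp)
    have ci : ∀ k, v (z + e k) = u (z + e k) := fun k => hc1 (e k) (by rw [norm_e]; norm_num)
    have cij := hc1 (e i + e j) ((norm_add_le _ _).trans (by rw [norm_e, norm_e]; norm_num))
    rw [add_zero] at c0
    rw [← add_assoc] at cij
    rw [ev_mul, ev_mul, ev_δ, ev_δ, ev_δ, ev_δ, ev_δ, ev_δ, cij, ci, ci, c0]
  rw [hone p hp, hone q hq] at fin
  refine fin.trans (mul_le_mul_of_nonneg_right ?_ (Real.sqrt_nonneg _))
  set X := M2 + M1 / ρ + M / ρ ^ 2 with hX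
  have hXM : M2 ≤ X := by
    have : 0 ≤ M1 / ρ + M / ρ ^ 2 := by positivity
    rw [hX]; linarith
  have hX0 : 0 ≤ X := hM2.trans hXM
  unfold cL
  rw [mul_assoc (cG I)]
  refine mul_le_mul_of_nonneg_left ?_ cG_nonneg
  have hcT := cT_nonneg (I := I)
  calc H + 2 * I * (I + 2) * M2 / √ρ + (I + 2) * A / √ρ
      ≤ H + 2 * I * (I + 2) * X / √ρ + (I + 2) * (cT I * X) / √ρ := by rw [hA]; gcongr
    _ = H + (2 * I * (I + 2) + (I + 2) * cT I) * (X / √ρ) := by ring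
    _ ≤ (1 + 2 * I * (I + 2) + (I + 2) * cT I) * H +
        (1 + 2 * I * (I + 2) + (I + 2) * cT I) * (X / √ρ) := by
      have h1 : 0 ≤ (2 * I * (I + 2) + (I + 2) * cT I) * H := by positivity
      have h2 : 0 ≤ X / √ρ := by positivity
      nlinarith
    _ = _ := by ring

/-! ### The abstract scheme and interpolation -/

lemma iInf_abs_sub {ι : Type*} [Finite ι] (a b : ι → ℝ) (c : ℝ) (hc : 0 ≤ c)
    (h : ∀ k, |a k - b k| ≤ c) : |(⨅ k, a k) - ⨅ k, b k| ≤ c := by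
  rcases isEmpty_or_nonempty ι with he | he
  · simp [Real.iInf_of_isEmpty, hc]
  have key : ∀ a b : ι → ℝ, (∀ k, |a k - b k| ≤ c) → (⨅ k, a k) - c ≤ ⨅ k, b k := by
    intro a b h
    refine le_ciInf fun k => ?_
    have h1 := ciInf_le (Set.finite_range a).bddBelow k
    have := (abs_le.1 (h k)).2
    linarith
  rw [abs_le]
  have h1 := key a b h
  have h2 := key b a (fun k => by rw [abs_sub_comm]; exact h k)
  constructor <;> linarith

lemma Mi_δ (m : ℕ) (hm : 1 ≤ m) (i : Fin I) :
    Mi m i * δ i = (m : ℝ)⁻¹ • (S (m • e i) - 1) := by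
  rw [Mi, card_range, smul_mul_assoc, δ, geom_sum_mul, S_pow]

lemma Mi_bound (m : ℕ) (hm : 1 ≤ m) (i : Fin I) (f : Lat I → ℝ) (x : Lat I) (M : ℝ)
    (hf : ∀ y, ‖y - x‖ ≤ m → |f y| ≤ M) : |ev (Mi m i * δ i) f x| ≤ 2 * M / m := by
  have hr : (0 : ℝ) < m := by exact_mod_cast hm
  rw [Mi_δ m hm, ev_smul, ev_sub, ev_S, ev_one, abs_mul, abs_of_pos (by positivity)]
  have h1 := hf x (by simp)
  have h2 := hf (x + m • e i) (by
    rw [add_sub_cancel_left, ← Nat.cast_smul_eq_nsmul ℤ, norm_smul, norm_e]; simp)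
  have h3 := abs_sub (f (x + m • e i)) (f x)
  rw [inv_mul_eq_div]
  gcongr
  linarith

/-- Interpolation of second differences: their average over a cube of size `m` telescopes to
differences of `u` at distance `m`, and the deviation from the average is controlled by the
oscillation `D`. -/
lemma interp2 (u : Lat I → ℝ) (x : Lat I) (m : ℕ) (hm : 1 ≤ m) (i j : Fin I) (M D : ℝ)
    (h0 : ∀ y, ‖y - x‖ ≤ 2 * m → |u y| ≤ M)
    (h2 : ∀ y, ‖y - x‖ ≤ 2 * m → |ev (δ i * δ j) u y - ev (δ i * δ j) u x| ≤ D) :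
    |ev (δ i * δ j) u x| ≤ 4 * M / m ^ 2 + D := by
  have hav : Avg (Mi m i * Mi m j) (2 * m) := by
    rw [two_mul]; exact (avg_Mi m hm i).mul (avg_Mi m hm j)
  have h3 : |ev (Mi m i * Mi m j) (fun y => ev (δ i * δ j) u y - ev (δ i * δ j) u x) x| ≤ D :=
    hav.abs_le h2
  rw [ev_sub_fun, hav.const] at h3
  have h4 : |ev (Mi m i * Mi m j) (fun y => ev (δ i * δ j) u y) x| ≤ 2 * (2 * M / m) / m := by
    have : ev (Mi m i * Mi m j) (fun y => ev (δ i * δ j) u y) x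
        = ev (Mi m i * δ i) (ev (Mi m j * δ j) u) x := by
      change ev (Mi m i * Mi m j) (ev (δ i * δ j) u) x = _
      rw [← ev_mul, ← ev_mul]; congr 2; ring
    rw [this]
    refine Mi_bound m hm i _ x _ fun y hy => Mi_bound m hm j u y M fun z hz => h0 z ?_
    have := norm_sub_le3 z y x
    linarith
  rw [show 4 * M / m ^ 2 = 2 * (2 * M / m) / m by ring]
  have := abs_sub_abs_le_abs_sub (ev (δ i * δ j) u x) (ev (Mi m i * Mi m j) (fun y => ev (δ i * δ j) u y) x)
  rw [abs_sub_comm] at this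
  linarith

/-- Interpolation of first differences, with the deviation from the average controlled by second
differences. -/
lemma interp1 (u : Lat I → ℝ) (x : Lat I) (m : ℕ) (hm : 1 ≤ m) (i : Fin I) (M M2 : ℝ) (hM2 : 0 ≤ M2)
    (h0 : ∀ y, ‖y - x‖ ≤ m → |u y| ≤ M)
    (h2 : ∀ y, ‖y - x‖ ≤ m → ∀ j, |ev (δ j * δ i) u y| ≤ M2) :
    |ev (δ i) u x| ≤ 2 * M / m + I * M2 * m := by
  have hav := avg_Mi m hm i
  have h3 : |ev (Mi m i) (fun y => ev (δ i) u y - ev (δ i) u x) x| ≤ I * M2 * m := by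
    refine hav.abs_le fun y hy => ?_
    have := box_lip (ev (δ i) u) x m M2 hM2 (fun z j hz _ => by
      have := h2 z hz j
      rwa [ev_mul, ev_δ j] at this) y x hy (by simp)
    refine this.trans ?_
    calc M2 * I * ‖y - x‖ ≤ M2 * I * m := by gcongr
      _ = _ := by ring
  rw [ev_sub_fun, hav.const] at h3
  have h4 : |ev (Mi m i) (fun y => ev (δ i) u y) x| ≤ 2 * M / m := by
    have : ev (Mi m i) (fun y => ev (δ i) u y) x = ev (Mi m i * δ i) u x := by
      change ev (Mi m i) (ev (δ i) u) x = _
      rw [← ev_mul]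
    rw [this]
    exact Mi_bound m hm i _ x _ h0
  have := abs_sub_abs_le_abs_sub (ev (δ i) u x) (ev (Mi m i) (fun y => ev (δ i) u y) x)
  rw [abs_sub_comm] at this
  linarith

/-- The `k`-th branch of the discrete nonlinearity, that is, of the expression inside the minimum.
The pure second differences are centred by the shift `p - e i`. -/
def FF (E B : Fin I → Fin I → Lat I → ℝ) (Cc : Fin I → Lat I → ℝ) (u : Lat I → ℝ) (k : Fin I)
    (p : Lat I) : ℝ :=
  ∑ i, E k i p * ev (δ i * δ i) u (p - e i) + ∑ i, B k i p * ev (δ i) u p + Cc k p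

/-- The abstract scheme. The lattice function `u` solves the discrete equation with mesh size `h` on
the set `{t > 0}`, where `t` is the distance to the boundary in mesh units: `t` is `1`-Lipschitz and
`h t` is bounded. By `ub` the solution grows at most linearly off the boundary; by `Eb` the
second-order perturbation is bounded by `ε`; all coefficients are Lipschitz, with the powers of `h`
natural for rescaled coefficients. -/
structure Sch (L h ε γ' : ℝ) (t u : Lat I → ℝ) (E B : Fin I → Fin I → Lat I → ℝ)
    (Cc : Fin I → Lat I → ℝ) : Prop where
  hh : 0 < h
  hL : 1 ≤ L
  hε : 0 ≤ ε
  tlip : ∀ p q, |t p - t q| ≤ ‖p - q‖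
  tL : ∀ p, h * t p ≤ L
  ub : ∀ p, |u p| ≤ L * h * (max (t p) 0 + 1)
  γb : |γ'| ≤ L * h ^ 2
  eq : ∀ p, 0 < t p → 4 * ev (Rr - 1) u p = γ' * u p - ⨅ k, FF E B Cc u k p
  Eb : ∀ k i p, 0 < t p → |E k i p| ≤ ε
  El : ∀ k i p q, 0 < t p → 0 < t q → |E k i p - E k i q| ≤ L * h * ‖p - q‖
  Bb : ∀ k i p, 0 < t p → |B k i p| ≤ L * h
  Bl : ∀ k i p q, 0 < t p → 0 < t q → |B k i p - B k i q| ≤ L * h ^ 2 * ‖p - q‖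
  Cl : ∀ k p q, 0 < t p → 0 < t q → |Cc k p - Cc k q| ≤ L * h ^ 3 * ‖p - q‖

/-- The weighted Hölder bound for second differences, with weight `t ^ (3/2)`, for pairs of points
that are close relative to their distance from the boundary. -/
def PS (t u : Lat I → ℝ) (s : ℝ) : Prop :=
  ∀ p q i j, 1 ≤ t p → ‖p - q‖ ≤ t p / 2 →
    t p * √(t p) * |ev (δ i * δ j) u p - ev (δ i * δ j) u q| ≤ s * √‖p - q‖

lemma floor_half {x : ℝ} (hx : 1 ≤ x) : 1 ≤ ⌊x⌋₊ ∧ x / 2 ≤ (⌊x⌋₊ : ℝ) ∧ (⌊x⌋₊ : ℝ) ≤ x := by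
  have h1 : 1 ≤ ⌊x⌋₊ := Nat.one_le_floor_iff x |>.2 hx
  have h2 := Nat.lt_floor_add_one x
  have h3 : (1 : ℝ) ≤ (⌊x⌋₊ : ℝ) := by exact_mod_cast h1
  exact ⟨h1, by linarith, Nat.floor_le (by linarith)⟩

section
variable {L h ε γ' : ℝ} {t u : Lat I → ℝ} {E B : Fin I → Fin I → Lat I → ℝ}
    {Cc : Fin I → Lat I → ℝ}

lemma Sch.t_near (D : Sch L h ε γ' t u E B Cc) {x y : Lat I} {r : ℝ} (hr : ‖y - x‖ ≤ r) :
    t x - r ≤ t y ∧ t y ≤ t x + r := by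
  have := D.tlip y x
  rw [abs_le] at this
  constructor <;> linarith [this.1, this.2]

lemma Sch.ub' (D : Sch L h ε γ' t u E B Cc) {y : Lat I} {T : ℝ} (h0 : 0 ≤ T) (hT : t y ≤ T) :
    |u y| ≤ L * h * (T + 1) := by
  have := D.hh; have := D.hL
  refine (D.ub y).trans ?_
  gcongr
  exact max_le hT h0

/-- Second differences are bounded by a small multiple of the weighted Hölder constant plus a term
of order `h`. The small parameter `θ` fixes the interpolation scale relative to the distance to the
boundary. -/
lemma Sch.interpA (D : Sch L h ε γ' t u E B Cc) {s θ : ℝ} (hs0 : 0 ≤ s) (hθ : 0 < θ) (hθ4 : θ ≤ 1 / 2)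
    (hP : PS t u s) (x : Lat I) (i j : Fin I) (hx : 1 / θ ^ 2 ≤ t x) :
    t x * |ev (δ i * δ j) u x| ≤ 48 * L * h / θ ^ 4 + 2 * θ * s := by
  have hh := D.hh; have hL := D.hL
  set τ := t x with hτ
  have hτ1 : 1 ≤ θ ^ 2 * τ := by rwa [div_le_iff₀' (by positivity)] at hx
  have hτ0 : 1 ≤ τ := by nlinarith
  obtain ⟨m1, m2, m3⟩ := floor_half hτ1
  set m := ⌊θ ^ 2 * τ⌋₊
  have hθ2 : θ ^ 2 ≤ 1 / 4 := by nlinarith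
  have hm4 : 2 * (m : ℝ) ≤ τ / 2 := by nlinarith
  have hm0 : (0 : ℝ) < m := by exact_mod_cast m1
  have key := interp2 u x m m1 i j (3 * L * h * τ) (s * √(2 * m) / (τ * √τ)) ?_ ?_
  · calc τ * |ev (δ i * δ j) u x| ≤ τ * (4 * (3 * L * h * τ) / m ^ 2 + s * √(2 * m) / (τ * √τ)) := by
          gcongr
      _ ≤ τ * (4 * (3 * L * h * τ) / (θ ^ 2 * τ / 2) ^ 2 + s * √(2 * (θ ^ 2 * τ)) / (τ * √τ)) := by
          gcongr
      _ = 48 * L * h / θ ^ 4 + √2 * θ * s := by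
          rw [Real.sqrt_mul (by norm_num), Real.sqrt_mul (by positivity), Real.sqrt_sq hθ.le]
          have : 0 < √τ := Real.sqrt_pos.2 (by linarith)
          field_simp
          ring
      _ ≤ _ := by
          gcongr
          rw [Real.sqrt_le_left (by norm_num)]; norm_num
  · intro y hy
    have h1 := (D.t_near hy).2
    refine (D.ub' (by positivity) h1).trans ?_
    have : t x + 2 * m + 1 ≤ 3 * τ := by rw [← hτ]; linarith
    calc L * h * (t x + 2 * m + 1) ≤ L * h * (3 * τ) := by gcongr
      _ = _ := by ring
  · intro y hy
    have h1 := hP x y i j hτ0 (by rw [norm_sub_rev]; exact hy.trans hm4)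
    rw [abs_sub_comm, le_div_iff₀ (by positivity), mul_comm]
    refine h1.trans ?_
    rw [norm_sub_rev]
    gcongr

/-- First differences are bounded in terms of `h` and the weighted bound `A` for second differences.
-/
lemma Sch.interpB (D : Sch L h ε γ' t u E B Cc) {A θ : ℝ} (hA : 0 ≤ A) (hθ : 0 < θ) (hθ4 : θ ≤ 1 / 2)
    (hP : ∀ x i j, 1 / θ ^ 2 ≤ t x → t x * |ev (δ i * δ j) u x| ≤ A) (x : Lat I) (i : Fin I)
    (hx : 2 * (1 / θ ^ 2) ≤ t x) :
    |ev (δ i) u x| ≤ 12 * L * h / θ ^ 2 + I * A := by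
  have hh := D.hh; have hL := D.hL
  set τ := t x with hτ
  have hτ1 : 2 ≤ θ ^ 2 * τ := by
    rwa [← mul_div_assoc, mul_one, div_le_iff₀' (by positivity)] at hx
  have hτ0 : 1 ≤ τ := by nlinarith
  obtain ⟨m1, m2, m3⟩ := floor_half (x := θ ^ 2 * τ) (by linarith)
  set m := ⌊θ ^ 2 * τ⌋₊
  have hθ2 : θ ^ 2 ≤ 1 / 4 := by nlinarith
  have hm4 : (m : ℝ) ≤ τ / 4 := by nlinarith
  have hm0 : (0 : ℝ) < m := by exact_mod_cast m1
  have key := interp1 u x m m1 i (3 * L * h * τ) (2 * A / τ) (by positivity) ?_ ?_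
  · refine key.trans ?_
    calc 2 * (3 * L * h * τ) / m + I * (2 * A / τ) * m
        ≤ 2 * (3 * L * h * τ) / (θ ^ 2 * τ / 2) + I * (2 * A / τ) * (τ / 4) := by gcongr
      _ = 12 * L * h / θ ^ 2 + I * A / 2 := by field_simp; ring
      _ ≤ _ := by
        have : 0 ≤ I * A := by positivity
        linarith
  · intro y hy
    have h1 := (D.t_near hy).2
    refine (D.ub' (by positivity) h1).trans ?_
    have : t x + m + 1 ≤ 3 * τ := by rw [← hτ]; linarith
    calc L * h * (t x + m + 1) ≤ L * h * (3 * τ) := by gcongr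
      _ = _ := by ring
  · intro y hy j
    have h1 := (D.t_near hy).1
    have h2 : τ / 2 ≤ t y := by rw [hτ] at hm4 ⊢; linarith
    have h3 := hP y j i (by linarith)
    rw [le_div_iff₀ (by positivity)]
    have h4 : τ / 2 * |ev (δ j * δ i) u y| ≤ A := le_trans (by gcongr) h3
    linarith
end

/-! ### Hölder estimate for the nonlinearity -/

section
variable {L h ε γ' : ℝ} {t u : Lat I → ℝ} {E B : Fin I → Fin I → Lat I → ℝ}
    {Cc : Fin I → Lat I → ℝ}

lemma mul_diff_le (w a b a' b' X Y : ℝ) (hw : 0 ≤ w) (h1 : w * (|a - a'| * |b|) ≤ X)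
    (h2 : w * (|a'| * |b - b'|) ≤ Y) : w * |a * b - a' * b'| ≤ X + Y := by
  have : |a * b - a' * b'| ≤ |a - a'| * |b| + |a'| * |b - b'| := by
    rw [← abs_mul, ← abs_mul]
    refine le_trans (le_of_eq ?_) (abs_add_le _ _)
    congr 1; ring
  nlinarith [mul_le_mul_of_nonneg_left this hw]

lemma w_sum_le {ι : Type*} (s : Finset ι) (w X : ℝ) (hw : 0 ≤ w) (f g : ι → ℝ)
    (h : ∀ i ∈ s, w * |f i - g i| ≤ X) : w * |∑ i ∈ s, f i - ∑ i ∈ s, g i| ≤ s.card * X := by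
  rw [← Finset.sum_sub_distrib]
  calc w * |∑ i ∈ s, (f i - g i)| ≤ w * ∑ i ∈ s, |f i - g i| := by
        gcongr; exact Finset.abs_sum_le_sum_abs _ _
    _ = ∑ i ∈ s, w * |f i - g i| := by rw [Finset.mul_sum]
    _ ≤ _ := by simpa using Finset.sum_le_card_nsmul s _ X h

set_option maxHeartbeats 1000000 in
/-- Through the equation, the Hölder seminorm of `(R - 1) u` is at most the small multiple `2 ε I`
of the weighted Hölder constant `s` of the second differences, plus lower-order terms. -/
lemma Sch.FFdiff (D : Sch L h ε γ' t u E B Cc) {s A T1 : ℝ} (hs0 : 0 ≤ s) (hA : 0 ≤ A) (hP : PS t u s)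
    (hPA : ∀ x i j, T1 ≤ t x → t x * |ev (δ i * δ j) u x| ≤ A)
    (hPB : ∀ x i, 2 * T1 ≤ t x → |ev (δ i) u x| ≤ A)
    (p x y : Lat I) (h4 : 4 * T1 ≤ t p) (h8 : 8 ≤ t p) (hx : ‖x - p‖ ≤ t p / 8)
    (hy : ‖y - p‖ ≤ t p / 8) :
    t p * √(t p) * |ev (Rr - 1) u x - ev (Rr - 1) u y|
      ≤ (2 * ε * I * s + L ^ 3 * ((4 * I + 2 * I ^ 2) * A + h)) * √‖x - y‖ := by
  have hh := D.hh; have hL := D.hL; have hε := D.hε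
  have htL := D.tL p
  set τ := t p with hτ
  set r := ‖x - y‖ with hr
  have hr0 : 0 ≤ r := norm_nonneg _
  have hrτ : r ≤ τ / 4 := by
    have := norm_sub_le3 x p y
    rw [norm_sub_rev p y] at this; linarith
  set q := √r with hq
  set z := √τ with hz
  have hq0 : 0 ≤ q := Real.sqrt_nonneg _
  have hz0 : 0 < z := Real.sqrt_pos.2 (by linarith)
  have hqz : q ≤ z := Real.sqrt_le_sqrt (by linarith)
  have hqq : q * q = r := Real.mul_self_sqrt hr0
  have hzz : z * z = τ := Real.mul_self_sqrt (by linarith)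
  have hτ0 : 0 < τ := by linarith
  have hzr : z * r ≤ τ * q := by rw [← hqq, ← hzz]; nlinarith [mul_nonneg hz0.le hq0, mul_nonneg (mul_nonneg hz0.le hq0) (sub_nonneg.2 hqz)]
  obtain ⟨tx1, tx2⟩ := D.t_near hx
  obtain ⟨ty1, ty2⟩ := D.t_near hy
  have hw : 0 ≤ τ * z := by positivity
  have hnear : ∀ v : Lat I, ‖v - p‖ ≤ τ / 8 → ∀ i, |ev (δ i) u v| ≤ A := fun v hv i =>
    hPB v i (by have := (D.t_near hv).1; linarith)
  have h2A : ∀ v : Lat I, 3 * τ / 4 ≤ t v → ∀ i j, |ev (δ i * δ j) u v| ≤ 2 * A / τ := by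
    intro v hv i j
    have := hPA v i j (by linarith)
    rw [le_div_iff₀ hτ0]
    have : 3 * τ / 4 * |ev (δ i * δ j) u v| ≤ A := le_trans (by gcongr) this
    linarith
  have hud : |u x - u y| ≤ A * I * r := box_lip u p (τ / 8) A hA (fun v i hv _ => by
    simpa using hnear v hv i) x y hx hy
  have hdd : ∀ i, |ev (δ i) u x - ev (δ i) u y| ≤ 2 * A / τ * I * r := fun i =>
    box_lip _ p (τ / 8) _ (by positivity) (fun v j hv _ => by
      have := h2A v (by have := (D.t_near hv).1; linarith) j i
      rwa [ev_mul, ev_δ j] at this) x y hx hy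
  have hne : ∀ v : Lat I, ∀ i, ‖v - e i - v‖ ≤ 1 := fun v i => by
    rw [sub_sub_cancel_left, norm_neg, norm_e]
  have txe : ∀ i, 3 * τ / 4 ≤ t (x - e i) := fun i => by
    have := (D.t_near (hne x i)).1; linarith
  have tye : ∀ i, 3 * τ / 4 ≤ t (y - e i) := fun i => by
    have := (D.t_near (hne y i)).1; linarith
  have hDD : ∀ i, τ * z * |ev (δ i * δ i) u (x - e i) - ev (δ i * δ i) u (y - e i)| ≤ 2 * s * q := by
    intro i
    have h1 := hP (x - e i) (y - e i) i i (by linarith [txe i]) (by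
      rw [sub_sub_sub_cancel_right]; linarith [txe i])
    rw [sub_sub_sub_cancel_right] at h1
    set d := |ev (δ i * δ i) u (x - e i) - ev (δ i * δ i) u (y - e i)|
    have h3 : 2 / 3 * z ≤ √(t (x - e i)) := by
      apply Real.le_sqrt_of_sq_le
      have := txe i; nlinarith
    have h5 := txe i
    have h6 : 0 ≤ t (x - e i) := by linarith
    have h2 : 3 * τ / 4 * (2 / 3 * z) * d ≤ s * q := le_trans (by gcongr) h1
    linarith
  have hht : 0 ≤ h * τ := by positivity
  have hL2 : L * (h * τ) ≤ L ^ 3 := by nlinarith [mul_le_mul_of_nonneg_left htL (by linarith : (0:ℝ) ≤ L), mul_nonneg (sub_nonneg.2 hL) (sq_nonneg L)]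
  have hL3 : L * (h * τ) ^ 2 ≤ L ^ 3 := by
    have : (h * τ) ^ 2 ≤ L ^ 2 := by gcongr
    nlinarith
  have hx0 : 0 < t x := by linarith
  have hy0 : 0 < t y := by linarith
  -- elementary conversions
  have c1 : ∀ K : ℝ, 0 ≤ K → L * h * r * (τ * z) * (K / τ) ≤ L ^ 3 * K * q := by
    intro K hK
    calc L * h * r * (τ * z) * (K / τ) = L * h * K * (z * r) := by field_simp
      _ ≤ L * h * K * (τ * q) := by gcongr
      _ = L * (h * τ) * (K * q) := by ring
      _ ≤ L ^ 3 * (K * q) := by gcongr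
      _ = _ := by ring
  have c2 : ∀ K : ℝ, 0 ≤ K → L * h ^ 2 * r * (τ * z) * K ≤ L ^ 3 * K * q := by
    intro K hK
    calc L * h ^ 2 * r * (τ * z) * K = L * h ^ 2 * K * τ * (z * r) := by ring
      _ ≤ L * h ^ 2 * K * τ * (τ * q) := by gcongr
      _ = L * (h * τ) ^ 2 * (K * q) := by ring
      _ ≤ L ^ 3 * (K * q) := by gcongr
      _ = _ := by ring
  have hFF : τ * z * |(⨅ k, FF E B Cc u k x) - ⨅ k, FF E B Cc u k y|
      ≤ (I * (L ^ 3 * (2 * A) * q + 2 * ε * s * q) + I * (L ^ 3 * A * q + L ^ 3 * (2 * A * I) * q)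
        + L ^ 3 * h * q) := by
    rw [← le_div_iff₀' (by positivity)]
    refine iInf_abs_sub _ _ _ (by positivity) fun k => ?_
    rw [le_div_iff₀' (by positivity)]
    have e1 := w_sum_le univ (τ * z) (L ^ 3 * (2 * A) * q + 2 * ε * s * q) hw
      (fun i => E k i x * ev (δ i * δ i) u (x - e i)) (fun i => E k i y * ev (δ i * δ i) u (y - e i))
      (fun i _ => by
        refine mul_diff_le _ _ _ _ _ _ _ hw ?_ ?_
        · refine le_trans ?_ (c1 (2 * A) (by positivity))
          have := D.El k i x y hx0 hy0
          have h2 := h2A _ (txe i) i i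
          calc _ ≤ τ * z * (L * h * r * (2 * A / τ)) := by gcongr
            _ = _ := by ring
        · have := D.Eb k i y hy0
          calc _ = |E k i y| * (τ * z * |ev (δ i * δ i) u (x - e i) - ev (δ i * δ i) u (y - e i)|) := by ring
            _ ≤ ε * (2 * s * q) := mul_le_mul this (hDD i) (by positivity) hε
            _ = _ := by ring)
    have e2 := w_sum_le univ (τ * z) (L ^ 3 * A * q + L ^ 3 * (2 * A * I) * q) hw
      (fun i => B k i x * ev (δ i) u x) (fun i => B k i y * ev (δ i) u y)
      (fun i _ => by
        refine mul_diff_le _ _ _ _ _ _ _ hw ?_ ?_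
        · refine le_trans ?_ (c2 A (by positivity))
          have := D.Bl k i x y hx0 hy0
          have h2 := hnear x hx i
          calc _ ≤ τ * z * (L * h ^ 2 * r * A) := by gcongr
            _ = _ := by ring
        · refine le_trans ?_ (c1 (2 * A * I) (by positivity))
          have := D.Bb k i y hy0
          have h2 := hdd i
          calc _ ≤ τ * z * (L * h * (2 * A / τ * I * r)) := by gcongr
            _ = _ := by ring)
    have e3 : τ * z * |Cc k x - Cc k y| ≤ L ^ 3 * h * q := by
      refine le_trans ?_ (c2 h hh.le)
      have := D.Cl k x y hx0 hy0
      calc _ ≤ τ * z * (L * h ^ 3 * r) := by gcongr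
        _ = _ := by ring
    rw [card_univ, Fintype.card_fin] at e1 e2
    unfold FF
    refine le_trans ?_ (add_le_add (add_le_add e1 e2) e3)
    rw [← mul_add, ← mul_add]
    gcongr
    refine le_trans (le_of_eq ?_) ((abs_add_le _ _).trans (add_le_add_left (abs_add_le _ _) _))
    congr 1; ring
  have hγ : τ * z * |γ' * u x - γ' * u y| ≤ L ^ 3 * (A * I) * q := by
    rw [← mul_sub, abs_mul]
    refine le_trans ?_ (c2 (A * I) (by positivity))
    have := D.γb
    calc _ ≤ τ * z * (L * h ^ 2 * (A * I * r)) := by gcongr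
      _ = _ := by ring
  have ex := D.eq x hx0
  have ey := D.eq y hy0
  have : |ev (Rr - 1) u x - ev (Rr - 1) u y| ≤ |γ' * u x - γ' * u y|
      + |(⨅ k, FF E B Cc u k x) - ⨅ k, FF E B Cc u k y| := by
    have e4 : 4 * (ev (Rr - 1) u x - ev (Rr - 1) u y) = (γ' * u x - γ' * u y)
      - ((⨅ k, FF E B Cc u k x) - ⨅ k, FF E B Cc u k y) := by linarith
    have e5 := abs_sub (γ' * u x - γ' * u y) ((⨅ k, FF E B Cc u k x) - ⨅ k, FF E B Cc u k y)
    rw [← e4, abs_mul, abs_of_pos (by norm_num : (0:ℝ) < 4)] at e5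
    have := abs_nonneg (ev (Rr - 1) u x - ev (Rr - 1) u y)
    linarith
  calc _ ≤ τ * z * (|γ' * u x - γ' * u y|
      + |(⨅ k, FF E B Cc u k x) - ⨅ k, FF E B Cc u k y|) := by gcongr
    _ ≤ L ^ 3 * (A * I) * q + (I * (L ^ 3 * (2 * A) * q + 2 * ε * s * q) + I * (L ^ 3 * A * q + L ^ 3 * (2 * A * I) * q)
        + L ^ 3 * h * q) := by rw [mul_add]; exact add_le_add hγ hFF
    _ = _ := by ring
end

/-! ### Improvement of the weighted Hölder bound -/

lemma dd_bound (u : Lat I → ℝ) (x : Lat I) (i j : Fin I) (M : ℝ)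
    (h : ∀ y, ‖y - x‖ ≤ 2 → |u y| ≤ M) : |ev (δ i * δ j) u x| ≤ 4 * M := by
  rw [ev_mul, ev_δ, ev_δ, ev_δ]
  have h1 := abs_le.1 (h (x + e i + e j) (by
    rw [add_assoc, add_sub_cancel_left]
    refine (norm_add_le _ _).trans ?_
    rw [norm_e, norm_e]; norm_num))
  have h2 := abs_le.1 (h (x + e i) (by rw [add_sub_cancel_left, norm_e]; norm_num))
  have h3 := abs_le.1 (h (x + e j) (by rw [add_sub_cancel_left, norm_e]; norm_num))
  have h4 := abs_le.1 (h x (by simp))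
  rw [abs_le]
  constructor <;> linarith [h1.1, h1.2, h2.1, h2.2, h3.1, h3.2, h4.1, h4.2]

/-- The ratio between distance to the boundary and the scale of the local estimate. -/
def N0 (I : ℕ) : ℝ := 8 * kL I

lemma N0_ge : 48 ≤ N0 I := by
  have := rc_pos (I := I)
  unfold N0 kL
  have : (0 : ℝ) ≤ I := by positivity
  linarith

/-- Constant multiplying the lower-order bound `A` in `Sch.step`. -/
def cP (I : ℕ) (L : ℝ) : ℝ :=
  cL I * (L ^ 3 * (4 * I + 2 * I ^ 2) + 2 * N0 I * (2 + 2 * N0 I)) + 6 * N0 I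

/-- Constant multiplying the mesh size `h` in `Sch.step`. -/
def cW (I : ℕ) (L T0 : ℝ) : ℝ :=
  cL I * L ^ 3 + cL I * (24 * N0 I ^ 3 * L) + 8 * L * (3 / 2 * T0 + 3) * (T0 * √T0)

lemma cP_pos {L : ℝ} (hL : 0 ≤ L) : 0 < cP I L := by
  have := N0_ge (I := I)
  have := cL_nonneg (I := I)
  unfold cP; positivity

lemma cW_nonneg {L T0 : ℝ} (hL : 0 ≤ L) (hT : 0 ≤ T0) : 0 ≤ cW I L T0 := by
  have := N0_ge (I := I)
  have := cL_nonneg (I := I)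
  unfold cW; positivity

section
variable {L h ε γ' : ℝ} {t u : Lat I → ℝ} {E B : Fin I → Fin I → Lat I → ℝ}
    {Cc : Fin I → Lat I → ℝ}

/-- Near the boundary, in mesh units, the linear growth of `u` alone bounds the second differences.
-/
lemma Sch.dd_crude (D : Sch L h ε γ' t u E B Cc) (x : Lat I) (T : ℝ) (hT : 0 ≤ T) (hx : t x ≤ T)
    (i j : Fin I) : |ev (δ i * δ j) u x| ≤ 4 * (L * h * (T + 3)) := by
  refine dd_bound u x i j _ fun y hy => ?_
  have h1 := (D.t_near hy).2
  refine (D.ub' (T := T + 2) (by linarith) (by linarith)).trans (le_of_eq ?_)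
  ring

/-- The weighted Hölder bound for points closer than `ρ`, by the local Schauder estimate on cubes of
size `ρ`, comparable to the distance from the boundary. -/
lemma Sch.step_near (D : Sch L h ε γ' t u E B Cc) {s A T1 : ℝ} (hs0 : 0 ≤ s) (hA : 0 ≤ A)
    (hP : PS t u s)
    (hPA : ∀ x i j, T1 ≤ t x → t x * |ev (δ i * δ j) u x| ≤ A)
    (hPB : ∀ x i, 2 * T1 ≤ t x → |ev (δ i) u x| ≤ A)
    (p q : Lat I) (i j : Fin I) (h4 : 4 * T1 ≤ t p) (h8 : N0 I ≤ t p)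
    (ρ : ℕ) (hρ : ρ = ⌊t p / N0 I⌋₊) (hr : ‖p - q‖ ≤ ρ) :
    t p * √(t p) * |ev (δ i * δ j) u p - ev (δ i * δ j) u q|
      ≤ cL I * ((2 * ε * I * s + L ^ 3 * ((4 * I + 2 * I ^ 2) * A + h))
        + 2 * N0 I * (2 * A + 2 * N0 I * A + 12 * N0 I ^ 2 * L * h)) * √‖p - q‖ := by
  have hh := D.hh; have hL := D.hL; have hε := D.hε
  have hN := N0_ge (I := I)
  have hcL := cL_nonneg (I := I)
  have hkN : kL I = N0 I / 8 := by unfold N0; ring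
  set τ := t p with hτ
  set N := N0 I with hNN
  have hτ0 : 0 < τ := by linarith
  obtain ⟨m1, m2, m3⟩ := floor_half (x := τ / N) (by rw [le_div_iff₀ (by linarith)]; linarith)
  rw [← hρ] at m1 m2 m3
  have hρ0 : (0 : ℝ) < ρ := by exact_mod_cast m1
  set z := √τ with hz
  have hz0 : 0 < z := Real.sqrt_pos.2 (by linarith)
  have hcube : kL I * ρ ≤ τ / 8 := by
    rw [hkN]
    calc N / 8 * (ρ : ℝ) ≤ N / 8 * (τ / N) := by gcongr
      _ = τ / 8 := by field_simp
  have key := schauder_local u p ρ m1 (3 * L * h * τ) A (2 * A / τ)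
    ((2 * ε * I * s + L ^ 3 * ((4 * I + 2 * I ^ 2) * A + h)) / (τ * z))
    (by positivity) hA (by positivity) (by positivity)
    (fun x hx => by
      have h1 := (D.t_near (hx.trans hcube)).2
      refine (D.ub' (T := 2 * τ) (by linarith) (by linarith)).trans ?_
      calc L * h * (2 * τ + 1) ≤ L * h * (3 * τ) := by gcongr; linarith
        _ = _ := by ring)
    (fun x hx i => hPB x i (by have := (D.t_near (hx.trans hcube)).1; linarith))
    (fun x hx i j => by
      have h1 := (D.t_near (hx.trans hcube)).1
      have h2 := hPA x i j (by linarith)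
      rw [le_div_iff₀ hτ0]
      have : τ / 2 * |ev (δ i * δ j) u x| ≤ A :=
        le_trans (mul_le_mul_of_nonneg_right (by linarith) (abs_nonneg _)) h2
      linarith)
    (fun x y hx hy => by
      have := D.FFdiff hs0 hA hP hPA hPB p x y h4 (by linarith) (hx.trans hcube) (hy.trans hcube)
      rw [div_mul_eq_mul_div, le_div_iff₀ (by positivity), mul_comm]
      exact this)
    p q (by simp) (by rwa [norm_sub_rev]) i j
  have hsρ : z / (2 * N) ≤ √ρ := by
    apply Real.le_sqrt_of_sq_le
    refine le_trans ?_ m2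
    rw [div_pow, Real.sq_sqrt hτ0.le, div_div]
    gcongr
    nlinarith
  calc τ * z * |ev (δ i * δ j) u p - ev (δ i * δ j) u q| ≤ τ * z * (cL I * ((2 * ε * I * s + L ^ 3 * ((4 * I + 2 * I ^ 2) * A + h)) / (τ * z)
        + (2 * A / τ + A / ρ + 3 * L * h * τ / ρ ^ 2) / √ρ) * √‖p - q‖) := by gcongr
    _ ≤ τ * z * (cL I * ((2 * ε * I * s + L ^ 3 * ((4 * I + 2 * I ^ 2) * A + h)) / (τ * z)
        + (2 * A / τ + A / (τ / N / 2) + 3 * L * h * τ / (τ / N / 2) ^ 2) / (z / (2 * N)))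
        * √‖p - q‖) := by gcongr
    _ = _ := by field_simp; ring

/-- One round of the estimate: a weighted Hölder bound `s` improves to a small multiple of `s` plus
lower-order terms. -/
lemma Sch.step (D : Sch L h ε γ' t u E B Cc) {s A T1 : ℝ} (hs0 : 0 ≤ s) (hA : 0 ≤ A)
    (hT1 : 0 < T1) (hP : PS t u s)
    (hPA : ∀ x i j, T1 ≤ t x → t x * |ev (δ i * δ j) u x| ≤ A)
    (hPB : ∀ x i, 2 * T1 ≤ t x → |ev (δ i) u x| ≤ A) :
    PS t u (2 * cL I * I * ε * s + cP I L * A + h * cW I L (4 * T1 + N0 I)) := by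
  have hh := D.hh; have hL := D.hL; have hε := D.hε
  have hN := N0_ge (I := I)
  have hcL := cL_nonneg (I := I)
  have hL0 : 0 ≤ L := by linarith
  intro p q i j hp hpq
  set T0 := 4 * T1 + N0 I with hT0
  have hT00 : 0 < T0 := by linarith
  have hq0 := Real.sqrt_nonneg ‖p - q‖
  have a1 : 0 ≤ 2 * cL I * I * ε * s := by positivity
  have a2 : 0 ≤ cL I * (L ^ 3 * (4 * I + 2 * I ^ 2) + 2 * N0 I * (2 + 2 * N0 I)) * A := by positivity
  have a3 : 0 ≤ 6 * N0 I * A := by positivity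
  have a4 : 0 ≤ h * (cL I * L ^ 3) := by positivity
  have a5 : 0 ≤ h * (cL I * (24 * N0 I ^ 3 * L)) := by positivity
  have a6 : 0 ≤ h * (8 * L * (3 / 2 * T0 + 3) * (T0 * √T0)) := by positivity
  -- Three cases: `p` within a bounded number of mesh steps of the boundary (crude bound), nearby
  -- points (Schauder estimate), and points at a distance comparable to `t p` (bound for each second
  -- difference).
  rcases lt_or_ge (t p) T0 with hlt | hge
  · by_cases hne : p = q
    · subst hne; simp
    have h1 := one_le_norm_sub hne
    have h1q : 1 ≤ √‖p - q‖ := Real.one_le_sqrt.2 h1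
    rw [norm_sub_rev] at hpq
    have tq := (D.t_near hpq).2
    have b1 := D.dd_crude p (3 / 2 * T0) (by linarith) (by linarith) i j
    have b2 := D.dd_crude q (3 / 2 * T0) (by linarith) (by linarith) i j
    have b3 := abs_sub (ev (δ i * δ j) u p) (ev (δ i * δ j) u q)
    have hs : √(t p) ≤ √T0 := Real.sqrt_le_sqrt hlt.le
    calc t p * √(t p) * |ev (δ i * δ j) u p - ev (δ i * δ j) u q|
        ≤ T0 * √T0 * (8 * (L * h * (3 / 2 * T0 + 3))) := by gcongr; linarith
      _ = h * (8 * L * (3 / 2 * T0 + 3) * (T0 * √T0)) * 1 := by ring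
      _ ≤ _ := by
        refine mul_le_mul ?_ h1q zero_le_one ?_
        all_goals
          unfold cP cW
          rw [mul_add h, mul_add h, add_mul _ _ A]
          linarith
  · set ρ := ⌊t p / N0 I⌋₊ with hρ
    rcases le_or_gt ‖p - q‖ (ρ : ℝ) with hr | hr
    · refine (D.step_near hs0 hA hP hPA hPB p q i j (by linarith) (by linarith) ρ hρ hr).trans ?_
      gcongr
      unfold cP cW
      rw [mul_add h, mul_add h, add_mul _ _ A]
      linarith
    · rw [norm_sub_rev] at hpq
      have tq := (D.t_near hpq).1
      have b1 := hPA p i j (by linarith)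
      have b2 := hPA q i j (by linarith)
      have b2' : t p / 2 * |ev (δ i * δ j) u q| ≤ A :=
        le_trans (mul_le_mul_of_nonneg_right (by linarith) (abs_nonneg _)) b2
      have b3 := abs_sub (ev (δ i * δ j) u p) (ev (δ i * δ j) u q)
      have b4 : t p * |ev (δ i * δ j) u p - ev (δ i * δ j) u q| ≤ 3 * A := by nlinarith
      obtain ⟨m1, m2, m3⟩ := floor_half (x := t p / N0 I) (by rw [le_div_iff₀ (by linarith)]; linarith)
      have hs : √(t p) ≤ 2 * N0 I * √‖p - q‖ := by
        rw [Real.sqrt_le_left (by positivity), mul_pow, Real.sq_sqrt (norm_nonneg _)]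
        have : t p / N0 I / 2 ≤ ‖p - q‖ := m2.trans hr.le
        rw [div_div, div_le_iff₀ (by positivity)] at this
        nlinarith [norm_nonneg (p - q)]
      calc t p * √(t p) * |ev (δ i * δ j) u p - ev (δ i * δ j) u q|
          = √(t p) * (t p * |ev (δ i * δ j) u p - ev (δ i * δ j) u q|) := by ring
        _ ≤ 2 * N0 I * √‖p - q‖ * (3 * A) := by gcongr
        _ = 6 * N0 I * A * √‖p - q‖ := by ring
        _ ≤ _ := by
          gcongr
          unfold cP cW
          rw [mul_add h, mul_add h, add_mul _ _ A]
          linarith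

end

/-! ### Interior a priori estimate -/

/-- Admissible size of the second-order perturbation: it makes the factor of `s` contributed by the
nonlinearity in `Sch.step` at most `1/4`. -/
def eps0 (I : ℕ) : ℝ := 1 / (8 * (cL I + 1) * (I + 1))

lemma eps0_pos : 0 < eps0 I := by
  have := cL_nonneg (I := I)
  unfold eps0; positivity

/-- The interpolation scale, chosen so that interpolation contributes at most another quarter of
`s`. -/
def th (I : ℕ) (L : ℝ) : ℝ := 1 / (8 * cP I L * (I + 1) + 2)

lemma th_pos {L : ℝ} (hL : 0 ≤ L) : 0 < th I L := by
  have := cP_pos (I := I) hL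
  unfold th; positivity

lemma th_le {L : ℝ} (hL : 0 ≤ L) : th I L ≤ 1 / 2 := by
  have := cP_pos (I := I) hL
  unfold th
  gcongr
  have : 0 ≤ 8 * cP I L * (I + 1) := by positivity
  linarith

/-- The coefficient of `h` in the improved bound `Sch.halve`. -/
def c3 (I : ℕ) (L : ℝ) : ℝ :=
  cP I L * ((I + 1) * (48 * L / th I L ^ 4) + 12 * L / th I L ^ 2)
    + cW I L (4 * (1 / th I L ^ 2) + N0 I)

lemma c3_nonneg {L : ℝ} (hL : 0 ≤ L) : 0 ≤ c3 I L := by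
  have := cP_pos (I := I) hL
  have := th_pos (I := I) hL
  have hN := N0_ge (I := I)
  have := cW_nonneg (I := I) hL (T0 := 4 * (1 / th I L ^ 2) + N0 I) (by positivity)
  unfold c3; positivity

section
variable {L h γ' : ℝ} {t u : Lat I → ℝ} {E B : Fin I → Fin I → Lat I → ℝ}
    {Cc : Fin I → Lat I → ℝ}

lemma Sch.interps (D : Sch L h (eps0 I) γ' t u E B Cc) {s : ℝ} (hs : 0 ≤ s) (hP : PS t u s) :
    (∀ x i j, 1 / th I L ^ 2 ≤ t x → t x * |ev (δ i * δ j) u x| ≤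
      (I + 1) * (48 * L * h / th I L ^ 4 + 2 * th I L * s) + 12 * L * h / th I L ^ 2) ∧
    (∀ x i, 2 * (1 / th I L ^ 2) ≤ t x → |ev (δ i) u x| ≤
      (I + 1) * (48 * L * h / th I L ^ 4 + 2 * th I L * s) + 12 * L * h / th I L ^ 2) := by
  have hh := D.hh; have hL := D.hL
  have hL0 : 0 ≤ L := by linarith
  have hθ := th_pos (I := I) hL0
  have hA0 : 0 ≤ 48 * L * h / th I L ^ 4 + 2 * th I L * s := by positivity
  have hI : (0 : ℝ) ≤ I := by positivity
  have h12 : 0 ≤ 12 * L * h / th I L ^ 2 := by positivity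
  have h1 : ∀ x i j, 1 / th I L ^ 2 ≤ t x → t x * |ev (δ i * δ j) u x| ≤
      48 * L * h / th I L ^ 4 + 2 * th I L * s := fun x i j hx =>
    D.interpA hs hθ (th_le hL0) hP x i j hx
  refine ⟨fun x i j hx => (h1 x i j hx).trans (by nlinarith), fun x i hx => ?_⟩
  have := D.interpB hA0 hθ (th_le hL0) h1 x i hx
  nlinarith

/-- The weighted Hölder constant can be halved at the cost of a multiple of `h`: the nonlinearity
and the interpolation each leave a quarter of it. -/
lemma Sch.halve (D : Sch L h (eps0 I) γ' t u E B Cc) {s : ℝ} (hs : 0 ≤ s) (hP : PS t u s) :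
    PS t u (s / 2 + h * c3 I L) := by
  have hh := D.hh; have hL := D.hL
  have hL0 : 0 ≤ L := by linarith
  have hθ := th_pos (I := I) hL0
  have hcP := cP_pos (I := I) hL0
  have hcL := cL_nonneg (I := I)
  obtain ⟨hA, hB⟩ := D.interps hs hP
  have key := D.step hs (by positivity) (by positivity) hP hA hB
  intro p q i j hp hpq
  refine (key p q i j hp hpq).trans (mul_le_mul_of_nonneg_right ?_ (Real.sqrt_nonneg _))
  have h1 : 2 * cL I * I * eps0 I ≤ 1 / 4 := by
    unfold eps0
    rw [mul_one_div, div_le_div_iff₀ (by positivity) (by norm_num)]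
    have : cL I * I ≤ (cL I + 1) * (I + 1) := by gcongr <;> linarith
    linarith
  have h2 : cP I L * (I + 1) * (2 * th I L) ≤ 1 / 4 := by
    unfold th
    rw [← mul_assoc, mul_one_div, div_le_div_iff₀ (by positivity) (by norm_num)]
    linarith
  have h3 := mul_le_mul_of_nonneg_right h1 hs
  have h4 := mul_le_mul_of_nonneg_right h2 hs
  unfold c3
  have : cP I L * ((I + 1) * (48 * L * h / th I L ^ 4 + 2 * th I L * s) + 12 * L * h / th I L ^ 2)
    = cP I L * (I + 1) * (2 * th I L) * s
      + h * (cP I L * ((I + 1) * (48 * L / th I L ^ 4) + 12 * L / th I L ^ 2)) := by ring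
  rw [this, mul_add h]
  linarith

/-- Some weighted Hölder bound holds, because `t ≤ L / h` is bounded. It depends on the mesh and
only serves to start the iteration. -/
lemma Sch.PS_init (D : Sch L h (eps0 I) γ' t u E B Cc) : ∃ s, 0 ≤ s ∧ PS t u s := by
  have hh := D.hh; have hL := D.hL
  have hL0 : 0 ≤ L := by linarith
  have htL : ∀ p, t p ≤ L / h := fun p => by
    rw [le_div_iff₀ hh, mul_comm]; exact D.tL p
  set T := L / h with hT
  have hT0 : 0 ≤ T := by positivity
  refine ⟨T * √T * (8 * (L * h * (T + 3))), by positivity, ?_⟩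
  intro p q i j hp hpq
  by_cases hne : p = q
  · subst hne; simp
  have h1q : 1 ≤ √‖p - q‖ := Real.one_le_sqrt.2 (one_le_norm_sub hne)
  have b1 := D.dd_crude p T hT0 (htL p) i j
  have b2 := D.dd_crude q T hT0 (htL q) i j
  have b3 := abs_sub (ev (δ i * δ j) u p) (ev (δ i * δ j) u q)
  have hs : √(t p) ≤ √T := Real.sqrt_le_sqrt (htL p)
  have htp := htL p
  calc t p * √(t p) * |ev (δ i * δ j) u p - ev (δ i * δ j) u q|
      ≤ T * √T * (8 * (L * h * (T + 3))) := by gcongr; linarith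
    _ = T * √T * (8 * (L * h * (T + 3))) * 1 := by ring
    _ ≤ _ := by gcongr

/-- Iterating `Sch.halve` removes the dependence on the initial, mesh-dependent bound. -/
lemma Sch.PS_final (D : Sch L h (eps0 I) γ' t u E B Cc) : PS t u (2 * (h * c3 I L)) := by
  have hh := D.hh; have hL := D.hL
  have hL0 : 0 ≤ L := by linarith
  have hc := c3_nonneg (I := I) hL0
  obtain ⟨s, hs, hP⟩ := D.PS_init
  have key : ∀ n : ℕ, PS t u (s * (1 / 2) ^ n + 2 * (h * c3 I L)) := by
    intro n
    induction n with
    | zero =>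
      intro p q i j hp hpq
      refine (hP p q i j hp hpq).trans ?_
      gcongr
      have : 0 ≤ 2 * (h * c3 I L) := by positivity
      simp; linarith
    | succ n ih =>
      have := D.halve (by positivity) ih
      convert this using 1
      ring
  intro p q i j hp hpq
  have hlim : Filter.Tendsto (fun n : ℕ => (s * (1 / 2) ^ n + 2 * (h * c3 I L)) * √‖p - q‖)
      Filter.atTop (nhds ((s * 0 + 2 * (h * c3 I L)) * √‖p - q‖)) :=
    (((tendsto_pow_atTop_nhds_zero_of_lt_one (by norm_num) (by norm_num)).const_mul s).add_const
      _).mul_const _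
  rw [mul_zero, zero_add] at hlim
  exact ge_of_tendsto' hlim fun n => key n p q i j hp hpq
end

/-- Interior a priori estimate: with a constant independent of the mesh `h`, discrete solutions
that grow linearly off the boundary have bounded first differences, second differences that are
`O(h)` over the distance, and weighted Hölder second differences. -/
theorem apriori (I : ℕ) (L : ℝ) (hL : 1 ≤ L) : ∃ C : ℝ, 0 ≤ C ∧
    ∀ (h γ' : ℝ) (t u : Lat I → ℝ) (E B : Fin I → Fin I → Lat I → ℝ) (Cc : Fin I → Lat I → ℝ),
      Sch L h (eps0 I) γ' t u E B Cc →
      PS t u (C * h) ∧ (∀ p i j, 1 ≤ t p → t p * |ev (δ i * δ j) u p| ≤ C * h) ∧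
      ∀ p i, |ev (δ i) u p| ≤ C * h := by
  have hL0 : 0 ≤ L := by linarith
  have hc := c3_nonneg (I := I) hL0
  have hθ := th_pos (I := I) hL0
  set T1 := 1 / th I L ^ 2 with hT1
  have hT10 : 0 < T1 := by positivity
  set K := (I + 1) * (48 * L / th I L ^ 4 + 2 * th I L * (2 * c3 I L)) + 12 * L / th I L ^ 2 with hK
  have hK0 : 0 ≤ K := by positivity
  have hx1 : 0 ≤ T1 * (4 * (L * (T1 + 3))) := by positivity
  have hx2 : 0 ≤ 2 * L * (2 * T1 + 3) := by positivity
  refine ⟨2 * c3 I L + K + T1 * (4 * (L * (T1 + 3))) + 2 * L * (2 * T1 + 3), by positivity, ?_⟩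
  intro h γ' t u E B Cc D
  have hh := D.hh
  have hPS := D.PS_final
  obtain ⟨hA, hB⟩ := D.interps (by positivity) hPS
  have hKe : (I + 1) * (48 * L * h / th I L ^ 4 + 2 * th I L * (2 * (h * c3 I L)))
      + 12 * L * h / th I L ^ 2 = K * h := by rw [hK]; ring
  rw [hKe] at hA hB
  refine ⟨?_, ?_, ?_⟩
  · intro p q i j hp hpq
    refine (hPS p q i j hp hpq).trans (mul_le_mul_of_nonneg_right ?_ (Real.sqrt_nonneg _))
    calc 2 * (h * c3 I L) = 2 * c3 I L * h := by ring
      _ ≤ _ := by gcongr; linarith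
  · intro p i j hp
    rcases le_or_gt T1 (t p) with h1 | h1
    · refine (hA p i j h1).trans ?_
      gcongr; linarith
    · have := D.dd_crude p T1 hT10.le h1.le i j
      calc t p * |ev (δ i * δ j) u p| ≤ T1 * (4 * (L * h * (T1 + 3))) := by gcongr
        _ = T1 * (4 * (L * (T1 + 3))) * h := by ring
        _ ≤ _ := by gcongr; linarith
  · intro p i
    rcases le_or_gt (2 * T1) (t p) with h1 | h1
    · refine (hB p i h1).trans ?_
      gcongr; linarith
    · have h2 := (D.t_near (x := p) (y := p + e i) (r := 1) (by rw [add_sub_cancel_left, norm_e])).2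
      have b1 := D.ub' (y := p) (T := 2 * T1 + 2) (by positivity) (by linarith)
      have b2 := D.ub' (y := p + e i) (T := 2 * T1 + 2) (by positivity) (by linarith)
      have b3 := abs_sub (u (p + e i)) (u p)
      rw [ev_δ]
      calc |u (p + e i) - u p| ≤ 2 * (L * h * (2 * T1 + 2 + 1)) := by linarith
        _ = 2 * L * (2 * T1 + 3) * h := by ring
        _ ≤ _ := by gcongr; linarith

/-! ### Monotonicity of the scheme -/

/-- The three-point average with weights `1/4, 1/2, 1/4` in direction `i`. -/
def qq (i : Fin I) : Shf I := S (-e i) * Ai i ^ 2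

lemma ev_qq (i : Fin I) (f : Lat I → ℝ) (p : Lat I) :
    ev (qq i) f p = 1 / 4 * f (p + e i) + 1 / 2 * f p + 1 / 4 * f (p - e i) := by
  rw [qq, Ai, pow_two, ev_mul, ev_S, ev_mul]
  simp only [ev_S, ev_smul, ev_add, ev_one]
  have h1 : p + -e i + e i = p := by abel
  have h2 : p + -e i = p - e i := by abel
  rw [h1, h2]
  ring

lemma Rr_eq_prod : (Rr : Shf I) = ∏ i, qq i := by
  have h1 : (S (-1 : Lat I) : Shf I) = ∏ i, S (-e i) := by
    have : ∀ s : Finset (Fin I), (∏ i ∈ s, S (-e i) : Shf I) = S (∑ i ∈ s, -e i) := by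
      intro s
      classical
      induction s using Finset.induction_on with
      | empty => simp [S_zero]
      | insert a s ha ih => rw [Finset.prod_insert ha, Finset.sum_insert ha, ih, S_add]
    rw [this, Finset.sum_neg_distrib]
    congr 2
    have := Finset.univ_sum_single (1 : Lat I)
    rw [← this]; simp
  rw [Rr, h1, Aa, ← Finset.prod_pow, ← Finset.prod_mul_distrib]
  rfl

lemma prod_qq_ge (s : Finset (Fin I)) (w : Lat I → ℝ) (hw : ∀ x, 0 ≤ w x) (x : Lat I) :
    (1 / 2) ^ s.card * w x ≤ ev (∏ i ∈ s, qq i) w x := by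
  classical
  induction s using Finset.induction_on generalizing x with
  | empty => simp
  | insert a s ha ih =>
    rw [Finset.prod_insert ha, Finset.card_insert_of_notMem ha, ev_mul, ev_qq]
    have h0 : ∀ y, 0 ≤ ev (∏ i ∈ s, qq i) w y := fun y =>
      le_trans (mul_nonneg (by positivity) (hw y)) (ih y)
    have h1 := h0 (x + e a); have h2 := h0 (x - e a)
    have h3 := ih x
    rw [pow_succ]
    linarith

/-- `R` puts weight at least `2^{-I} / 4` on a point and on each of its neighbours, which leaves
room for perturbations without losing monotonicity. -/
lemma Rr_ge (w : Lat I → ℝ) (hw : ∀ x, 0 ≤ w x) (p : Lat I) (i : Fin I) :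
    1 / 4 * (1 / 2) ^ I * (w (p + e i) + w p + w (p - e i)) ≤ ev Rr w p := by
  classical
  rw [Rr_eq_prod, ← Finset.mul_prod_erase univ _ (Finset.mem_univ i), ev_mul, ev_qq]
  set s := (univ : Finset (Fin I)).erase i
  have hs : s.card ≤ I := by
    simpa using Finset.card_le_univ s
  have h0 : ∀ y, (1 / 2 : ℝ) ^ I * w y ≤ ev (∏ i ∈ s, qq i) w y := fun y =>
    le_trans (mul_le_mul_of_nonneg_right
      (pow_le_pow_of_le_one (by norm_num) (by norm_num) hs) (hw y)) (prod_qq_ge s w hw y)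
  have h1 := h0 (p + e i); have h2 := h0 p; have h3 := h0 (p - e i)
  have h4 : 0 ≤ (1 / 2 : ℝ) ^ I * w p := mul_nonneg (by positivity) (hw p)
  linarith

/-- The linear part of the scheme, all terms on one side. -/
def Gop (E B : Fin I → ℝ) (w : Lat I → ℝ) (p : Lat I) : ℝ :=
  4 * ev Rr w p + ∑ i, E i * ev (δ i * δ i) w (p - e i) + ∑ i, B i * ev (δ i) w p

lemma ev_δδ (i : Fin I) (w : Lat I → ℝ) (p : Lat I) :
    ev (δ i * δ i) w (p - e i) = w (p + e i) - 2 * w p + w (p - e i) := by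
  rw [ev_mul, ev_δ, ev_δ, ev_δ, sub_add_cancel]; ring

lemma Gop_sub (E B : Fin I → ℝ) (v w : Lat I → ℝ) (p : Lat I) :
    Gop E B (fun x => v x - w x) p = Gop E B v p - Gop E B w p := by
  unfold Gop
  simp only [ev_sub_fun, mul_sub, Finset.sum_sub_distrib]
  ring

lemma Gop_add (E B : Fin I → ℝ) (v w : Lat I → ℝ) (p : Lat I) :
    Gop E B (fun x => v x + w x) p = Gop E B v p + Gop E B w p := by
  unfold Gop
  simp only [ev_add_fun, mul_add, Finset.sum_add_distrib]
  ring

lemma Gop_mul (E B : Fin I → ℝ) (c : ℝ) (w : Lat I → ℝ) (p : Lat I) :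
    Gop E B (fun x => c * w x) p = c * Gop E B w p := by
  unfold Gop
  simp only [ev_mul_fun, mul_add, Finset.mul_sum]
  congr 1
  · congr 1
    · ring
    · exact Finset.sum_congr rfl fun i _ => by ring
  · exact Finset.sum_congr rfl fun i _ => by ring

lemma Gop_const (E B : Fin I → ℝ) (c : ℝ) (p : Lat I) : Gop E B (fun _ => c) p = 4 * c := by
  unfold Gop
  simp only [avg_Rr'.const, ev_δδ, ev_δ]
  simp only [sub_self, mul_zero, Finset.sum_const_zero, add_zero, add_eq_left]
  exact Finset.sum_eq_zero fun i _ => by ring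

/-- Perturbation size that keeps the scheme monotone. -/
def eta0 (I : ℕ) : ℝ := 1 / (3 * (I + 1) * 2 ^ I)

lemma eta0_pos : 0 < eta0 I := by unfold eta0; positivity

lemma eta0_le : eta0 I ≤ 1 / 3 := by
  unfold eta0
  gcongr
  have h1 : (1 : ℝ) ≤ 2 ^ I := one_le_pow₀ (by norm_num)
  have h2 : (0 : ℝ) ≤ I := by positivity
  nlinarith [mul_le_mul (by linarith : (1:ℝ) ≤ I + 1) h1 zero_le_one (by linarith)]

lemma Gop_nonneg0 (E B : Fin I → ℝ) (hE : ∀ i, |E i| ≤ eta0 I) (hB : ∀ i, |B i| ≤ eta0 I)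
    (w : Lat I → ℝ) (hw : ∀ x, 0 ≤ w x) (p : Lat I) : 0 ≤ Gop E B w p := by
  have hη := eta0_pos (I := I)
  have hR : 0 ≤ ev Rr w p := avg_Rr'.ge fun x _ => hw x
  have key : ∀ i ∈ (univ : Finset (Fin I)), -(12 * eta0 I * 2 ^ I * ev Rr w p)
      ≤ E i * ev (δ i * δ i) w (p - e i) + B i * ev (δ i) w p := by
    intro i _
    rw [ev_δδ, ev_δ]
    have h1 := Rr_ge w hw p i
    have h2 := hw (p + e i); have h3 := hw p; have h4 := hw (p - e i)
    have h5 : w (p + e i) + w p + w (p - e i) ≤ 4 * 2 ^ I * ev Rr w p := by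
      have : (1 / 4 * (1 / 2 : ℝ) ^ I) * (4 * 2 ^ I) = 1 := by
        rw [one_div_pow]; field_simp
      nlinarith [mul_le_mul_of_nonneg_left h1 (by positivity : (0 : ℝ) ≤ 4 * 2 ^ I)]
    have e1 : |E i * (w (p + e i) - 2 * w p + w (p - e i))|
        ≤ eta0 I * (2 * (w (p + e i) + w p + w (p - e i))) := by
      rw [abs_mul]
      refine mul_le_mul (hE i) ?_ (abs_nonneg _) hη.le
      rw [abs_le]; constructor <;> linarith
    have e2 : |B i * (w (p + e i) - w p)| ≤ eta0 I * (w (p + e i) + w p + w (p - e i)) := by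
      rw [abs_mul]
      refine mul_le_mul (hB i) ?_ (abs_nonneg _) hη.le
      rw [abs_le]; constructor <;> linarith
    have e3 := (abs_le.1 e1).1
    have e4 := (abs_le.1 e2).1
    nlinarith
  have h2 := Finset.card_nsmul_le_sum univ _ _ key
  rw [Finset.sum_add_distrib, card_univ, Fintype.card_fin, nsmul_eq_mul] at h2
  unfold Gop
  have h3 : (I : ℝ) * (12 * eta0 I * 2 ^ I) ≤ 4 := by
    unfold eta0
    have : (I : ℝ) * (12 * (1 / (3 * (I + 1) * 2 ^ I)) * 2 ^ I) = 4 * (I / (I + 1)) := by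
      field_simp; ring
    rw [this]
    have : (I : ℝ) / (I + 1) ≤ 1 := by
      rw [div_le_one (by positivity)]; linarith
    linarith
  nlinarith

/-- Monotonicity of the scheme: positivity of `w` within radius `rc` suffices. -/
lemma Gop_nonneg (E B : Fin I → ℝ) (hE : ∀ i, |E i| ≤ eta0 I) (hB : ∀ i, |B i| ≤ eta0 I)
    (w : Lat I → ℝ) (p : Lat I) (hw : ∀ x, ‖x - p‖ ≤ rc I → 0 ≤ w x) : 0 ≤ Gop E B w p := by
  have h1 := Gop_nonneg0 E B hE hB (fun x => max (w x) 0) (fun x => le_max_right _ _) p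
  have hI : (0 : ℝ) ≤ I := by positivity
  have hm : ∀ x, ‖x - p‖ ≤ rc I → max (w x) 0 = w x := fun x hx => max_eq_left (hw x hx)
  have hme : ∀ i, max (w (p + e i)) 0 = w (p + e i) := fun i => hm _ (by
    rw [add_sub_cancel_left, norm_e]; unfold rc; linarith)
  have hme' : ∀ i, max (w (p - e i)) 0 = w (p - e i) := fun i => hm _ (by
    rw [sub_sub_cancel_left, norm_neg, norm_e]; unfold rc; linarith)
  have hm0 : max (w p) 0 = w p := hm _ (by simpa using rc_pos.le)
  have hR : ev Rr (fun x => max (w x) 0) p = ev Rr w p :=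
    le_antisymm (avg_Rr'.mono_fun fun x hx => (hm x hx).le)
      (avg_Rr'.mono_fun fun x hx => (hm x hx).ge)
  unfold Gop at h1 ⊢
  simp only [ev_δδ, ev_δ, hme, hme', hm0, hR] at h1 ⊢
  exact h1

lemma FF_eq_Gop (E B : Fin I → Fin I → Lat I → ℝ) (Cc : Fin I → Lat I → ℝ) (u : Lat I → ℝ)
    (k : Fin I) (p : Lat I) :
    4 * ev Rr u p + FF E B Cc u k p = Gop (fun i => E k i p) (fun i => B k i p) u p + Cc k p := by
  unfold Gop FF; ring

/-! ### Discrete comparison and solvability -/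

/-- The linear part of the scheme has norm `4` on bounded functions. -/
lemma Gop_abs_le (E B : Fin I → ℝ) (hE : ∀ i, |E i| ≤ eta0 I) (hB : ∀ i, |B i| ≤ eta0 I)
    (w : Lat I → ℝ) (p : Lat I) (M : ℝ) (hw : ∀ x, |w x| ≤ M) : |Gop E B w p| ≤ 4 * M := by
  have h1 := Gop_nonneg0 E B hE hB (fun x => M - w x) (fun x => by
    have := (abs_le.1 (hw x)).2; linarith) p
  have h2 := Gop_nonneg0 E B hE hB (fun x => M + w x) (fun x => by
    have := (abs_le.1 (hw x)).1; linarith) p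
  rw [Gop_sub, Gop_const] at h1
  rw [Gop_add, Gop_const] at h2
  rw [abs_le]; constructor <;> linarith

section
variable {Ω : Set (Lat I)} {γ1 : ℝ} {E B : Fin I → Fin I → Lat I → ℝ} {Cc : Fin I → Lat I → ℝ}
  {u v : Lat I → ℝ}

/-- Discrete comparison: a function `v`, nonnegative outside `Ω` and a supersolution for both signs
of every branch of the minimum, dominates `|u|`. -/
lemma compare (hI : 0 < I) (hΩ : Ω.Finite) (hγ : 0 < γ1)
    (hE : ∀ k i p, p ∈ Ω → |E k i p| ≤ eta0 I) (hB : ∀ k i p, p ∈ Ω → |B k i p| ≤ eta0 I)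
    (hu0 : ∀ p, p ∉ Ω → u p = 0)
    (hv0 : ∀ p x, p ∈ Ω → x ∉ Ω → ‖x - p‖ ≤ rc I → 0 ≤ v x)
    (hu : ∀ p, p ∈ Ω → (4 + γ1) * u p
      = ⨅ k, (Gop (fun i => E k i p) (fun i => B k i p) u p + Cc k p))
    (hv : ∀ k p, p ∈ Ω → |Cc k p|
      ≤ (4 + γ1) * v p - Gop (fun i => E k i p) (fun i => B k i p) v p) :
    ∀ p ∈ Ω, |u p| ≤ v p := by
  have : Nonempty (Fin I) := ⟨⟨0, hI⟩⟩
  have gen : ∀ w : Lat I → ℝ, (∀ p, p ∉ Ω → w p = 0) →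
      (∀ p ∈ Ω, ∃ k, (4 + γ1) * w p
        ≤ Gop (fun i => E k i p) (fun i => B k i p) w p + |Cc k p|) → ∀ p ∈ Ω, w p ≤ v p := by
    intro w hw0 hw p0 hp0
    obtain ⟨p, hp, hmax⟩ := hΩ.exists_maximalFor (fun p => w p - v p) Ω ⟨p0, hp0⟩
    have hmax' : ∀ x ∈ Ω, w x - v x ≤ w p - v p := fun x hx => by
      rcases le_total (w x - v x) (w p - v p) with h | h
      · exact h
      · exact hmax hx h
    set m := w p - v p with hm
    by_contra hlt
    push Not at hlt
    have hm0 : 0 < m := by have := hmax' p0 hp0; linarith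
    obtain ⟨k, hk⟩ := hw p hp
    have h1 := Gop_nonneg (fun i => E k i p) (fun i => B k i p) (fun i => hE k i p hp)
      (fun i => hB k i p hp) (fun x => m - (w x - v x)) p (fun x hx => by
        by_cases hxΩ : x ∈ Ω
        · exact sub_nonneg.2 (hmax' x hxΩ)
        · have h2 := hv0 p x hp hxΩ hx
          rw [hw0 x hxΩ]; linarith)
    rw [Gop_sub _ _ (fun _ => m) (fun x => w x - v x), Gop_sub _ _ w v, Gop_const] at h1
    have h3 := hv k p hp
    have : γ1 * m ≤ 0 := by rw [hm]; rw [hm] at h1; linarith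
    nlinarith
  intro p hp
  rw [abs_le]
  constructor
  · have := gen (fun x => -u x) (fun p hp => by simp [hu0 p hp]) (fun p hp => by
      obtain ⟨k, hk⟩ := exists_eq_ciInf_of_finite
        (f := fun k => Gop (fun i => E k i p) (fun i => B k i p) u p + Cc k p)
      refine ⟨k, ?_⟩
      have h1 := hu p hp
      rw [← hk] at h1
      have h2 := Gop_mul (fun i => E k i p) (fun i => B k i p) (-1) u p
      simp only [neg_one_mul] at h2
      rw [h2]
      have := neg_abs_le (Cc k p)
      linarith) p hp
    linarith
  · refine gen u hu0 (fun p hp => ?_) p hp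
    refine ⟨⟨0, hI⟩, ?_⟩
    rw [hu p hp]
    refine (ciInf_le (Set.finite_range _).bddBelow ⟨0, hI⟩).trans ?_
    gcongr
    exact le_abs_self _

/-- Solvability of the discrete problem on a finite set: by monotonicity the fixed-point map is a
contraction with factor `4 / (4 + γ1)`. -/
lemma exists_discrete (hΩ : Ω.Finite) (hγ : 0 < γ1)
    (hE : ∀ k i p, p ∈ Ω → |E k i p| ≤ eta0 I) (hB : ∀ k i p, p ∈ Ω → |B k i p| ≤ eta0 I) :
    ∃ u : Lat I → ℝ, (∀ p, p ∉ Ω → u p = 0) ∧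
      ∀ p, p ∈ Ω → (4 + γ1) * u p
        = ⨅ k, (Gop (fun i => E k i p) (fun i => B k i p) u p + Cc k p) := by
  classical
  have : Fintype Ω := hΩ.fintype
  let ext : (Ω → ℝ) → Lat I → ℝ := fun f p => if h : p ∈ Ω then f ⟨p, h⟩ else 0
  -- Solutions are the fixed points of `T`; functions on `Ω` are extended by zero.
  let T : (Ω → ℝ) → (Ω → ℝ) := fun f p => (4 + γ1)⁻¹ *
    ⨅ k, (Gop (fun i => E k i p) (fun i => B k i p) (ext f) p + Cc k p)
  have hpos : 0 < 4 + γ1 := by linarith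
  have hT : ContractingWith (⟨4 / (4 + γ1), by positivity⟩ : NNReal) T := by
    constructor
    · change 4 / (4 + γ1) < 1
      rw [div_lt_one hpos]; linarith
    · refine LipschitzWith.of_dist_le_mul fun f g => ?_
      change dist (T f) (T g) ≤ 4 / (4 + γ1) * dist f g
      rw [dist_pi_le_iff (by positivity)]
      intro p
      rw [Real.dist_eq]
      change |(4 + γ1)⁻¹ * _ - (4 + γ1)⁻¹ * _| ≤ _
      rw [← mul_sub, abs_mul, abs_of_pos (inv_pos.2 hpos), div_mul_eq_mul_div, inv_mul_eq_div]
      gcongr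
      refine iInf_abs_sub _ _ _ (by positivity) fun k => ?_
      rw [add_sub_add_right_eq_sub, ← Gop_sub]
      refine Gop_abs_le _ _ (fun i => hE k i p p.2) (fun i => hB k i p p.2) _ _ _ fun x => ?_
      by_cases hx : x ∈ Ω
      · simp only [ext, hx, dif_pos]
        rw [← Real.dist_eq]
        exact dist_le_pi_dist f g ⟨x, hx⟩
      · simp [ext, hx]
  refine ⟨ext (hT.fixedPoint T), fun p hp => by simp [ext, hp], fun p hp => ?_⟩
  have h1 := congrFun hT.fixedPoint_isFixedPt ⟨p, hp⟩
  have h2 : ext (hT.fixedPoint T) p = T (hT.fixedPoint T) ⟨p, hp⟩ := by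
    rw [h1]; simp [ext, hp]
  rw [h2]
  change (4 + γ1) * ((4 + γ1)⁻¹ * _) = _
  rw [mul_inv_cancel_left₀ hpos.ne']

end

/-! ### Exponentials on the lattice -/

lemma cosh_ge (x : ℝ) : 1 + x ^ 2 / 2 ≤ Real.cosh x := by
  have h1 : Real.cosh x = 1 + 2 * Real.sinh (x / 2) ^ 2 := by
    have h2 := Real.cosh_two_mul (x / 2)
    have h3 := Real.cosh_sq (x / 2)
    rw [mul_div_cancel₀ _ (two_ne_zero)] at h2
    rw [h2, h3]; ring
  have h2 : (x / 2) ^ 2 ≤ Real.sinh (x / 2) ^ 2 := by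
    rcases le_total 0 (x / 2) with h | h
    · exact pow_le_pow_left₀ h (Real.self_le_sinh_iff.2 h) 2
    · have h3 := Real.sinh_le_self_iff.2 h
      nlinarith
  rw [h1]; nlinarith

lemma prod_ge (s : Finset (Fin I)) (f : Fin I → ℝ) (hf : ∀ i, 0 ≤ f i) :
    1 + ∑ i ∈ s, f i ≤ ∏ i ∈ s, (1 + f i) := by
  classical
  induction s using Finset.induction_on with
  | empty => simp
  | insert a s ha ih =>
    rw [Finset.prod_insert ha, Finset.sum_insert ha]
    have h0 := Finset.sum_nonneg (s := s) (fun i _ => hf i)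
    nlinarith [hf a, mul_nonneg (hf a) h0]

/-- Exponential of a linear function on the lattice: a common eigenfunction of all shifts. -/
def expo (α : Fin I → ℝ) (p : Lat I) : ℝ := Real.exp (∑ i, α i * p i)

lemma expo_shift (α : Fin I → ℝ) (p : Lat I) (i : Fin I) :
    expo α (p + e i) = Real.exp (α i) * expo α p := by
  unfold expo
  rw [← Real.exp_add]
  congr 1
  simp only [Pi.add_apply, Int.cast_add, mul_add, Finset.sum_add_distrib]
  rw [add_comm]
  congr 1
  rw [Finset.sum_eq_single i]
  · simp
  · intro j _ hj; simp [hj]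
  · simp

lemma expo_shift' (α : Fin I → ℝ) (p : Lat I) (i : Fin I) :
    expo α (p - e i) = Real.exp (-α i) * expo α p := by
  have := expo_shift α (p - e i) i
  rw [sub_add_cancel] at this
  rw [this, ← mul_assoc, ← Real.exp_add]; simp

lemma expo_prod (α : Fin I → ℝ) (s : Finset (Fin I)) (p : Lat I) :
    ev (∏ i ∈ s, qq i) (expo α) p = (∏ i ∈ s, (1 + (Real.cosh (α i) - 1) / 2)) * expo α p := by
  classical
  induction s using Finset.induction_on generalizing p with
  | empty => simp
  | insert a s ha ih =>
    rw [Finset.prod_insert ha, Finset.prod_insert ha, ev_mul, ev_qq, ih, ih, ih, expo_shift,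
      expo_shift', Real.cosh_eq]
    ring

lemma expo_Gop (E B α : Fin I → ℝ) (p : Lat I) : Gop E B (expo α) p
    = (4 * ∏ i, (1 + (Real.cosh (α i) - 1) / 2) + ∑ i, E i * (2 * (Real.cosh (α i) - 1))
      + ∑ i, B i * (Real.exp (α i) - 1)) * expo α p := by
  unfold Gop
  rw [Rr_eq_prod, expo_prod]
  simp only [ev_δδ, ev_δ, expo_shift, expo_shift', add_mul, Finset.sum_mul]
  congr 1
  · congr 1
    · ring
    · refine Finset.sum_congr rfl fun i _ => ?_
      rw [Real.cosh_eq]; ring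
  · refine Finset.sum_congr rfl fun i _ => ?_
    ring

lemma expo_Gop_ge (E B α : Fin I → ℝ) (hE : ∀ i, |E i| ≤ 1 / 2) (hα : ∀ i, |α i| ≤ 1) (p : Lat I) :
    (4 + (∑ i, α i ^ 2) / 2 - 2 * ∑ i, |B i| * |α i|) * expo α p ≤ Gop E B (expo α) p := by
  rw [expo_Gop]
  have h0 : 0 ≤ expo α p := (Real.exp_pos _).le
  gcongr
  have hc : ∀ i, 0 ≤ (Real.cosh (α i) - 1) / 2 := fun i => by
    have := Real.one_le_cosh (α i); linarith
  have h1 := prod_ge univ _ hc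
  have h2 : -∑ i, (Real.cosh (α i) - 1) ≤ ∑ i, E i * (2 * (Real.cosh (α i) - 1)) := by
    rw [← Finset.sum_neg_distrib]
    refine Finset.sum_le_sum fun i _ => ?_
    have := (abs_le.1 (hE i)).1
    nlinarith [hc i]
  have h3 : -∑ i, 2 * (|B i| * |α i|) ≤ ∑ i, B i * (Real.exp (α i) - 1) := by
    rw [← Finset.sum_neg_distrib]
    refine Finset.sum_le_sum fun i _ => ?_
    have := Real.abs_exp_sub_one_le (hα i)
    have h4 := neg_abs_le (B i * (Real.exp (α i) - 1))
    rw [abs_mul] at h4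
    nlinarith [abs_nonneg (B i), mul_le_mul_of_nonneg_left this (abs_nonneg (B i))]
  have h4 : (∑ i, α i ^ 2) / 2 ≤ ∑ i, (Real.cosh (α i) - 1) := by
    rw [Finset.sum_div]
    exact Finset.sum_le_sum fun i _ => by have := cosh_ge (α i); linarith
  have h5 : ∑ i, (Real.cosh (α i) - 1) / 2 = (∑ i, (Real.cosh (α i) - 1)) / 2 :=
    (Finset.sum_div _ _ _).symm
  rw [h5] at h1
  rw [← Finset.mul_sum] at h3
  linarith

/-! ### Coefficients and geometry of the mesh -/

/-- Data of the equation `γ φ = min_k (∑ (s_i² + e_{k,i}) ∂²_{ii} φ + ∑ b_{k,i} ∂_i φ + c_k)` on the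
ball of radius `R`, with bounded Lipschitz coefficients. The perturbations `e` are small relative to
`s_i²`: `e1` lets the Schauder estimate absorb them, `e2` makes the scheme monotone. -/
structure Coef (R Λ γ : ℝ) (s : Fin I → ℝ) (ec bc : Fin I → Fin I → Euc I → ℝ)
    (cc : Fin I → Euc I → ℝ) : Prop where
  hI : 0 < I
  hR : 0 < R
  hΛ : 1 ≤ Λ
  hγ : 0 < γ
  hs : ∀ i, 0 < s i
  e1 : ∀ k i x, ‖x‖ < R → |ec k i x| ≤ eps0 I * s i ^ 2
  e2 : ∀ k i x, ‖x‖ < R → |ec k i x| ≤ eta0 I * s i ^ 2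
  el : ∀ k i x y, ‖x‖ < R → ‖y‖ < R → |ec k i x - ec k i y| ≤ Λ * ‖x - y‖
  bb : ∀ k i x, ‖x‖ < R → |bc k i x| ≤ Λ
  bl : ∀ k i x y, ‖x‖ < R → ‖y‖ < R → |bc k i x - bc k i y| ≤ Λ * ‖x - y‖
  cb : ∀ k x, ‖x‖ < R → |cc k x| ≤ Λ
  cl : ∀ k x y, ‖x‖ < R → ‖y‖ < R → |cc k x - cc k y| ≤ Λ * ‖x - y‖

/-- The mesh point with lattice coordinates `p`. Scaling coordinate `i` by `s_i` turns `∑ s_i²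
∂²_{ii}` into the lattice Laplacian. -/
def pt (s : Fin I → ℝ) (h : ℝ) (p : Lat I) : Euc I := WithLp.toLp 2 (fun i => h * s i * p i)

@[simp] lemma pt_apply (s : Fin I → ℝ) (h : ℝ) (p : Lat I) (i : Fin I) :
    pt s h p i = h * s i * p i := rfl

/-- `h * ks s` is a Lipschitz constant of the embedding `pt s h`, from the sup norm to the Euclidean
norm. -/
def ks (s : Fin I → ℝ) : ℝ := ∑ i, s i + 1

/-- The signed distance to the sphere of radius `R`, in units in which it is `1`-Lipschitz on the
lattice. -/
def tt (R : ℝ) (s : Fin I → ℝ) (h : ℝ) (p : Lat I) : ℝ := (R - ‖pt s h p‖) / (ks s * h)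

lemma norm_le_sum (x : Euc I) : ‖x‖ ≤ ∑ i, |x i| := by
  have : x = ∑ i, EuclideanSpace.single i (x i) := by
    ext j
    simp [Pi.single_apply]
  conv_lhs => rw [this]
  refine (norm_sum_le _ _).trans (le_of_eq ?_)
  simp

lemma ks_pos {s : Fin I → ℝ} (hs : ∀ i, 0 < s i) : 1 ≤ ks s := by
  have := Finset.sum_nonneg (s := univ) (fun i _ => (hs i).le)
  unfold ks; linarith

lemma le_ks {s : Fin I → ℝ} (hs : ∀ i, 0 < s i) (i : Fin I) : s i ≤ ks s := by
  have := Finset.single_le_sum (s := univ) (f := s) (fun i _ => (hs i).le) (Finset.mem_univ i)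
  unfold ks; linarith

lemma pt_lip {s : Fin I → ℝ} (hs : ∀ i, 0 < s i) {h : ℝ} (hh : 0 < h) (p q : Lat I) :
    ‖pt s h p - pt s h q‖ ≤ ks s * h * ‖p - q‖ := by
  refine (norm_le_sum _).trans ?_
  calc ∑ i, |(pt s h p - pt s h q) i| ≤ ∑ i, s i * (h * ‖p - q‖) := by
        refine Finset.sum_le_sum fun i _ => ?_
        have h1 : |((p i : ℝ) - q i)| ≤ ‖p - q‖ := by
          have := norm_le_pi_norm (p - q) i
          rw [Pi.sub_apply, Int.norm_eq_abs] at this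
          exact_mod_cast this
        have : (pt s h p - pt s h q) i = h * s i * (p i - q i) := by
          simp; ring
        rw [this, abs_mul, abs_of_pos (mul_pos hh (hs i))]
        have := hs i
        calc h * s i * |(p i : ℝ) - q i| ≤ h * s i * ‖p - q‖ := by gcongr
          _ = _ := by ring
    _ = (∑ i, s i) * (h * ‖p - q‖) := by rw [Finset.sum_mul]
    _ ≤ ks s * (h * ‖p - q‖) := by
      gcongr; unfold ks; linarith
    _ = _ := by ring

lemma tt_pos {R : ℝ} {s : Fin I → ℝ} (hs : ∀ i, 0 < s i) {h : ℝ} (hh : 0 < h) {p : Lat I} :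
    0 < tt R s h p ↔ ‖pt s h p‖ < R := by
  have := ks_pos hs
  unfold tt
  rw [div_pos_iff_of_pos_right (by positivity)]
  exact sub_pos

lemma tt_lip {R : ℝ} {s : Fin I → ℝ} (hs : ∀ i, 0 < s i) {h : ℝ} (hh : 0 < h) (p q : Lat I) :
    |tt R s h p - tt R s h q| ≤ ‖p - q‖ := by
  have := ks_pos hs
  have hk : 0 < ks s * h := by positivity
  unfold tt
  rw [← sub_div, abs_div, abs_of_pos hk, div_le_iff₀ hk]
  have h1 := abs_norm_sub_norm_le (pt s h p) (pt s h q)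
  have h2 := pt_lip hs hh p q
  rw [sub_sub_sub_cancel_left, abs_sub_comm]
  linarith

lemma Om_finite {R : ℝ} {s : Fin I → ℝ} (hs : ∀ i, 0 < s i) {h : ℝ} (hh : 0 < h) :
    {p | 0 < tt R s h p}.Finite := by
  refine (Set.finite_Icc (fun i => -⌈R / (h * s i)⌉ : Lat I) (fun i => ⌈R / (h * s i)⌉)).subset ?_
  intro p hp
  have hp' : ‖pt s h p‖ < R := (tt_pos hs hh).1 hp
  have key : ∀ i, |(p i : ℝ)| ≤ ⌈R / (h * s i)⌉ := fun i => by
    have h1 := (EuclideanSpace.norm_eq (pt s h p)) ▸ PiLp.norm_apply_le (pt s h p) i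
    have h2 := PiLp.norm_apply_le (pt s h p) i
    rw [pt_apply, Real.norm_eq_abs, abs_mul, abs_of_pos (mul_pos hh (hs i))] at h2
    refine le_trans ?_ (Int.le_ceil _)
    rw [le_div_iff₀ (mul_pos hh (hs i)), mul_comm]
    linarith
  rw [Set.mem_Icc]
  constructor
  · intro i
    have := (abs_le.1 (key i)).1
    exact_mod_cast this
  · intro i
    have := (abs_le.1 (key i)).2
    exact_mod_cast this

lemma exists_unit (hI : 0 < I) (x : Euc I) :
    ∃ ν : Euc I, ∑ i, ν i ^ 2 = 1 ∧ ∑ i, ν i * x i = ‖x‖ := by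
  by_cases hx : x = 0
  · refine ⟨EuclideanSpace.single ⟨0, hI⟩ 1, ?_, by simp [hx]⟩
    have := EuclideanSpace.real_norm_sq_eq (EuclideanSpace.single (⟨0, hI⟩ : Fin I) (1 : ℝ))
    rw [← this]; simp
  · have h1 := EuclideanSpace.real_norm_sq_eq x
    have h2 : ‖x‖ ≠ 0 := norm_ne_zero_iff.2 hx
    refine ⟨‖x‖⁻¹ • x, ?_, ?_⟩
    · simp only [PiLp.smul_apply, smul_eq_mul, mul_pow, ← Finset.mul_sum]
      rw [← h1]; field_simp
    · simp only [PiLp.smul_apply, smul_eq_mul, mul_assoc, ← Finset.mul_sum, ← pow_two]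
      rw [← h1]; field_simp

lemma unit_le {ν : Euc I} (hν : ∑ i, ν i ^ 2 = 1) (x : Euc I) : |∑ i, ν i * x i| ≤ ‖x‖ := by
  have h1 : ‖ν‖ = 1 := by
    rw [EuclideanSpace.norm_eq]; simp [hν]
  have := abs_real_inner_le_norm ν x
  rw [h1, one_mul, PiLp.inner_apply] at this
  simpa [mul_comm] using this

lemma unit_abs {ν : Euc I} (hν : ∑ i, ν i ^ 2 = 1) (i : Fin I) : |ν i| ≤ 1 := by
  have := Finset.single_le_sum (s := univ) (f := fun i => ν i ^ 2) (fun i _ => sq_nonneg _)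
    (Finset.mem_univ i)
  rw [hν] at this
  exact (sq_le_one_iff_abs_le_one _).1 this

/-! ### Boundary barrier and discrete solutions -/

/-- A common bound for all `1 / s_i` and `1 / s_i²`. -/
def Sg (s : Fin I → ℝ) : ℝ := ∑ i, (1 / s i + 1 / s i ^ 2) + 1

lemma Sg_pos {s : Fin I → ℝ} (hs : ∀ i, 0 < s i) : 1 ≤ Sg s := by
  have := Finset.sum_nonneg (s := univ) (f := fun i => 1 / s i + 1 / s i ^ 2)
    (fun i _ => by have := hs i; positivity)
  unfold Sg; linarith

lemma le_Sg {s : Fin I → ℝ} (hs : ∀ i, 0 < s i) (i : Fin I) :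
    1 / s i ≤ Sg s ∧ 1 / s i ^ 2 ≤ Sg s := by
  have := Finset.single_le_sum (s := univ) (f := fun i => 1 / s i + 1 / s i ^ 2)
    (fun i _ => by have := hs i; positivity) (Finset.mem_univ i)
  have h0 := hs i
  have h1 : 0 < 1 / s i := by positivity
  have h2 : 0 < 1 / s i ^ 2 := by positivity

  unfold Sg; constructor <;> linarith

/-- The second-order perturbation as a lattice coefficient. -/
def mE (s : Fin I → ℝ) (h : ℝ) (ec : Fin I → Fin I → Euc I → ℝ) (k i : Fin I) (p : Lat I) : ℝ :=
  ec k i (pt s h p) / s i ^ 2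

/-- The first-order coefficient on the mesh, rescaled by one power of `h`. -/
def mB (s : Fin I → ℝ) (h : ℝ) (bc : Fin I → Fin I → Euc I → ℝ) (k i : Fin I) (p : Lat I) : ℝ :=
  h * bc k i (pt s h p) / s i

/-- The zeroth-order term on the mesh, rescaled by `h²`. -/
def mC (s : Fin I → ℝ) (h : ℝ) (cc : Fin I → Euc I → ℝ) (k : Fin I) (p : Lat I) : ℝ :=
  h ^ 2 * cc k (pt s h p)

section
variable {R Λ γ : ℝ} {s : Fin I → ℝ} {ec bc : Fin I → Fin I → Euc I → ℝ} {cc : Fin I → Euc I → ℝ}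

/-- The slope of the exponential barrier. -/
def slp (Λ : ℝ) (s : Fin I → ℝ) : ℝ := 4 * Sg s * I * Λ + 2 * Sg s + 1

lemma Coef.θpos (D : Coef R Λ γ s ec bc cc) : 0 < slp Λ s := by
  have h1 := Sg_pos D.hs
  have h2 := D.hΛ
  have : (0:ℝ) ≤ I := by positivity
  unfold slp; positivity

lemma Coef.mE_le (D : Coef R Λ γ s ec bc cc) {h c : ℝ} {k i : Fin I} {p : Lat I}
    (hh : |ec k i (pt s h p)| ≤ c * s i ^ 2) : |mE s h ec k i p| ≤ c := by
  have := D.hs i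
  unfold mE
  rw [abs_div, abs_of_pos (show 0 < s i ^ 2 by positivity), div_le_iff₀ (by positivity)]
  exact hh

lemma Coef.mB_le (D : Coef R Λ γ s ec bc cc) {h : ℝ} (hh : 0 < h) {k i : Fin I} {p : Lat I}
    (hp : 0 < tt R s h p) : |mB s h bc k i p| ≤ h * Λ * Sg s := by
  have h1 := D.hs i
  have h2 := D.bb k i _ ((tt_pos D.hs hh).1 hp)
  have h3 := (le_Sg D.hs i).1
  have h4 := Sg_pos D.hs
  have h5 := D.hΛ
  unfold mB
  rw [mul_div_assoc, abs_mul, abs_of_pos hh, mul_assoc, abs_div, abs_of_pos h1, div_eq_mul_one_div]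
  have : 0 < 1 / s i := by positivity
  gcongr

/-- The first-order terms are dominated along an exponential of slope `slp`, with a surplus of `h²`.
-/
lemma Coef.slope (D : Coef R Λ γ s ec bc cc) {h : ℝ} (hh : 0 < h) {ν : Euc I}
    (hν : ∑ i, ν i ^ 2 = 1) {k : Fin I} {p : Lat I} (hp : 0 < tt R s h p) :
    h ^ 2 ≤ (∑ i, (slp Λ s * h * ν i * s i) ^ 2) / 2
      - 2 * ∑ i, |mB s h bc k i p| * |slp Λ s * h * ν i * s i| := by
  have hθ := D.θpos
  have hS := Sg_pos D.hs
  have hΛ := D.hΛ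
  have a1 : (slp Λ s * h) ^ 2 / Sg s ≤ ∑ i, (slp Λ s * h * ν i * s i) ^ 2 := by
    calc (slp Λ s * h) ^ 2 / Sg s = ∑ i, (slp Λ s * h) ^ 2 * ν i ^ 2 * (1 / Sg s) := by
          rw [← Finset.sum_mul, ← Finset.mul_sum, hν]; ring
      _ ≤ ∑ i, (slp Λ s * h) ^ 2 * ν i ^ 2 * s i ^ 2 := by
          refine Finset.sum_le_sum fun i _ => ?_
          have := (le_Sg D.hs i).2
          have hsi := D.hs i
          have : 1 / Sg s ≤ s i ^ 2 := by
            rw [div_le_iff₀ (by positivity)] at this ⊢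
            linarith
          gcongr
      _ = _ := Finset.sum_congr rfl fun i _ => by ring
  have a2 : ∑ i, |mB s h bc k i p| * |slp Λ s * h * ν i * s i| ≤ I * (Λ * slp Λ s * h ^ 2) := by
    calc _ ≤ ∑ i : Fin I, Λ * slp Λ s * h ^ 2 := by
          refine Finset.sum_le_sum fun i _ => ?_
          have hsi := D.hs i
          have b1 : |mB s h bc k i p| ≤ h * Λ / s i := by
            unfold mB
            rw [abs_div, abs_mul, abs_of_pos hh, abs_of_pos hsi]
            have := D.bb k i _ ((tt_pos D.hs hh).1 hp)
            gcongr
          have b2 : |slp Λ s * h * ν i * s i| ≤ slp Λ s * h * s i := by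
            rw [abs_mul, abs_mul, abs_of_pos hsi, abs_of_pos (mul_pos hθ hh)]
            have := unit_abs hν i
            have : slp Λ s * h * |ν i| ≤ slp Λ s * h * 1 := by gcongr
            calc _ ≤ slp Λ s * h * 1 * s i := by gcongr
              _ = _ := by ring
          calc _ ≤ (h * Λ / s i) * (slp Λ s * h * s i) := by gcongr
            _ = _ := by field_simp
      _ = _ := by simp
  have a3 : h ^ 2 ≤ (slp Λ s * h) ^ 2 / Sg s / 2 - 2 * (I * (Λ * slp Λ s * h ^ 2)) := by
    have b1 : (1:ℝ) ≤ slp Λ s ^ 2 / Sg s / 2 - 2 * I * Λ * slp Λ s := by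
      have : slp Λ s ^ 2 / Sg s / 2 - 2 * I * Λ * slp Λ s
          = slp Λ s * (slp Λ s - 4 * Sg s * I * Λ) / (2 * Sg s) := by
        field_simp; ring
      rw [this, le_div_iff₀ (by positivity)]
      have e1 : slp Λ s - 4 * Sg s * I * Λ = 2 * Sg s + 1 := by unfold slp; ring
      have e2 : 1 ≤ slp Λ s := by unfold slp; nlinarith [show 0 ≤ 4 * Sg s * I * Λ by positivity]
      rw [e1]; nlinarith
    calc h ^ 2 = h ^ 2 * 1 := by ring
      _ ≤ h ^ 2 * (slp Λ s ^ 2 / Sg s / 2 - 2 * I * Λ * slp Λ s) := by gcongr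
      _ = _ := by ring
  linarith

/-- Linear growth of the discrete solution off the boundary. The supersolution is `K (1 - exp (θ (ν
· x - R')))` with `ν = x₀ / |x₀|` for the point `x₀` under consideration: by convexity of the ball
it is nonnegative on the slightly larger ball of radius `R'`, and it is of the order of the distance
to the sphere at `x₀`. -/
lemma Coef.barrier (D : Coef R Λ γ s ec bc cc) {h : ℝ} (hh : 0 < h) (h1 : h ≤ 1)
    (hθ1 : slp Λ s * h * ks s ≤ 1) (hη : h * Λ * Sg s ≤ eta0 I) {u : Lat I → ℝ}
    (hu0 : ∀ p, ¬ 0 < tt R s h p → u p = 0)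
    (hu : ∀ p, 0 < tt R s h p → (4 + γ * h ^ 2) * u p = ⨅ k, (Gop (fun i => mE s h ec k i p)
      (fun i => mB s h bc k i p) u p + mC s h cc k p)) (p : Lat I) (hp : 0 < tt R s h p) :
    |u p| ≤ Λ * Real.exp (2 * slp Λ s * (R + ks s * rc I)) * slp Λ s * ks s * h
      * (tt R s h p + rc I) := by
  set θ := slp Λ s with hθdef
  have hθ : 0 < θ := D.θpos
  have hk := ks_pos D.hs
  have hr : (0:ℝ) ≤ rc I := by unfold rc; positivity
  have hΛ := D.hΛ
  have hR := D.hR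
  set R1 := R + ks s * rc I with hR1
  set R' := R + ks s * h * rc I with hR'
  have hR'1 : R' ≤ R1 := by
    rw [hR', hR1]
    have : ks s * h * rc I ≤ ks s * 1 * rc I := by gcongr
    linarith
  set K := Λ * Real.exp (2 * θ * R1) with hK
  have hKp : 0 < K := by positivity
  obtain ⟨ν, hν, hνp⟩ := exists_unit D.hI (pt s h p)
  set α : Fin I → ℝ := fun i => θ * h * ν i * s i with hα
  have hex : ∀ q : Lat I, expo α q = Real.exp (θ * ∑ i, ν i * pt s h q i) := fun q => by
    unfold expo
    congr 1
    rw [Finset.mul_sum]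
    refine Finset.sum_congr rfl fun i _ => ?_
    rw [pt_apply, hα]; ring
  set c := Real.exp (-θ * R') with hc
  have hcp : 0 < c := Real.exp_pos _
  set v : Lat I → ℝ := fun q => K - K * c * expo α q with hv
  have hvn : ∀ p x : Lat I, 0 < tt R s h p → ‖x - p‖ ≤ rc I → 0 ≤ v x := by
    intro p x hp hx
    have e1 := (abs_le.1 (unit_le hν (pt s h x))).2
    have e2 := pt_lip D.hs hh x p
    have e3 := (tt_pos D.hs hh).1 hp
    have e4 := norm_sub_norm_le (pt s h x) (pt s h p)
    have e5 : ks s * h * ‖x - p‖ ≤ ks s * h * rc I := by gcongr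
    have e6 : c * expo α x ≤ 1 := by
      rw [hex, hc, ← Real.exp_add]
      apply Real.exp_le_one_iff.2
      have : ∑ i, ν i * pt s h x i ≤ R' := by rw [hR']; linarith
      nlinarith
    have : 0 ≤ K * (1 - c * expo α x) := mul_nonneg hKp.le (by linarith)
    rw [hv]; simp only; linarith
  have hE : ∀ k i p, 0 < tt R s h p → |mE s h ec k i p| ≤ eta0 I := fun k i p hp =>
    D.mE_le (D.e2 k i _ ((tt_pos D.hs hh).1 hp))
  have main := compare (Ω := {p | 0 < tt R s h p}) (v := v) D.hI (Om_finite D.hs hh)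
    (show 0 < γ * h ^ 2 by have := D.hγ; positivity) hE
    (fun k i p hp => (D.mB_le hh hp).trans hη) hu0
    (fun p x hp _ hx => hvn p x hp hx) hu ?_ p hp
  · refine main.trans ?_
    have e1 : v p = K * (1 - Real.exp (θ * (‖pt s h p‖ - R'))) := by
      rw [hv]; simp only
      rw [hex, hνp, mul_assoc, hc, ← Real.exp_add]
      rw [show -θ * R' + θ * ‖pt s h p‖ = θ * (‖pt s h p‖ - R') by ring]; ring
    have e2 := Real.add_one_le_exp (θ * (‖pt s h p‖ - R'))
    rw [e1]
    have e3 : R' - ‖pt s h p‖ = ks s * h * (tt R s h p + rc I) := by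
      rw [hR']; unfold tt; field_simp; ring
    calc K * (1 - Real.exp (θ * (‖pt s h p‖ - R'))) ≤ K * (θ * (R' - ‖pt s h p‖)) := by
          gcongr; linarith
      _ = _ := by rw [e3]; ring
  · intro k p hp
    have hpR := (tt_pos D.hs hh).1 (show 0 < tt R s h p from hp)
    have g1 : Gop (fun i => mE s h ec k i p) (fun i => mB s h bc k i p) v p
        = 4 * K - K * c * Gop (fun i => mE s h ec k i p) (fun i => mB s h bc k i p) (expo α) p := by
      rw [hv, Gop_sub, Gop_const, Gop_mul]
    have g2 := expo_Gop_ge (fun i => mE s h ec k i p) (fun i => mB s h bc k i p) α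
      (fun i => (hE k i p hp).trans (eta0_le.trans (by norm_num))) (fun i => by
        rw [hα]; simp only
        have := le_ks D.hs i
        have hsi := D.hs i
        have := unit_abs hν i
        rw [abs_mul, abs_mul, abs_of_pos hsi, abs_of_pos (mul_pos hθ hh)]
        calc θ * h * |ν i| * s i ≤ θ * h * 1 * ks s := by gcongr
          _ ≤ 1 := by linarith) p
    have g3 : h ^ 2 ≤ (∑ i, α i ^ 2) / 2 - 2 * ∑ i, |mB s h bc k i p| * |α i| := D.slope hh hν hp
    have g4 : Real.exp (-θ * R1) ≤ expo α p := by
      rw [hex]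
      apply Real.exp_le_exp.2
      have := (abs_le.1 (unit_le hν (pt s h p))).1
      have : -R1 ≤ ∑ i, ν i * pt s h p i := by
        have : 0 ≤ ks s * rc I := by positivity
        rw [hR1]; linarith
      nlinarith
    have g5 : Real.exp (-θ * R1) ≤ c := by
      apply Real.exp_le_exp.2; nlinarith
    have g6 : Λ ≤ K * (c * expo α p) := by
      calc Λ = K * (Real.exp (-θ * R1) * Real.exp (-θ * R1)) := by
            rw [hK, mul_assoc, ← Real.exp_add, ← Real.exp_add]
            rw [show 2 * θ * R1 + (-θ * R1 + -θ * R1) = 0 by ring]; simp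
        _ ≤ _ := by gcongr
    have g7 : 0 ≤ v p := hvn p p hp (by rw [sub_self, norm_zero]; exact hr)
    have g8 : |mC s h cc k p| ≤ h ^ 2 * Λ := by
      unfold mC
      rw [abs_mul, abs_of_pos (show 0 < h ^ 2 by positivity)]
      have := D.cb k _ hpR
      gcongr
    have ep : 0 < expo α p := Real.exp_pos _
    have g9 : (4 + h ^ 2) * expo α p ≤ Gop (fun i => mE s h ec k i p) (fun i => mB s h bc k i p)
        (expo α) p := by
      refine le_trans ?_ g2
      gcongr; linarith
    have g10 := mul_le_mul_of_nonneg_left g9 (mul_pos hKp hcp).le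
    have g11 : 0 ≤ γ * h ^ 2 * v p := by have := D.hγ; positivity
    have g12 : h ^ 2 * Λ ≤ h ^ 2 * (K * (c * expo α p)) := by gcongr
    have g13 : v p = K - K * c * expo α p := rfl
    rw [g1]
    nlinarith

/-- For all small meshes the discrete problem is solvable and is an instance of the abstract scheme
with a mesh-independent constant. -/
lemma Coef.scheme (D : Coef R Λ γ s ec bc cc) : ∃ L h0 : ℝ, 1 ≤ L ∧ 0 < h0 ∧ ∀ h, 0 < h → h ≤ h0 →
    ∃ u : Lat I → ℝ, (∀ p, ¬ 0 < tt R s h p → u p = 0) ∧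
      Sch L h (eps0 I) (γ * h ^ 2) (tt R s h) u (mE s h ec) (mB s h bc) (mC s h cc) := by
  have hθ : 0 < slp Λ s := D.θpos
  have hk := ks_pos D.hs
  have hS := Sg_pos D.hs
  have hr : (0:ℝ) ≤ rc I := by unfold rc; positivity
  have hΛ := D.hΛ
  have hR := D.hR
  have hγ := D.hγ
  have hη := eta0_pos (I := I)
  set K := Λ * Real.exp (2 * slp Λ s * (R + ks s * rc I)) * slp Λ s * ks s with hK
  have hKp : 0 < K := by positivity
  refine ⟨1 + R + K * (rc I + 1) + γ + Λ * Sg s * ks s + Λ * Sg s + Λ * ks s,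
    min 1 (min (1 / (slp Λ s * ks s)) (eta0 I / (Λ * Sg s))), ?_, by positivity, ?_⟩
  · have : 0 ≤ R + K * (rc I + 1) + γ + Λ * Sg s * ks s + Λ * Sg s + Λ * ks s := by positivity
    linarith
  intro h hh hle
  set L := 1 + R + K * (rc I + 1) + γ + Λ * Sg s * ks s + Λ * Sg s + Λ * ks s with hL
  have n1 : 0 ≤ K * (rc I + 1) := by positivity
  have n2 : 0 ≤ Λ * Sg s * ks s := by positivity
  have n3 : 0 ≤ Λ * Sg s := by positivity
  have n4 : 0 ≤ Λ * ks s := by positivity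
  rw [le_min_iff, le_min_iff, le_div_iff₀ (by positivity), le_div_iff₀ (by positivity)] at hle
  obtain ⟨l1, l2, l3⟩ := hle
  obtain ⟨u, hu0, hu⟩ := exists_discrete (Ω := {p | 0 < tt R s h p}) (E := mE s h ec)
    (B := mB s h bc) (Cc := mC s h cc) (Om_finite D.hs hh)
    (show 0 < γ * h ^ 2 by positivity)
    (fun k i p hp => D.mE_le (D.e2 k i _ ((tt_pos D.hs hh).1 hp)))
    (fun k i p hp => (D.mB_le hh hp).trans (by linarith))
  have hne : Nonempty (Fin I) := ⟨⟨0, D.hI⟩⟩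
  refine ⟨u, hu0, ⟨hh, ?_, eps0_pos.le, fun p q => tt_lip D.hs hh p q, ?_, ?_, ?_, ?_, ?_, ?_, ?_,
    ?_, ?_⟩⟩
  · linarith
  · intro p
    unfold tt
    have : h * ((R - ‖pt s h p‖) / (ks s * h)) = (R - ‖pt s h p‖) / ks s := by field_simp
    rw [this, div_le_iff₀ (by linarith)]
    have := norm_nonneg (pt s h p)
    nlinarith
  · intro p
    by_cases hp : 0 < tt R s h p
    · have := D.barrier hh l1 (by linarith) (by linarith) hu0 hu p hp
      refine this.trans ?_
      rw [max_eq_left hp.le, ← hK]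
      calc K * h * (tt R s h p + rc I) ≤ K * h * ((rc I + 1) * (tt R s h p + 1)) := by
            gcongr; nlinarith
        _ = (K * (rc I + 1)) * h * (tt R s h p + 1) := by ring
        _ ≤ L * h * (tt R s h p + 1) := by gcongr; linarith
    · rw [hu0 p hp, abs_zero]
      have : 0 ≤ max (tt R s h p) 0 := le_max_right _ _
      have : 0 ≤ L := by linarith
      positivity
  · rw [abs_of_pos (by positivity)]; gcongr; linarith
  · intro p hp
    have e1 := hu p hp
    have e2 : ∀ k, Gop (fun i => mE s h ec k i p) (fun i => mB s h bc k i p) u p + mC s h cc k p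
        = 4 * ev Rr u p + FF (mE s h ec) (mB s h bc) (mC s h cc) u k p := fun k =>
      (FF_eq_Gop _ _ _ u k p).symm
    simp only [e2] at e1
    rw [← add_ciInf (Finite.bddBelow_range _)] at e1
    rw [ev_sub, ev_one]
    linarith
  · exact fun k i p hp => D.mE_le (D.e1 k i _ ((tt_pos D.hs hh).1 hp))
  · intro k i p q hp hq
    have hsi := D.hs i
    have e1 := D.el k i _ _ ((tt_pos D.hs hh).1 hp) ((tt_pos D.hs hh).1 hq)
    have e2 := pt_lip D.hs hh p q
    have e3 := (le_Sg D.hs i).2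
    unfold mE
    rw [← sub_div, abs_div, abs_of_pos (show 0 < s i ^ 2 by positivity), div_eq_mul_one_div]
    calc _ ≤ (Λ * (ks s * h * ‖p - q‖)) * Sg s := by
          have : 0 < 1 / s i ^ 2 := by positivity
          gcongr; exact e1.trans (by gcongr)
      _ = (Λ * Sg s * ks s) * h * ‖p - q‖ := by ring
      _ ≤ _ := by gcongr; linarith
  · intro k i p hp
    refine (D.mB_le hh hp).trans ?_
    calc h * Λ * Sg s = (Λ * Sg s) * h := by ring
      _ ≤ _ := by gcongr; linarith
  · intro k i p q hp hq
    have hsi := D.hs i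
    have e1 := D.bl k i _ _ ((tt_pos D.hs hh).1 hp) ((tt_pos D.hs hh).1 hq)
    have e2 := pt_lip D.hs hh p q
    have e3 := (le_Sg D.hs i).1
    unfold mB
    rw [← sub_div, ← mul_sub, abs_div, abs_of_pos hsi, div_eq_mul_one_div, abs_mul, abs_of_pos hh]
    calc _ ≤ h * (Λ * (ks s * h * ‖p - q‖)) * Sg s := by
          have : 0 < 1 / s i := by positivity
          gcongr; exact e1.trans (by gcongr)
      _ = (Λ * Sg s * ks s) * h ^ 2 * ‖p - q‖ := by ring
      _ ≤ _ := by gcongr; linarith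
  · intro k p q hp hq
    have e1 := D.cl k _ _ ((tt_pos D.hs hh).1 hp) ((tt_pos D.hs hh).1 hq)
    have e2 := pt_lip D.hs hh p q
    unfold mC
    rw [← mul_sub, abs_mul, abs_of_pos (show 0 < h ^ 2 by positivity)]
    calc _ ≤ h ^ 2 * (Λ * (ks s * h * ‖p - q‖)) := by
          gcongr; exact e1.trans (by gcongr)
      _ = (Λ * ks s) * h ^ 3 * ‖p - q‖ := by ring
      _ ≤ _ := by gcongr; linarith
end

/-! ### Discrete Taylor estimates -/

section
variable {C h : ℝ} {t u : Lat I → ℝ}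

lemma PS.scaled (hP : PS t u (C * h)) (hC : 0 ≤ C) (hh : 0 < h) {p q : Lat I} {τ ρ : ℝ}
    (hτ : τ = h * t p) (hτh : h ≤ τ) (hρ : h * ‖p - q‖ ≤ ρ) (hρτ : ρ ≤ τ / 2) (i j : Fin I) :
    |ev (δ i * δ j) u p - ev (δ i * δ j) u q| ≤ C * h ^ 2 * √ρ / (τ * √τ) := by
  have ht : 1 ≤ t p := by rw [hτ] at hτh; nlinarith
  have hr : ‖p - q‖ ≤ t p / 2 := by rw [hτ] at hρτ; nlinarith
  have key := hP p q i j ht hr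
  have hτp : 0 < τ := by linarith
  rw [le_div_iff₀ (by positivity)]
  have e1 : τ * √τ = h * √h * (t p * √(t p)) := by rw [hτ, Real.sqrt_mul hh.le]; ring
  rw [e1]
  calc |ev (δ i * δ j) u p - ev (δ i * δ j) u q| * (h * √h * (t p * √(t p)))
      = h * √h * (t p * √(t p) * |ev (δ i * δ j) u p - ev (δ i * δ j) u q|) := by ring
    _ ≤ h * √h * (C * h * √‖p - q‖) := by gcongr
    _ = C * h ^ 2 * √(h * ‖p - q‖) := by rw [Real.sqrt_mul hh.le]; ring
    _ ≤ _ := by gcongr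

/-- First-order Taylor estimate on the lattice, for a function whose increments are close to
constants on a cube. -/
lemma taylor_box (f : Lat I → ℝ) (c : Fin I → ℝ) (P Q : Lat I) (K : ℝ) (hK : 0 ≤ K)
    (h : ∀ (x : Lat I) i, ‖x - P‖ ≤ ‖Q - P‖ → |f (x + e i) - f x - c i| ≤ K) :
    |f Q - f P - ∑ i, c i * (Q i - P i)| ≤ K * I * ‖Q - P‖ := by
  have := box_lip (fun p => f p - ∑ i, c i * p i) P ‖Q - P‖ K hK (fun x i hx _ => by
    have e1 : ∑ j, c j * ((x + e i) j : ℝ) = ∑ j, c j * (x j : ℝ) + c i := by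
      simp only [Pi.add_apply, Int.cast_add, mul_add, Finset.sum_add_distrib]
      congr 1
      rw [Finset.sum_eq_single i]
      · simp
      · intro j _ hj; simp [hj]
      · simp
    rw [e1]
    convert h x i hx using 2; ring) Q P le_rfl (by simp)
  convert this using 2
  simp only [mul_sub, Finset.sum_sub_distrib]
  ring

/-- Second-order Taylor estimate for `u`, in terms of the unscaled distance `τ` to the boundary. -/
lemma taylor2 (tlip : ∀ p q, |t p - t q| ≤ ‖p - q‖) (hC : 0 ≤ C) (hh : 0 < h)
    (hD : ∀ p i j, 1 ≤ t p → t p * |ev (δ i * δ j) u p| ≤ C * h) {p q : Lat I} {τ ρ : ℝ}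
    (hτ : τ = h * t p) (hτh : h ≤ τ / 4) (hρ : h * ‖q - p‖ ≤ ρ) (hρτ : ρ ≤ τ / 4) :
    |u q - u p - ∑ i, ev (δ i) u p * (q i - p i)| ≤ 2 * C / τ * I ^ 2 * ρ ^ 2 := by
  have ht : 4 ≤ t p := by rw [hτ] at hτh; nlinarith
  have hr : ‖q - p‖ ≤ t p / 4 := by rw [hτ] at hρτ; nlinarith
  have hτp : 0 < τ := by linarith
  have hb : ∀ x i j, ‖x - p‖ ≤ ‖q - p‖ → |ev (δ i * δ j) u x| ≤ 2 * C * h ^ 2 / τ := by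
    intro x i j hx
    have e1 := (abs_le.1 (tlip x p)).1
    have e2 : t p / 2 ≤ t x := by linarith
    have e3 := hD x i j (by linarith)
    rw [le_div_iff₀ hτp, hτ]
    have e4 : t p / 2 * |ev (δ i * δ j) u x| ≤ t x * |ev (δ i * δ j) u x| := by gcongr
    nlinarith
  have h1 : ∀ x i, ‖x - p‖ ≤ ‖q - p‖ →
      |ev (δ i) u x - ev (δ i) u p| ≤ 2 * C * h ^ 2 / τ * I * ‖q - p‖ := by
    intro x i hx
    have := box_lip (ev (δ i) u) p ‖q - p‖ (2 * C * h ^ 2 / τ) (by positivity) (fun y j hy _ => by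
      have := hb y j i hy
      rw [ev_mul, ev_δ] at this
      exact this) x p hx (by simp)
    exact this.trans (by gcongr)
  have h2 := taylor_box u (fun i => ev (δ i) u p) p q (2 * C * h ^ 2 / τ * I * ‖q - p‖)
    (by positivity) (fun x i hx => by
      have := h1 x i hx
      rwa [ev_δ] at this)
  refine h2.trans ?_
  calc 2 * C * h ^ 2 / τ * I * ‖q - p‖ * I * ‖q - p‖
      = 2 * C / τ * I ^ 2 * (h * ‖q - p‖) ^ 2 := by ring
    _ ≤ _ := by gcongr

/-- Taylor estimate for the first differences, from the weighted Hölder bound for the second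
differences. -/
lemma PS.taylor1 (hP : PS t u (C * h)) (hC : 0 ≤ C) (hh : 0 < h) {p q : Lat I} {τ ρ : ℝ}
    (hτ : τ = h * t p) (hτh : h ≤ τ) (hρ : h * ‖q - p‖ ≤ ρ) (hρτ : ρ ≤ τ / 2) (i : Fin I) :
    |ev (δ i) u q - ev (δ i) u p - ∑ j, ev (δ i * δ j) u p * (q j - p j)|
      ≤ h * (C * I * ρ * √ρ / (τ * √τ)) := by
  have hτp : 0 < τ := by linarith
  have := taylor_box (ev (δ i) u) (fun j => ev (δ i * δ j) u p) p q (C * h ^ 2 * √ρ / (τ * √τ))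
    (by positivity) (fun x j hx => by
      have e1 := hP.scaled hC hh (p := p) (q := x) hτ hτh
        (by rw [norm_sub_rev]; exact (mul_le_mul_of_nonneg_left hx hh.le).trans hρ) hρτ i j
      rw [abs_sub_comm, ] at e1
      have e2 : ev (δ i) u (x + e j) - ev (δ i) u x = ev (δ i * δ j) u x := by
        rw [mul_comm, ev_mul, ev_δ (f := ev (δ i) u)]
      rw [e2]; exact e1)
  refine this.trans ?_
  calc C * h ^ 2 * √ρ / (τ * √τ) * I * ‖q - p‖
      = h * (C * I * (h * ‖q - p‖) * √ρ / (τ * √τ)) := by ring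
    _ ≤ _ := by gcongr

lemma rc_ge_one : 1 ≤ rc I := by unfold rc; have : (0:ℝ) ≤ I := by positivity
                                 linarith

/-- `4 (R - 1) u` is close to the sum of the pure second differences, by `Rr_expand` and the Hölder
bound. -/
lemma PS.Rr_near (hP : PS t u (C * h)) (hC : 0 ≤ C) (hh : 0 < h) {p : Lat I} {τ : ℝ}
    (hτ : τ = h * t p) (hτh : h ≤ τ) (hρτ : h * rc I ≤ τ / 2) :
    |4 * ev (Rr - 1) u p - ∑ i, ev (δ i * δ i) u p| ≤ I * (C * h ^ 2 * √(h * rc I) / (τ * √τ)) := by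
  obtain ⟨Q, hQ, hQe⟩ := Rr_expand (I := I)
  have e1 : 4 * ev (Rr - 1) u p = ∑ i, ev (Q i) (ev (δ i * δ i) u) p := by
    rw [hQe, map_sum, LinearMap.sum_apply, Finset.sum_apply, Finset.mul_sum]
    refine Finset.sum_congr rfl fun i _ => ?_
    rw [ev_smul, ev_mul (Q i)]; ring
  rw [e1, ← Finset.sum_sub_distrib]
  refine (Finset.abs_sum_le_sum_abs _ _).trans ?_
  calc _ ≤ ∑ i : Fin I, C * h ^ 2 * √(h * rc I) / (τ * √τ) := by
        refine Finset.sum_le_sum fun i _ => ?_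
        set K := C * h ^ 2 * √(h * rc I) / (τ * √τ)
        have hK : ∀ x, ‖x - p‖ ≤ rc I → |ev (δ i * δ i) u p - ev (δ i * δ i) u x| ≤ K :=
          fun x hx => hP.scaled hC hh hτ hτh
            (by rw [norm_sub_rev]; gcongr) hρτ i i
        have h1 := hQ i (ev (δ i * δ i) u) p (ev (δ i * δ i) u p + K) (fun x hx => by
          have := (abs_le.1 (hK x hx)).1; linarith)
        have h2 := (hQ i).ge (f := ev (δ i * δ i) u) (p := p) (M := ev (δ i * δ i) u p - K)
          (fun x hx => by
          have := (abs_le.1 (hK x hx)).2; linarith)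
        rw [abs_le]; constructor <;> linarith
    _ = _ := by simp

/-- The discrete equation up to `o(h²)`, with all differences taken at the same point. -/
lemma Sch.eq_near {L ε γ' : ℝ} {E B : Fin I → Fin I → Lat I → ℝ} {Cc : Fin I → Lat I → ℝ}
    (D : Sch L h ε γ' t u E B Cc)
    (hP : PS t u (C * h)) (hC : 0 ≤ C) {p : Lat I} {τ : ℝ}
    (hτ : τ = h * t p) (hτh : h ≤ τ) (hρτ : h * rc I ≤ τ / 2) :
    |γ' * u p - (∑ i, ev (δ i * δ i) u p + ⨅ k, (∑ i, E k i p * ev (δ i * δ i) u p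
      + ∑ i, B k i p * ev (δ i) u p + Cc k p))|
      ≤ h ^ 2 * (C * I * (1 + ε) * √(h * rc I) / (τ * √τ)) := by
  have hh := D.hh
  have hε := D.hε
  have hτp : 0 < τ := by linarith
  have htp : 0 < t p := by
    rw [hτ] at hτp; exact (mul_pos_iff_of_pos_left hh).1 hτp
  have h1 := hP.Rr_near hC hh hτ hτh hρτ
  have h2 := D.eq p htp
  set K := C * h ^ 2 * √(h * rc I) / (τ * √τ) with hK
  have hK0 : 0 ≤ K := by positivity
  have h3 := iInf_abs_sub (fun k => FF E B Cc u k p) (fun k => (∑ i, E k i p * ev (δ i * δ i) u p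
      + ∑ i, B k i p * ev (δ i) u p + Cc k p)) (I * (ε * K)) (by positivity) (fun k => by
    have : FF E B Cc u k p - (∑ i, E k i p * ev (δ i * δ i) u p
      + ∑ i, B k i p * ev (δ i) u p + Cc k p)
      = ∑ i, E k i p * (ev (δ i * δ i) u (p - e i) - ev (δ i * δ i) u p) := by
      unfold FF
      simp only [mul_sub, Finset.sum_sub_distrib]
      ring
    rw [this]
    refine (Finset.abs_sum_le_sum_abs _ _).trans ?_
    calc _ ≤ ∑ i : Fin I, ε * K := by
          refine Finset.sum_le_sum fun i _ => ?_
          rw [abs_mul]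
          have a1 := D.Eb k i p htp
          have a2 := hP.scaled hC hh (q := p - e i) (ρ := h * rc I) hτ hτh (by
            rw [sub_sub_cancel, norm_e]; gcongr; exact rc_ge_one) hρτ i i
          rw [abs_sub_comm] at a2
          gcongr
      _ = _ := by simp)
  have e1 : h ^ 2 * (C * I * (1 + ε) * √(h * rc I) / (τ * √τ)) = I * K + I * (ε * K) := by
    rw [hK]; ring
  rw [e1]
  rw [abs_le] at h1 h3 ⊢
  constructor <;> linarith [h1.1, h1.2, h3.1, h3.2]
end

/-! ### Passage to the limit -/

section
open Filter Topology

/-- The lattice point below `x`. -/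
def fl (s : Fin I → ℝ) (h : ℝ) (x : Euc I) : Lat I := fun i => ⌊x i / (h * s i)⌋

lemma fl_near {s : Fin I → ℝ} (hs : ∀ i, 0 < s i) {h : ℝ} (hh : 0 < h) (x : Euc I) (i : Fin I) :
    |h * s i * fl s h x i - x i| ≤ s i * h := by
  have h0 := mul_pos hh (hs i)
  have h1 := Int.floor_le (x i / (h * s i))
  have h2 := Int.lt_floor_add_one (x i / (h * s i))
  rw [le_div_iff₀ h0] at h1
  rw [div_lt_iff₀ h0] at h2
  unfold fl
  rw [abs_le]; constructor <;> nlinarith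

lemma pt_fl_near {s : Fin I → ℝ} (hs : ∀ i, 0 < s i) {h : ℝ} (hh : 0 < h) (x : Euc I) :
    ‖pt s h (fl s h x) - x‖ ≤ ks s * h := by
  refine (norm_le_sum _).trans ?_
  calc _ ≤ ∑ i, s i * h := Finset.sum_le_sum fun i _ => by
        simpa using fl_near hs hh x i
    _ = (∑ i, s i) * h := by rw [Finset.sum_mul]
    _ ≤ _ := by gcongr; unfold ks; linarith

lemma fl_lip {s : Fin I → ℝ} (hs : ∀ i, 0 < s i) {h : ℝ} (hh : 0 < h) (x y : Euc I) :
    h * ‖fl s h y - fl s h x‖ ≤ Sg s * ‖y - x‖ + h := by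
  have hS := Sg_pos hs
  rw [mul_comm, ← le_div_iff₀ hh, pi_norm_le_iff_of_nonneg (by positivity)]
  intro i
  rw [Pi.sub_apply, Int.norm_eq_abs, le_div_iff₀ hh]
  push_cast
  have hsi := hs i
  have h1 : |(y - x) i| ≤ ‖y - x‖ := PiLp.norm_apply_le (y - x) i
  have h2 : |(⌊y i / (h * s i)⌋ : ℝ) - ⌊x i / (h * s i)⌋| ≤ |y i / (h * s i) - x i / (h * s i)| + 1 := by
    have a1 := Int.floor_le (x i / (h * s i))
    have a2 := Int.lt_floor_add_one (x i / (h * s i))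
    have a3 := Int.floor_le (y i / (h * s i))
    have a4 := Int.lt_floor_add_one (y i / (h * s i))
    have a5 := abs_le.1 (le_refl |y i / (h * s i) - x i / (h * s i)|)
    rw [abs_le]; constructor <;> linarith [a5.1, a5.2]
  have h3 : |y i / (h * s i) - x i / (h * s i)| = |(y - x) i| * (1 / s i) / h := by
    rw [← sub_div, abs_div, abs_of_pos (mul_pos hh hsi), PiLp.sub_apply]; field_simp
  have h4 := (le_Sg hs i).1
  have h5 : |(y - x) i| * (1 / s i) ≤ ‖y - x‖ * Sg s := by
    have : 0 < 1 / s i := by positivity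
    gcongr
  unfold fl
  calc _ ≤ (|(y - x) i| * (1 / s i) / h + 1) * h := by rw [← h3]; gcongr
    _ = |(y - x) i| * (1 / s i) + h := by field_simp
    _ ≤ _ := by linarith

/-- A bounded sequence of reals converges along every ultrafilter. -/
lemma exists_lim {f : ℕ → ℝ} (F : Ultrafilter ℕ) {M : ℝ} (h : ∀ᶠ k in (F : Filter ℕ), |f k| ≤ M) :
    ∃ l, Tendsto f F (𝓝 l) := by
  have h1 : (F.map f : Filter ℝ) ≤ 𝓟 (Set.Icc (-M) M) := by
    rw [le_principal_iff]
    exact h.mono fun k hk => abs_le.1 hk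
  obtain ⟨l, _, hl⟩ := isCompact_Icc.ultrafilter_le_nhds (F.map f) h1
  exact ⟨l, hl⟩

lemma tendsto_iInf_fin {ι : Type*} [Finite ι] {F : Filter ℕ} {f : ℕ → ι → ℝ} {l : ι → ℝ}
    (h : ∀ k, Tendsto (fun n => f n k) F (𝓝 (l k))) :
    Tendsto (fun n => ⨅ k, f n k) F (𝓝 (⨅ k, l k)) := by
  rw [Metric.tendsto_nhds]
  intro ε hε
  have : ∀ᶠ n in F, ∀ k, |f n k - l k| ≤ ε / 2 := by
    rw [eventually_all]
    intro k
    exact ((Metric.tendsto_nhds.1 (h k)) (ε / 2) (by positivity)).mono fun n hn => hn.le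
  filter_upwards [this] with n hn
  rw [Real.dist_eq]
  exact (iInf_abs_sub _ _ _ (by positivity) hn).trans_lt (by linarith)

/-- The data of a twice differentiable function `φ` with gradient `g` and Hessian `H` solving the
limit equation, expressed through Taylor estimates. -/
structure LimSol (R γ : ℝ) (s : Fin I → ℝ) (ec bc : Fin I → Fin I → Euc I → ℝ)
    (cc : Fin I → Euc I → ℝ) (φ : Euc I → ℝ) (g : Fin I → Euc I → ℝ)
    (H : Fin I → Fin I → Euc I → ℝ) : Prop where
  lip : ∃ K : ℝ, 0 ≤ K ∧ ∀ x y, |φ y - φ x| ≤ K * ‖y - x‖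
  bd : ∀ x, R ≤ ‖x‖ → φ x = 0
  t2 : ∀ x, ‖x‖ < R → ∃ M r : ℝ, 0 < r ∧ ∀ y, ‖y - x‖ < r →
    |φ y - φ x - ∑ i, g i x * (y i - x i)| ≤ M * ‖y - x‖ ^ 2
  t1 : ∀ i x, ‖x‖ < R → ∃ M r : ℝ, 0 < r ∧ ∀ y, ‖y - x‖ < r →
    |g i y - g i x - ∑ j, H i j x * (y j - x j)| ≤ M * (‖y - x‖ * √‖y - x‖)
  ho : ∀ d, 0 < d → ∃ M r : ℝ, 0 ≤ M ∧ 0 < r ∧ ∀ x y, ‖x‖ ≤ R - d → ‖y - x‖ < r → ∀ i j,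
    |H i j x - H i j y| ≤ M * √‖y - x‖
  eq : ∀ x, ‖x‖ < R → γ * φ x = ∑ i, s i ^ 2 * H i i x
    + ⨅ k, (∑ i, ec k i x * H i i x + ∑ i, bc k i x * g i x + cc k x)

/-- A sequence of discrete solutions on meshes of size tending to zero, with uniform estimates. -/
structure Mesh (R γ C L : ℝ) (s : Fin I → ℝ) (ec bc : Fin I → Fin I → Euc I → ℝ)
    (cc : Fin I → Euc I → ℝ) (h : ℕ → ℝ) (u : ℕ → Lat I → ℝ) : Prop where
  hC : 0 ≤ C
  hh : ∀ k, 0 < h k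
  h1 : ∀ k, h k ≤ 1
  h0 : Tendsto h atTop (𝓝 0)
  sch : ∀ k, Sch L (h k) (eps0 I) (γ * h k ^ 2) (tt R s (h k)) (u k) (mE s (h k) ec)
    (mB s (h k) bc) (mC s (h k) cc)
  ps : ∀ k, PS (tt R s (h k)) (u k) (C * h k)
  d2 : ∀ k p i j, 1 ≤ tt R s (h k) p → tt R s (h k) p * |ev (δ i * δ j) (u k) p| ≤ C * h k
  d1 : ∀ k p i, |ev (δ i) (u k) p| ≤ C * h k

section
variable {R Λ γ : ℝ} {s : Fin I → ℝ} {ec bc : Fin I → Fin I → Euc I → ℝ} {cc : Fin I → Euc I → ℝ}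

lemma Coef.mesh (D : Coef R Λ γ s ec bc cc) : ∃ C L h u, Mesh R γ C L s ec bc cc h u := by
  obtain ⟨L, h0, hL, hh0, hs⟩ := D.scheme
  obtain ⟨C, hC, ha⟩ := apriori I L hL
  let h : ℕ → ℝ := fun k => min h0 1 * (1 / ((k : ℝ) + 1))
  have hm : 0 < min h0 1 := by positivity
  have hh : ∀ k, 0 < h k := fun k => by positivity
  have hle : ∀ k, h k ≤ min h0 1 := fun k => by
    have : 1 / ((k : ℝ) + 1) ≤ 1 := by
      rw [div_le_one (by positivity)]
      have : (0:ℝ) ≤ k := by positivity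
      linarith
    calc h k ≤ min h0 1 * 1 := by simp only [h]; gcongr
      _ = _ := mul_one _
  choose u _ hu using fun k => hs (h k) (hh k) ((hle k).trans (min_le_left _ _))
  refine ⟨C, L, h, u, hC, hh, fun k => (hle k).trans (min_le_right _ _), ?_, hu,
    fun k => (ha _ _ _ _ _ _ _ (hu k)).1, fun k => (ha _ _ _ _ _ _ _ (hu k)).2.1,
    fun k => (ha _ _ _ _ _ _ _ (hu k)).2.2⟩
  have := (tendsto_one_div_add_atTop_nhds_zero_nat (𝕜 := ℝ)).const_mul (min h0 1)
  rw [mul_zero] at this; exact this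
end

end

/-! ### Limits along an ultrafilter -/

section
open Filter Topology

/-- The discrete gradient at the lattice point below `x`. -/
def Gm (s : Fin I → ℝ) (h : ℝ) (u : Lat I → ℝ) (i : Fin I) (x : Euc I) : ℝ :=
  ev (δ i) u (fl s h x) / (h * s i)

/-- The discrete Hessian at the lattice point below `x`. -/
def Hm (s : Fin I → ℝ) (h : ℝ) (u : Lat I → ℝ) (i j : Fin I) (x : Euc I) : ℝ :=
  ev (δ i * δ j) u (fl s h x) / (h ^ 2 * s i * s j)

section
variable {R Λ γ C L : ℝ} {s : Fin I → ℝ} {ec bc : Fin I → Fin I → Euc I → ℝ}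
  {cc : Fin I → Euc I → ℝ} {h : ℕ → ℝ} {u : ℕ → Lat I → ℝ}

lemma Mesh.pt_tendsto (M : Mesh R γ C L s ec bc cc h u) (hs : ∀ i, 0 < s i) (x : Euc I) :
    Tendsto (fun k => pt s (h k) (fl s (h k) x)) atTop (𝓝 x) := by
  rw [tendsto_iff_norm_sub_tendsto_zero]
  refine squeeze_zero (fun _ => norm_nonneg _) (fun k => pt_fl_near hs (M.hh k) x) ?_
  simpa using M.h0.const_mul (ks s)

lemma Mesh.τ_tendsto (M : Mesh R γ C L s ec bc cc h u) (hs : ∀ i, 0 < s i) (x : Euc I) :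
    Tendsto (fun k => h k * tt R s (h k) (fl s (h k) x)) atTop (𝓝 ((R - ‖x‖) / ks s)) := by
  have h1 := ((M.pt_tendsto hs x).norm.const_sub R).div_const (ks s)
  refine h1.congr fun k => ?_
  have := M.hh k
  have := ks_pos hs
  unfold tt; field_simp

lemma Mesh.fl_tendsto (M : Mesh R γ C L s ec bc cc h u) (hs : ∀ i, 0 < s i) (x y : Euc I)
    (i : Fin I) : Tendsto (fun k => h k * s i * ((fl s (h k) y i : ℝ) - fl s (h k) x i)) atTop
      (𝓝 (y i - x i)) := by
  have e1 : ∀ x : Euc I, Tendsto (fun k => h k * s i * (fl s (h k) x i : ℝ)) atTop (𝓝 (x i)) := by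
    intro x
    rw [tendsto_iff_norm_sub_tendsto_zero]
    refine squeeze_zero (fun _ => norm_nonneg _) (fun k => fl_near hs (M.hh k) x i) ?_
    simpa using M.h0.const_mul (s i)
  simpa [mul_sub] using (e1 y).sub (e1 x)

lemma Mesh.ρ_tendsto (M : Mesh R γ C L s ec bc cc h u) (x y : Euc I) :
    Tendsto (fun k => Sg s * ‖y - x‖ + h k) atTop (𝓝 (Sg s * ‖y - x‖)) := by
  simpa using M.h0.const_add (Sg s * ‖y - x‖)

lemma Mesh.sub_near (M : Mesh R γ C L s ec bc cc h u) (hs : ∀ i, 0 < s i) (x y : Euc I) (k : ℕ) :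
    |u k (fl s (h k) y) - u k (fl s (h k) x)| ≤ C * I * (Sg s * ‖y - x‖ + h k) := by
  have hC := M.hC
  have hk := M.hh k
  have := box_lip (u k) (fl s (h k) x) ‖fl s (h k) y - fl s (h k) x‖ (C * h k) (by positivity)
    (fun z i _ _ => by have := M.d1 k z i; rwa [ev_δ] at this) (fl s (h k) y) (fl s (h k) x) le_rfl
    (by simp)
  refine this.trans ?_
  calc C * h k * I * ‖fl s (h k) y - fl s (h k) x‖ = C * I * (h k * ‖fl s (h k) y - fl s (h k) x‖) := by
        ring
    _ ≤ _ := by have := fl_lip hs (M.hh k) x y; gcongr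

lemma Mesh.u_bound (M : Mesh R γ C L s ec bc cc h u) (x : Euc I) (k : ℕ) :
    |u k (fl s (h k) x)|
      ≤ L * (max (h k * tt R s (h k) (fl s (h k) x)) 0 + h k) := by
  refine ((M.sch k).ub _).trans (le_of_eq ?_)
  have := M.hh k
  rw [show h k * tt R s (h k) (fl s (h k) x) = h k * tt R s (h k) (fl s (h k) x) from rfl]
  have e : max (h k * tt R s (h k) (fl s (h k) x)) 0
      = h k * max (tt R s (h k) (fl s (h k) x)) 0 := by
    rw [mul_max_of_nonneg _ _ this.le, mul_zero]
  rw [e]; ring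

/-- Limits of the discrete solutions with their first and second difference quotients, at all points
simultaneously; the ultrafilter replaces a diagonal extraction of subsequences. -/
lemma Mesh.exists_limits (M : Mesh R γ C L s ec bc cc h u) (hs : ∀ i, 0 < s i)
    (F : Ultrafilter ℕ) (hF : (F : Filter ℕ) ≤ atTop) :
    ∃ (φ : Euc I → ℝ) (g : Fin I → Euc I → ℝ) (H : Fin I → Fin I → Euc I → ℝ),
      (∀ x, Tendsto (fun k => u k (fl s (h k) x)) F (𝓝 (φ x))) ∧
      (∀ i x, Tendsto (fun k => Gm s (h k) (u k) i x) F (𝓝 (g i x))) ∧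
      ∀ i j x, ‖x‖ < R → Tendsto (fun k => Hm s (h k) (u k) i j x) F (𝓝 (H i j x)) := by
  have hC := M.hC
  have hk := ks_pos hs
  have a1 : ∀ x, ∃ l, Tendsto (fun k => u k (fl s (h k) x)) F (𝓝 l) := fun x => by
    refine exists_lim F (M := L * (L + 1)) (Eventually.of_forall fun k => ?_)
    refine (M.u_bound x k).trans ?_
    have b1 := (M.sch k).hL
    have b2 := (M.sch k).tL (fl s (h k) x)
    have b3 := M.h1 k
    have b4 : max (h k * tt R s (h k) (fl s (h k) x)) 0 ≤ L := max_le b2 (by linarith)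
    gcongr
  have a2 : ∀ i x, ∃ l, Tendsto (fun k => Gm s (h k) (u k) i x) F (𝓝 l) := fun i x => by
    refine exists_lim F (M := C / s i) (Eventually.of_forall fun k => ?_)
    have b1 := M.hh k
    have b2 := hs i
    unfold Gm
    rw [abs_div, abs_of_pos (mul_pos b1 b2), div_le_div_iff₀ (by positivity) b2]
    have := M.d1 k (fl s (h k) x) i
    nlinarith
  have a3 : ∀ i j x, ∃ l, ‖x‖ < R → Tendsto (fun k => Hm s (h k) (u k) i j x) F (𝓝 l) :=
      fun i j x => by
    by_cases hx : ‖x‖ < R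
    · have hd : 0 < (R - ‖x‖) / ks s := div_pos (by linarith) (by linarith)
      set d := (R - ‖x‖) / ks s
      have e1 : ∀ᶠ k in atTop, d / 2 < h k * tt R s (h k) (fl s (h k) x) :=
        (M.τ_tendsto hs x).eventually_const_lt (by linarith)
      have e2 : ∀ᶠ k in atTop, h k < d / 2 := M.h0.eventually_lt_const (by linarith)
      obtain ⟨l, hl⟩ := exists_lim F (f := fun k => Hm s (h k) (u k) i j x)
        (M := C / (d / 2 * s i * s j)) (by
        filter_upwards [hF e1, hF e2] with k k1 k2
        have b1 := M.hh k
        have b2 := hs i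
        have b3 := hs j
        have b4 := M.d2 k (fl s (h k) x) i j (by
          by_contra hc
          push Not at hc
          nlinarith)
        unfold Hm
        rw [abs_div, abs_of_pos (by positivity : 0 < h k ^ 2 * s i * s j),
          div_le_div_iff₀ (by positivity) (by positivity)]
        have b5 : d / 2 * |ev (δ i * δ j) (u k) (fl s (h k) x)|
          ≤ h k * tt R s (h k) (fl s (h k) x) * |ev (δ i * δ j) (u k) (fl s (h k) x)| := by
          gcongr
        have b6 : d / 2 * |ev (δ i * δ j) (u k) (fl s (h k) x)| ≤ C * h k ^ 2 := by nlinarith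
        calc _ = d / 2 * |ev (δ i * δ j) (u k) (fl s (h k) x)| * (s i * s j) := by ring
          _ ≤ C * h k ^ 2 * (s i * s j) := by gcongr
          _ = _ := by ring)
      exact ⟨l, fun _ => hl⟩
    · exact ⟨0, fun h => absurd h hx⟩
  choose φ hφ using a1
  choose g hg using a2
  choose H hH using a3
  exact ⟨φ, g, H, hφ, hg, hH⟩

end

end

/-! ### The limit solves the equation -/

section
open Filter Topology

section
variable {R Λ γ C L : ℝ} {s : Fin I → ℝ} {ec bc : Fin I → Fin I → Euc I → ℝ}
  {cc : Fin I → Euc I → ℝ} {h : ℕ → ℝ} {u : ℕ → Lat I → ℝ} {F : Filter ℕ} {φ : Euc I → ℝ}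
  {g : Fin I → Euc I → ℝ} {H : Fin I → Fin I → Euc I → ℝ}

lemma tendsto_weight {ρ τ : ℕ → ℝ} {r t : ℝ} (hρ : Tendsto ρ F (𝓝 r)) (hτ : Tendsto τ F (𝓝 t))
    (ht : 0 < t) : Tendsto (fun k => √(ρ k) / (τ k * √(τ k))) F (𝓝 (√r / (t * √t))) :=
  hρ.sqrt.div (hτ.mul hτ.sqrt) (by positivity)

lemma Mesh.lim_lip [F.NeBot] (M : Mesh R γ C L s ec bc cc h u) (hs : ∀ i, 0 < s i) (hF : F ≤ atTop)
    (hφ : ∀ x, Tendsto (fun k => u k (fl s (h k) x)) F (𝓝 (φ x))) (x y : Euc I) :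
    |φ y - φ x| ≤ C * I * Sg s * ‖y - x‖ := by
  have := le_of_tendsto_of_tendsto' ((hφ y).sub (hφ x)).abs
    (((M.ρ_tendsto x y).mono_left hF).const_mul (C * I)) (fun k => M.sub_near hs x y k)
  linarith

lemma Mesh.lim_bd [F.NeBot] (M : Mesh R γ C L s ec bc cc h u) (hs : ∀ i, 0 < s i) (hF : F ≤ atTop)
    (hφ : ∀ x, Tendsto (fun k => u k (fl s (h k) x)) F (𝓝 (φ x))) (x : Euc I) (hx : R ≤ ‖x‖) :
    φ x = 0 := by
  have h1 : Tendsto (fun k => L * (max (h k * tt R s (h k) (fl s (h k) x)) 0 + h k)) F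
      (𝓝 (L * (max ((R - ‖x‖) / ks s) 0 + 0))) :=
    ((((M.τ_tendsto hs x).max tendsto_const_nhds).add M.h0).const_mul L).mono_left hF
  have h2 := le_of_tendsto_of_tendsto' (hφ x).abs h1 (fun k => M.u_bound x k)
  have h3 : (R - ‖x‖) / ks s ≤ 0 :=
    div_nonpos_of_nonpos_of_nonneg (by linarith) (by linarith [ks_pos hs])
  rw [max_eq_right h3, add_zero, mul_zero] at h2
  exact abs_nonpos_iff.1 h2

lemma Mesh.lim_t2 [F.NeBot] (M : Mesh R γ C L s ec bc cc h u) (hs : ∀ i, 0 < s i) (hF : F ≤ atTop)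
    (hφ : ∀ x, Tendsto (fun k => u k (fl s (h k) x)) F (𝓝 (φ x)))
    (hg : ∀ i x, Tendsto (fun k => Gm s (h k) (u k) i x) F (𝓝 (g i x))) (x : Euc I)
    (hx : ‖x‖ < R) : ∃ K r : ℝ, 0 < r ∧ ∀ y, ‖y - x‖ < r →
    |φ y - φ x - ∑ i, g i x * (y i - x i)| ≤ K * ‖y - x‖ ^ 2 := by
  have hk := ks_pos hs
  have hS := Sg_pos hs
  have hd : 0 < (R - ‖x‖) / ks s := div_pos (by linarith) (by linarith)
  have hτ := (M.τ_tendsto hs x).mono_left hF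
  set d := (R - ‖x‖) / ks s
  refine ⟨2 * C / d * I ^ 2 * Sg s ^ 2, d / (8 * Sg s), by positivity, fun y hy => ?_⟩
  rw [lt_div_iff₀ (by positivity)] at hy
  have hρ := (M.ρ_tendsto x y).mono_left hF
  have hh0 := M.h0.mono_left hF
  have e1 := hτ.eventually_const_lt (show d / 2 < d by linarith)
  have e2 := hh0.eventually_lt_const (show 0 < d / 8 by linarith)
  have e3 := hρ.eventually_lt_const (show Sg s * ‖y - x‖ < d / 8 by linarith)
  have l1 : Tendsto (fun k => u k (fl s (h k) y) - u k (fl s (h k) x)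
      - ∑ i, Gm s (h k) (u k) i x * (h k * s i * ((fl s (h k) y i : ℝ) - fl s (h k) x i))) F
      (𝓝 (φ y - φ x - ∑ i, g i x * (y i - x i))) :=
    ((hφ y).sub (hφ x)).sub (tendsto_finsetSum _ fun i _ =>
      (hg i x).mul ((M.fl_tendsto hs x y i).mono_left hF))
  have l2 : Tendsto (fun k => 2 * C / (h k * tt R s (h k) (fl s (h k) x)) * I ^ 2
      * (Sg s * ‖y - x‖ + h k) ^ 2) F (𝓝 (2 * C / d * I ^ 2 * (Sg s * ‖y - x‖) ^ 2)) :=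
    ((tendsto_const_nhds.div hτ hd.ne').mul tendsto_const_nhds).mul (hρ.pow 2)
  have := le_of_tendsto_of_tendsto l1.abs l2 (by
    filter_upwards [e1, e2, e3] with k k1 k2 k3
    have b := taylor2 (M.sch k).tlip M.hC (M.hh k) (M.d2 k) (p := fl s (h k) x)
      (q := fl s (h k) y) rfl (by linarith) (fl_lip hs (M.hh k) x y) (by linarith)
    refine le_trans (le_of_eq ?_) b
    congr 2
    refine Finset.sum_congr rfl fun i _ => ?_
    have := M.hh k
    have := hs i
    unfold Gm; field_simp)
  refine this.trans (le_of_eq (by ring))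

lemma Mesh.lim_t1 [F.NeBot] (M : Mesh R γ C L s ec bc cc h u) (hs : ∀ i, 0 < s i) (hF : F ≤ atTop)
    (hg : ∀ i x, Tendsto (fun k => Gm s (h k) (u k) i x) F (𝓝 (g i x)))
    (hH : ∀ i j x, ‖x‖ < R → Tendsto (fun k => Hm s (h k) (u k) i j x) F (𝓝 (H i j x)))
    (i : Fin I) (x : Euc I)
    (hx : ‖x‖ < R) : ∃ K r : ℝ, 0 < r ∧ ∀ y, ‖y - x‖ < r →
    |g i y - g i x - ∑ j, H i j x * (y j - x j)| ≤ K * (‖y - x‖ * √‖y - x‖) := by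
  have hk := ks_pos hs
  have hS := Sg_pos hs
  have hd : 0 < (R - ‖x‖) / ks s := div_pos (by linarith) (by linarith)
  have hτ := (M.τ_tendsto hs x).mono_left hF
  set d := (R - ‖x‖) / ks s
  refine ⟨C * I / s i * (Sg s * √(Sg s) / (d * √d)), d / (8 * Sg s), by positivity, fun y hy => ?_⟩
  rw [lt_div_iff₀ (by positivity)] at hy
  have hρ := (M.ρ_tendsto x y).mono_left hF
  have hh0 := M.h0.mono_left hF
  have e1 := hτ.eventually_const_lt (show d / 2 < d by linarith)
  have e2 := hh0.eventually_lt_const (show 0 < d / 8 by linarith)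
  have e3 := hρ.eventually_lt_const (show Sg s * ‖y - x‖ < d / 8 by linarith)
  have l1 : Tendsto (fun k => Gm s (h k) (u k) i y - Gm s (h k) (u k) i x
      - ∑ j, Hm s (h k) (u k) i j x * (h k * s j * ((fl s (h k) y j : ℝ) - fl s (h k) x j))) F
      (𝓝 (g i y - g i x - ∑ j, H i j x * (y j - x j))) :=
    ((hg i y).sub (hg i x)).sub (tendsto_finsetSum _ fun j _ =>
      (hH i j x hx).mul ((M.fl_tendsto hs x y j).mono_left hF))
  have l2 : Tendsto (fun k => C * I / s i * ((Sg s * ‖y - x‖ + h k) * (√(Sg s * ‖y - x‖ + h k)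
      / (h k * tt R s (h k) (fl s (h k) x) * √(h k * tt R s (h k) (fl s (h k) x)))))) F
      (𝓝 (C * I / s i * ((Sg s * ‖y - x‖) * (√(Sg s * ‖y - x‖) / (d * √d))))) :=
    (hρ.mul (tendsto_weight hρ hτ hd)).const_mul _
  have := le_of_tendsto_of_tendsto l1.abs l2 (by
    filter_upwards [e1, e2, e3] with k k1 k2 k3
    have b := (M.ps k).taylor1 M.hC (M.hh k) (p := fl s (h k) x)
      (q := fl s (h k) y) rfl (by linarith) (fl_lip hs (M.hh k) x y) (by linarith) i
    have h1 := M.hh k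
    have h2 := hs i
    have e : Gm s (h k) (u k) i y - Gm s (h k) (u k) i x
      - ∑ j, Hm s (h k) (u k) i j x * (h k * s j * ((fl s (h k) y j : ℝ) - fl s (h k) x j))
      = (ev (δ i) (u k) (fl s (h k) y) - ev (δ i) (u k) (fl s (h k) x)
        - ∑ j, ev (δ i * δ j) (u k) (fl s (h k) x) * (fl s (h k) y j - fl s (h k) x j))
        / (h k * s i) := by
      rw [sub_div, sub_div, Finset.sum_div]
      congr 1
      refine Finset.sum_congr rfl fun j _ => ?_
      have := hs j
      unfold Hm; field_simp
    rw [e, abs_div, abs_of_pos (mul_pos h1 h2), div_le_iff₀ (mul_pos h1 h2)]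
    refine b.trans (le_of_eq ?_)
    field_simp)
  refine this.trans (le_of_eq ?_)
  rw [Real.sqrt_mul (by linarith)]; ring

lemma Mesh.lim_ho [F.NeBot] (M : Mesh R γ C L s ec bc cc h u) (hs : ∀ i, 0 < s i) (hF : F ≤ atTop)
    (hH : ∀ i j x, ‖x‖ < R → Tendsto (fun k => Hm s (h k) (u k) i j x) F (𝓝 (H i j x)))
    (d0 : ℝ) (hd0 : 0 < d0) : ∃ K r : ℝ, 0 ≤ K ∧ 0 < r ∧ ∀ x y, ‖x‖ ≤ R - d0 → ‖y - x‖ < r →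
    ∀ i j, |H i j x - H i j y| ≤ K * √‖y - x‖ := by
  have hk := ks_pos hs
  have hS := Sg_pos hs
  have hC := M.hC
  have hd : 0 < d0 / ks s := div_pos (by linarith) (by linarith)
  have hdd : d0 / ks s ≤ d0 := div_le_self hd0.le hk
  set d := d0 / ks s with hd_def
  refine ⟨C * (Sg s * Sg s) * (√(Sg s) / (d * √d)), d / (8 * Sg s), by positivity, by positivity,
    fun x y hx hy i j => ?_⟩
  rw [lt_div_iff₀ (by positivity)] at hy
  have hy' : ‖y‖ < R := by
    have h1 := norm_sub_norm_le y x
    have h2 := norm_nonneg (y - x)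
    nlinarith
  have hx' : ‖x‖ < R := by linarith
  have hτ := (M.τ_tendsto hs x).mono_left hF
  have hdx : d ≤ (R - ‖x‖) / ks s := by
    rw [hd_def]
    have : 0 < ks s := by linarith
    gcongr; linarith
  set d1 := (R - ‖x‖) / ks s
  have hρ := (M.ρ_tendsto x y).mono_left hF
  have hh0 := M.h0.mono_left hF
  have e1 := hτ.eventually_const_lt (show d / 2 < d1 by linarith)
  have e2 := hh0.eventually_lt_const (show 0 < d / 8 by linarith)
  have e3 := hρ.eventually_lt_const (show Sg s * ‖y - x‖ < d / 8 by linarith)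
  have l2 := (tendsto_weight hρ hτ (by linarith : 0 < d1)).const_mul (C / (s i * s j))
  have hsi := hs i
  have hsj := hs j
  have := le_of_tendsto_of_tendsto ((hH i j x hx').sub (hH i j y hy')).abs l2 (by
    filter_upwards [e1, e2, e3] with k k1 k2 k3
    have h1 := M.hh k
    have b := (M.ps k).scaled M.hC (M.hh k) (ρ := Sg s * ‖y - x‖ + h k) (p := fl s (h k) x)
      (q := fl s (h k) y) rfl (by linarith) (by rw [norm_sub_rev]; exact fl_lip hs (M.hh k) x y)
      (by linarith) i j
    unfold Hm
    rw [← sub_div, abs_div, abs_of_pos (by positivity : 0 < h k ^ 2 * s i * s j),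
      div_le_iff₀ (by positivity)]
    refine b.trans (le_of_eq ?_)
    field_simp)
  refine this.trans ?_
  rw [Real.sqrt_mul (by linarith)]
  have f1 := (le_Sg hs i).1
  have f2 := (le_Sg hs j).1
  have f3 : C / (s i * s j) ≤ C * (Sg s * Sg s) := by
    calc C / (s i * s j) = C * (1 / s i * (1 / s j)) := by field_simp
      _ ≤ _ := by gcongr
  calc _ ≤ C * (Sg s * Sg s) * (√(Sg s) * √‖y - x‖ / (d * √d)) := by gcongr
    _ = _ := by ring

lemma Mesh.lim_eq [F.NeBot] (M : Mesh R γ C L s ec bc cc h u) (D : Coef R Λ γ s ec bc cc)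
    (hF : F ≤ atTop)
    (hφ : ∀ x, Tendsto (fun k => u k (fl s (h k) x)) F (𝓝 (φ x)))
    (hg : ∀ i x, Tendsto (fun k => Gm s (h k) (u k) i x) F (𝓝 (g i x)))
    (hH : ∀ i j x, ‖x‖ < R → Tendsto (fun k => Hm s (h k) (u k) i j x) F (𝓝 (H i j x)))
    (x : Euc I) (hx : ‖x‖ < R) : γ * φ x = ∑ i, s i ^ 2 * H i i x
    + ⨅ k, (∑ i, ec k i x * H i i x + ∑ i, bc k i x * g i x + cc k x) := by
  have hs := D.hs
  have hk := ks_pos hs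
  have hd : 0 < (R - ‖x‖) / ks s := div_pos (by linarith) (by linarith)
  have hτ := (M.τ_tendsto hs x).mono_left hF
  have hpt := (M.pt_tendsto hs x).mono_left hF
  have hh0 := M.h0.mono_left hF
  set d := (R - ‖x‖) / ks s
  have hin : ∀ᶠ k in F, ‖pt s (h k) (fl s (h k) x)‖ < R :=
    hpt.norm.eventually_lt_const hx
  have hcoef : ∀ f : Euc I → ℝ, (∀ x y, ‖x‖ < R → ‖y‖ < R → |f x - f y| ≤ Λ * ‖x - y‖) →
      Tendsto (fun k => f (pt s (h k) (fl s (h k) x))) F (𝓝 (f x)) := by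
    intro f hf
    rw [tendsto_iff_norm_sub_tendsto_zero] at hpt ⊢
    refine squeeze_zero' (Eventually.of_forall fun _ => norm_nonneg _)
      (hin.mono fun k hk => hf _ _ hk hx) ?_
    simpa using hpt.const_mul Λ
  have l1 : Tendsto (fun k => γ * u k (fl s (h k) x) - (∑ i, s i ^ 2 * Hm s (h k) (u k) i i x
      + ⨅ l, (∑ i, ec l i (pt s (h k) (fl s (h k) x)) * Hm s (h k) (u k) i i x
        + ∑ i, bc l i (pt s (h k) (fl s (h k) x)) * Gm s (h k) (u k) i x
        + cc l (pt s (h k) (fl s (h k) x))))) F (𝓝 (γ * φ x - (∑ i, s i ^ 2 * H i i x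
    + ⨅ k, (∑ i, ec k i x * H i i x + ∑ i, bc k i x * g i x + cc k x)))) := by
    refine ((hφ x).const_mul γ).sub (.add (tendsto_finsetSum _ fun i _ => (hH i i x hx).const_mul _)
      (tendsto_iInf_fin fun l => .add (.add (tendsto_finsetSum _ fun i _ => ?_)
        (tendsto_finsetSum _ fun i _ => ?_)) ?_))
    · exact (hcoef _ (D.el l i)).mul (hH i i x hx)
    · exact (hcoef _ (D.bl l i)).mul (hg i x)
    · exact hcoef _ (D.cl l)
  have l3 : Tendsto (fun k => h k * rc I) F (𝓝 0) := by simpa using hh0.mul_const (rc I)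
  have l2 := (tendsto_weight l3 hτ hd).const_mul (C * I * (1 + eps0 I))
  rw [Real.sqrt_zero, zero_div, mul_zero] at l2
  have e1 := hτ.eventually_const_lt (show d / 2 < d by linarith)
  have e2 := hh0.eventually_lt_const (show 0 < d / 8 by linarith)
  have e3 := l3.eventually_lt_const (show 0 < d / 8 by linarith)
  have := le_of_tendsto_of_tendsto l1.abs l2 (by
    filter_upwards [e1, e2, e3] with k k1 k2 k3
    have hh := M.hh k
    have b := (M.sch k).eq_near (M.ps k) M.hC (p := fl s (h k) x) rfl (by linarith) (by linarith)
    have e : γ * h k ^ 2 * u k (fl s (h k) x) - (∑ i, ev (δ i * δ i) (u k) (fl s (h k) x)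
      + ⨅ l, (∑ i, mE s (h k) ec l i (fl s (h k) x) * ev (δ i * δ i) (u k) (fl s (h k) x)
      + ∑ i, mB s (h k) bc l i (fl s (h k) x) * ev (δ i) (u k) (fl s (h k) x)
      + mC s (h k) cc l (fl s (h k) x)))
      = h k ^ 2 * (γ * u k (fl s (h k) x) - (∑ i, s i ^ 2 * Hm s (h k) (u k) i i x
      + ⨅ l, (∑ i, ec l i (pt s (h k) (fl s (h k) x)) * Hm s (h k) (u k) i i x
        + ∑ i, bc l i (pt s (h k) (fl s (h k) x)) * Gm s (h k) (u k) i x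
        + cc l (pt s (h k) (fl s (h k) x))))) := by
      rw [mul_sub, mul_add, Real.mul_iInf_of_nonneg (by positivity), Finset.mul_sum]
      congr 1
      · ring
      · congr 1
        · refine Finset.sum_congr rfl fun i _ => ?_
          have := hs i
          unfold Hm; field_simp
        · refine iInf_congr fun l => ?_
          rw [mul_add, mul_add, Finset.mul_sum, Finset.mul_sum]
          congr 1
          congr 1
          · refine Finset.sum_congr rfl fun i _ => ?_
            have := hs i
            unfold Hm mE; field_simp
          · refine Finset.sum_congr rfl fun i _ => ?_
            have := hs i
            unfold Gm mB; field_simp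
    rw [e, abs_mul, abs_of_pos (by positivity : 0 < h k ^ 2)] at b
    have := le_of_mul_le_mul_left b (by positivity)
    refine this.trans (le_of_eq (by ring)))
  exact sub_eq_zero.1 (abs_nonpos_iff.1 this)

/-- Existence for the limit equation, in the form of Taylor estimates. -/
theorem Coef.exists_limSol (D : Coef R Λ γ s ec bc cc) :
    ∃ φ g H, LimSol R γ s ec bc cc φ g H := by
  obtain ⟨C, L, h, u, M⟩ := D.mesh
  have hF := Nat.hyperfilter_le_atTop
  obtain ⟨φ, g, H, hφ, hg, hH⟩ := M.exists_limits D.hs (hyperfilter ℕ) hF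
  have hC := M.hC
  have hS := Sg_pos D.hs
  exact ⟨φ, g, H, ⟨C * I * Sg s, by positivity, M.lim_lip D.hs hF hφ⟩, M.lim_bd D.hs hF hφ,
    M.lim_t2 D.hs hF hφ hg, M.lim_t1 D.hs hF hg hH, M.lim_ho D.hs hF hH, M.lim_eq D hF hφ hg hH⟩
end

end

/-! ### Classical regularity of the limit -/

section
open Filter Topology Asymptotics

/-- A Taylor estimate with remainder of order `3/2` gives the Fréchet derivative. -/
lemma hasFDerivAt_of_taylor {f : Euc I → ℝ} {c : Fin I → ℝ} {x : Euc I} {K r : ℝ} (hr : 0 < r)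
    (h : ∀ y, ‖y - x‖ < r → |f y - f x - ∑ i, c i * (y i - x i)| ≤ K * (‖y - x‖ * √‖y - x‖)) :
    HasFDerivAt f (∑ i, c i • (EuclideanSpace.proj i : Euc I →L[ℝ] ℝ)) x := by
  rw [hasFDerivAt_iff_isLittleO]
  have h1 : (fun y => f y - f x - (∑ i, c i • (EuclideanSpace.proj i : Euc I →L[ℝ] ℝ)) (y - x))
      =O[𝓝 x] fun y => ‖y - x‖ * √‖y - x‖ := by
    refine IsBigO.of_bound K ?_
    filter_upwards [Metric.ball_mem_nhds x hr] with y hy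
    rw [mem_ball, dist_eq_norm] at hy
    have := h y hy
    rw [Real.norm_eq_abs, Real.norm_eq_abs, abs_of_nonneg (by positivity : 0 ≤ ‖y - x‖ * √‖y - x‖)]
    simpa using this
  refine h1.trans_isLittleO ?_
  have h2 : Tendsto (fun y : Euc I => √‖y - x‖) (𝓝 x) (𝓝 0) := by
    have : Continuous fun y : Euc I => √‖y - x‖ := by fun_prop
    simpa using this.tendsto x
  have h3 : (fun y : Euc I => √‖y - x‖) =o[𝓝 x] fun _ => (1 : ℝ) := (isLittleO_one_iff ℝ).2 h2
  have h4 := (isBigO_refl (fun y : Euc I => ‖y - x‖) (𝓝 x)).mul_isLittleO h3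
  simp only [mul_one] at h4
  exact h4.trans_isBigO (isBigO_refl (fun y : Euc I => y - x) (𝓝 x)).norm_left

/-- The derivative with partial derivatives `g`. -/
def D1 (g : Fin I → Euc I → ℝ) (x : Euc I) : Euc I →L[ℝ] ℝ :=
  ∑ i, g i x • (EuclideanSpace.proj i : Euc I →L[ℝ] ℝ)

/-- The bilinear form `(v, w) ↦ v_j w_i`. -/
def TT (i j : Fin I) : Euc I →L[ℝ] Euc I →L[ℝ] ℝ :=
  (EuclideanSpace.proj j : Euc I →L[ℝ] ℝ).smulRight (EuclideanSpace.proj i : Euc I →L[ℝ] ℝ)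

/-- The second derivative with entries `H`, as a map into the dual space. -/
def D2 (H : Fin I → Fin I → Euc I → ℝ) (x : Euc I) : Euc I →L[ℝ] Euc I →L[ℝ] ℝ :=
  ∑ i, ∑ j, H i j x • TT i j

lemma sum_smul_sub_le {F : Type*} [NormedAddCommGroup F] [NormedSpace ℝ F] (T : Fin I → Fin I → F)
    (p q : Fin I → Fin I → ℝ) (M : ℝ) (h : ∀ i j, |p i j - q i j| ≤ M) :
    ‖(∑ i, ∑ j, p i j • T i j) - ∑ i, ∑ j, q i j • T i j‖
      ≤ (∑ i : Fin I, ∑ j : Fin I, ‖T i j‖) * M := by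
  rw [← Finset.sum_sub_distrib, Finset.sum_mul]
  refine (norm_sum_le _ _).trans (Finset.sum_le_sum fun i _ => ?_)
  rw [← Finset.sum_sub_distrib, Finset.sum_mul]
  refine (norm_sum_le _ _).trans (Finset.sum_le_sum fun j _ => ?_)
  rw [← sub_smul, norm_smul, mul_comm, Real.norm_eq_abs]
  exact mul_le_mul_of_nonneg_left (h i j) (norm_nonneg _)

lemma norm_sub_le_add {F : Type*} [NormedAddCommGroup F] (u v : F) : ‖u - v‖ ≤ ‖u‖ + ‖v‖ :=
  norm_sub_le u v

lemma bound_on_compact {F : Type*} [NormedAddCommGroup F] {f : Euc I → F} {K : Set (Euc I)}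
    (hK : IsCompact K) (hf : ContinuousOn f K) : ∃ C, ∀ x ∈ K, ‖f x‖ ≤ C :=
  hK.exists_bound_of_continuousOn hf

/-- Stated for an arbitrary normed group, so that no operator norm has to be unfolded where it is
applied. -/
lemma continuousAt_of_norm {F : Type*} [NormedAddCommGroup F] {f : Euc I → F} {x : Euc I}
    (h : Tendsto (fun y => ‖f y - f x‖) (𝓝 x) (𝓝 0)) : ContinuousAt f x :=
  tendsto_iff_norm_sub_tendsto_zero.2 h

lemma D2_sub_le (H : Fin I → Fin I → Euc I → ℝ) (x y : Euc I) (M : ℝ)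
    (h : ∀ i j, |H i j x - H i j y| ≤ M) :
    ‖D2 H x - D2 H y‖ ≤ (∑ i : Fin I, ∑ j : Fin I, ‖TT i j‖) * M :=
  sum_smul_sub_le (F := Euc I →L[ℝ] Euc I →L[ℝ] ℝ) TT (fun i j => H i j x) (fun i j => H i j y) M h

section
variable {R γ : ℝ} {s : Fin I → ℝ} {ec bc : Fin I → Fin I → Euc I → ℝ}
  {cc : Fin I → Euc I → ℝ} {φ : Euc I → ℝ}
  {g : Fin I → Euc I → ℝ} {H : Fin I → Fin I → Euc I → ℝ}

lemma LimSol.deriv1 (S : LimSol R γ s ec bc cc φ g H) {x : Euc I} (hx : ‖x‖ < R) :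
    HasFDerivAt φ (D1 g x) x := by
  obtain ⟨M, r, hr, h⟩ := S.t2 x hx
  refine hasFDerivAt_of_taylor (K := |M|) (lt_min hr one_pos) fun y hy => ?_
  rw [lt_min_iff] at hy
  refine (h y hy.1).trans ?_
  have h0 := norm_nonneg (y - x)
  have : ‖y - x‖ ≤ √‖y - x‖ := by
    apply Real.le_sqrt_of_sq_le; nlinarith [hy.2]
  calc M * ‖y - x‖ ^ 2 ≤ |M| * ‖y - x‖ ^ 2 := by gcongr; exact le_abs_self M
    _ = |M| * (‖y - x‖ * ‖y - x‖) := by ring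
    _ ≤ _ := by gcongr

lemma LimSol.deriv2 (S : LimSol R γ s ec bc cc φ g H) {x : Euc I} (hx : ‖x‖ < R) :
    HasFDerivAt (D1 g) (D2 H x) x := by
  have h1 : ∀ i, HasFDerivAt (g i) (∑ j, H i j x • (EuclideanSpace.proj j : Euc I →L[ℝ] ℝ)) x := by
    intro i
    obtain ⟨M, r, hr, h⟩ := S.t1 i x hx
    exact hasFDerivAt_of_taylor hr h
  have h2 := HasFDerivAt.fun_sum (u := univ) fun i _ =>
    (h1 i).smul_const (EuclideanSpace.proj i : Euc I →L[ℝ] ℝ)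
  refine h2.congr_fderiv ?_
  unfold D2 TT
  refine Finset.sum_congr rfl fun i _ => ?_
  ext v w
  simp [Finset.sum_mul, mul_assoc]

lemma LimSol.fderiv_eventually (S : LimSol R γ s ec bc cc φ g H) {x : Euc I} (hx : ‖x‖ < R) :
    fderiv ℝ φ =ᶠ[𝓝 x] D1 g := by
  filter_upwards [isOpen_ball.mem_nhds (mem_ball_zero_iff.2 hx)] with y hy
  exact (S.deriv1 (mem_ball_zero_iff.1 hy)).fderiv

lemma LimSol.fderiv2 (S : LimSol R γ s ec bc cc φ g H) {x : Euc I} (hx : ‖x‖ < R) :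
    HasFDerivAt (fderiv ℝ φ) (D2 H x) x :=
  (S.deriv2 hx).congr_of_eventuallyEq (S.fderiv_eventually hx)

lemma LimSol.pd1_eq (S : LimSol R γ s ec bc cc φ g H) {x : Euc I} (hx : ‖x‖ < R) (i : Fin I) :
    pd1 φ i x = g i x := by
  unfold pd1
  rw [(S.deriv1 hx).fderiv, D1]
  simp

lemma LimSol.pd2_eq (S : LimSol R γ s ec bc cc φ g H) {x : Euc I} (hx : ‖x‖ < R) (i : Fin I) :
    pd2 φ i x = H i i x := by
  unfold pd2
  have h1 : pd1 φ i = fun y => fderiv ℝ φ y (EuclideanSpace.single i 1) := rfl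
  have h2 := (S.fderiv2 hx).clm_apply (hasFDerivAt_const (EuclideanSpace.single i (1:ℝ)) x)
  rw [h1, h2.fderiv]
  simp [D2, TT]

lemma LimSol.cont2 (S : LimSol R γ s ec bc cc φ g H) : ContinuousOn (D2 H) (ball 0 R) := by
  refine continuousOn_of_forall_continuousAt fun x hx => ?_
  rw [mem_ball_zero_iff] at hx
  obtain ⟨M, r, hM, hr, h⟩ := S.ho (R - ‖x‖) (by linarith)
  have h2 : Tendsto (fun y : Euc I => (∑ i : Fin I, ∑ j : Fin I, ‖TT i j‖) * (M * √‖y - x‖))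
      (𝓝 x) (𝓝 0) := by
    have : Continuous fun y : Euc I => (∑ i : Fin I, ∑ j : Fin I, ‖TT i j‖) * (M * √‖y - x‖) := by
      fun_prop
    simpa using this.tendsto x
  refine continuousAt_of_norm (F := Euc I →L[ℝ] Euc I →L[ℝ] ℝ) ?_
  refine squeeze_zero' (Eventually.of_forall fun _ =>
    norm_nonneg (E := Euc I →L[ℝ] Euc I →L[ℝ] ℝ) _) ?_ h2
  filter_upwards [Metric.ball_mem_nhds x hr] with y hy
  rw [mem_ball, dist_eq_norm] at hy
  refine D2_sub_le H y x _ fun i j => ?_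
  rw [abs_sub_comm]
  exact h x y (by linarith) hy i j

lemma LimSol.contDiff (S : LimSol R γ s ec bc cc φ g H) : ContDiffOn ℝ 2 φ (ball 0 R) := by
  have e : ∀ x ∈ ball (0 : Euc I) R, ‖x‖ < R := fun x hx => mem_ball_zero_iff.1 hx
  rw [show (2 : WithTop ℕ∞) = 1 + 1 by norm_num, contDiffOn_succ_iff_fderiv_of_isOpen isOpen_ball]
  refine ⟨fun x hx => (S.deriv1 (e x hx)).differentiableAt.differentiableWithinAt, by simp, ?_⟩
  rw [show (1 : WithTop ℕ∞) = 0 + 1 by norm_num, contDiffOn_succ_iff_fderiv_of_isOpen isOpen_ball]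
  refine ⟨fun x hx => (S.fderiv2 (e x hx)).differentiableAt.differentiableWithinAt, by simp, ?_⟩
  rw [contDiffOn_zero]
  exact S.cont2.congr fun x hx => (S.fderiv2 (e x hx)).fderiv

/-- Local Hölder continuity of the second derivatives upgrades to every compact subset: nearby pairs
are covered by the local estimate, distant ones by boundedness. -/
lemma LimSol.holder (S : LimSol R γ s ec bc cc φ g H) : HolderSecond (1 / 2) R φ := by
  intro K hK hKc
  rcases K.eq_empty_or_nonempty with rfl | hne
  · exact ⟨0, by simp⟩
  obtain ⟨z, hz, hmax⟩ := hKc.exists_isMaxOn hne continuous_norm.continuousOn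
  have hzR : ‖z‖ < R := mem_ball_zero_iff.1 (hK hz)
  obtain ⟨M, r, hM, hr, h⟩ := S.ho (R - ‖z‖) (by linarith)
  obtain ⟨B, hB⟩ := bound_on_compact (F := Euc I →L[ℝ] Euc I →L[ℝ] ℝ) hKc (S.cont2.mono hK)
  have hB0 : 0 ≤ B := (norm_nonneg (E := Euc I →L[ℝ] Euc I →L[ℝ] ℝ) _).trans (hB z hz)
  set T : ℝ := ∑ i : Fin I, ∑ j : Fin I, ‖TT i j‖
  have hT : 0 ≤ T := Finset.sum_nonneg fun i _ => Finset.sum_nonneg fun j _ =>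
    norm_nonneg (E := Euc I →L[ℝ] Euc I →L[ℝ] ℝ) _
  refine ⟨T * M + 2 * B / √r, fun x hx y hy => ?_⟩
  have hx' : ‖x‖ ≤ ‖z‖ := hmax hx
  have hy' : ‖y‖ ≤ ‖z‖ := hmax hy
  rw [(S.fderiv2 (by linarith : ‖x‖ < R)).fderiv, (S.fderiv2 (by linarith : ‖y‖ < R)).fderiv,
    ← Real.sqrt_eq_rpow]
  have hrs : 0 < √r := Real.sqrt_pos.2 hr
  rw [add_mul]
  have p1 : 0 ≤ T * M * √‖x - y‖ := by positivity
  have p2 : 0 ≤ 2 * B / √r * √‖x - y‖ := by positivity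
  by_cases hd : ‖x - y‖ < r
  · have := D2_sub_le H x y (M * √‖x - y‖) fun i j => by
      rw [norm_sub_rev] at hd ⊢
      exact h x y (by linarith) hd i j
    rw [← mul_assoc] at this
    linarith
  · push Not at hd
    have h1 := hB x hx
    have h2 := hB y hy
    have h3 := norm_sub_le_add (F := Euc I →L[ℝ] Euc I →L[ℝ] ℝ) (D2 H x) (D2 H y)
    have h4 : √r ≤ √‖x - y‖ := Real.sqrt_le_sqrt hd
    have h5 : 2 * B ≤ 2 * B / √r * √‖x - y‖ := by
      rw [div_mul_eq_mul_div, le_div_iff₀ hrs]; gcongr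
    linarith

end

/-- Classical solutions of the Dirichlet problem for the minimum of linear equations with data `s,
ec, bc, cc`. -/
structure IsCl (R γ : ℝ) (s : Fin I → ℝ) (ec bc : Fin I → Fin I → Euc I → ℝ)
    (cc : Fin I → Euc I → ℝ) (φ : Euc I → ℝ) : Prop where
  lip : ∃ K : NNReal, LipschitzOnWith K φ (closedBall 0 R)
  c2 : ContDiffOn ℝ 2 φ (ball 0 R)
  bd : ∀ x : Euc I, ‖x‖ = R → φ x = 0
  eq : ∀ x ∈ ball (0 : Euc I) R, γ * φ x = ∑ i, s i ^ 2 * pd2 φ i x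
    + ⨅ k, (∑ i, ec k i x * pd2 φ i x + ∑ i, bc k i x * pd1 φ i x + cc k x)

/-- Existence of a classical solution with locally `1/2`-Hölder second derivatives. -/
theorem Coef.exists_isCl {R Λ γ : ℝ} {s : Fin I → ℝ} {ec bc : Fin I → Fin I → Euc I → ℝ}
    {cc : Fin I → Euc I → ℝ} (D : Coef R Λ γ s ec bc cc) :
    ∃ φ, IsCl R γ s ec bc cc φ ∧ HolderSecond (1 / 2) R φ := by
  obtain ⟨φ, g, H, S⟩ := D.exists_limSol
  refine ⟨φ, ⟨?_, S.contDiff, fun x hx => S.bd x hx.ge, fun x hx => ?_⟩, S.holder⟩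
  · obtain ⟨K, hK, h⟩ := S.lip
    refine ⟨⟨K, hK⟩, LipschitzOnWith.of_dist_le_mul fun x _ y _ => ?_⟩
    rw [Real.dist_eq, dist_eq_norm]
    exact h y x
  · have hx' : ‖x‖ < R := mem_ball_zero_iff.1 hx
    simp only [S.pd1_eq hx', S.pd2_eq hx']
    exact S.eq x hx'

end

/-! ### Uniqueness by the maximum principle -/

section
open Filter Topology

/-- Second-derivative test on the line. -/
lemma deriv2_nonpos_of_isLocalMax {f f' : ℝ → ℝ} {b : ℝ} (h1 : ∀ᶠ t in 𝓝 0, HasDerivAt f (f' t) t)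
    (h2 : HasDerivAt f' b 0) (hm : IsLocalMax f 0) : b ≤ 0 := by
  by_contra! hb
  have h0 : f' 0 = 0 := hm.hasDerivAt_eq_zero h1.self_of_nhds
  -- the slope of `f'` at `0` is eventually positive, so `f` increases to the right of `0`
  have hs : ∀ᶠ t in 𝓝[>] (0:ℝ), 0 < f' t := by
    have h3 := (hasDerivAt_iff_tendsto_slope.1 h2).mono_left
      (nhdsWithin_mono 0 (fun t (ht : 0 < t) => ht.ne' : Ioi (0:ℝ) ⊆ {0}ᶜ))
    filter_upwards [h3.eventually (lt_mem_nhds hb), self_mem_nhdsWithin] with t ht ht0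
    rw [slope_def_field, h0, sub_zero, sub_zero] at ht
    have ht0' : (0:ℝ) < t := ht0
    exact (div_pos_iff_of_pos_right ht0').1 ht
  obtain ⟨r1, hr1, e1⟩ := Metric.eventually_nhds_iff.1 (h1.and hm)
  obtain ⟨r2, hr2, e2⟩ := mem_nhdsGT_iff_exists_Ioo_subset.1 hs
  have hr2' : (0:ℝ) < r2 := hr2
  set t := min (r1 / 2) (r2 / 2) with ht
  have ht0 : 0 < t := lt_min (by linarith) (by linarith)
  have ht1 : t < r1 := (min_le_left _ _).trans_lt (by linarith)
  have ht2 : t < r2 := (min_le_right _ _).trans_lt (by linarith)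
  have hd : ∀ u ∈ Icc 0 t, HasDerivAt f (f' u) u := fun u hu => (e1 (by
    rw [Real.dist_eq, sub_zero, abs_of_nonneg hu.1]; linarith [hu.2])).1
  obtain ⟨u, hu, he⟩ := exists_hasDerivAt_eq_slope f f' ht0
    (fun u hu => (hd u hu).continuousAt.continuousWithinAt) fun u hu => hd u ⟨hu.1.le, hu.2.le⟩
  have hu' : 0 < f' u := e2 ⟨hu.1, by linarith [hu.2]⟩
  rw [he, sub_zero] at hu'
  have h5 := (div_pos_iff_of_pos_right ht0).1 hu'
  have h6 : f t ≤ f 0 := (e1 (by rw [Real.dist_eq, sub_zero, abs_of_pos ht0]; exact ht1)).2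
  linarith

lemma pd1_differentiableAt {φ : Euc I → ℝ} {R : ℝ} (h : ContDiffOn ℝ 2 φ (ball 0 R)) {x : Euc I}
    (hx : x ∈ ball (0 : Euc I) R) (i : Fin I) : DifferentiableAt ℝ (pd1 φ i) x := by
  have h1 : ContDiffOn ℝ 1 (fderiv ℝ φ) (ball 0 R) :=
    h.fderiv_of_isOpen isOpen_ball (by norm_num)
  have h2 := ((h1 x hx).contDiffAt (isOpen_ball.mem_nhds hx)).differentiableAt (by norm_num)
  exact h2.clm_apply (differentiableAt_const _)

lemma pd1_hasDerivAt {φ : Euc I → ℝ} {R : ℝ} (h : ContDiffOn ℝ 2 φ (ball 0 R)) {x : Euc I}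
    (hx : x ∈ ball (0 : Euc I) R) : DifferentiableAt ℝ φ x :=
  ((h x hx).contDiffAt (isOpen_ball.mem_nhds hx)).differentiableAt (by norm_num)

lemma hasDerivAt_line (x : Euc I) (i : Fin I) (t : ℝ) :
    HasDerivAt (fun t : ℝ => x + t • EuclideanSpace.single i (1:ℝ))
      (EuclideanSpace.single i (1:ℝ)) t := by
  simpa using ((hasDerivAt_id t).smul_const (EuclideanSpace.single i (1:ℝ))).const_add x

/-- At a local maximum of `φ - ψ` the first partial derivatives agree and the pure second ones are
ordered. -/
lemma pd_of_isLocalMax {φ ψ : Euc I → ℝ} {R : ℝ} (h : ContDiffOn ℝ 2 φ (ball 0 R))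
    (h' : ContDiffOn ℝ 2 ψ (ball 0 R)) {x : Euc I} (hx : x ∈ ball (0 : Euc I) R)
    (hm : IsLocalMax (fun y => φ y - ψ y) x) (i : Fin I) :
    pd1 φ i x = pd1 ψ i x ∧ pd2 φ i x ≤ pd2 ψ i x := by
  have hl : Tendsto (fun t : ℝ => x + t • EuclideanSpace.single i (1:ℝ)) (𝓝 0) (𝓝 x) := by
    simpa using (hasDerivAt_line x i 0).continuousAt.tendsto
  have hd : ∀ᶠ t in 𝓝 (0:ℝ), HasDerivAt
      (fun t : ℝ => φ (x + t • EuclideanSpace.single i (1:ℝ))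
        - ψ (x + t • EuclideanSpace.single i (1:ℝ)))
      (pd1 φ i (x + t • EuclideanSpace.single i (1:ℝ))
        - pd1 ψ i (x + t • EuclideanSpace.single i (1:ℝ))) t := by
    filter_upwards [hl.eventually (isOpen_ball.mem_nhds hx)] with t ht
    exact ((pd1_hasDerivAt h ht).hasFDerivAt.comp_hasDerivAt t (hasDerivAt_line x i t)).sub
      ((pd1_hasDerivAt h' ht).hasFDerivAt.comp_hasDerivAt t (hasDerivAt_line x i t))
  have e0 : x + (0:ℝ) • EuclideanSpace.single i (1:ℝ) = x := by simp
  have hd2 : HasDerivAt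
      (fun t : ℝ => pd1 φ i (x + t • EuclideanSpace.single i (1:ℝ))
        - pd1 ψ i (x + t • EuclideanSpace.single i (1:ℝ))) (pd2 φ i x - pd2 ψ i x) 0 := by
    have k1 := (pd1_differentiableAt h hx i).hasFDerivAt
    have k2 := (pd1_differentiableAt h' hx i).hasFDerivAt
    exact (k1.comp_hasDerivAt_of_eq 0 (hasDerivAt_line x i 0) e0.symm).sub
      (k2.comp_hasDerivAt_of_eq 0 (hasDerivAt_line x i 0) e0.symm)
  have hm' : IsLocalMax (fun t : ℝ => φ (x + t • EuclideanSpace.single i (1:ℝ))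
        - ψ (x + t • EuclideanSpace.single i (1:ℝ))) 0 := by
    filter_upwards [hl.eventually hm] with t ht
    simpa using ht
  refine ⟨?_, ?_⟩
  · have := hm'.hasDerivAt_eq_zero hd.self_of_nhds
    rw [e0] at this; linarith
  · linarith [deriv2_nonpos_of_isLocalMax hd hd2 hm']

section
variable {R Λ γ : ℝ} {s : Fin I → ℝ} {ec bc : Fin I → Fin I → Euc I → ℝ}
  {cc : Fin I → Euc I → ℝ} {φ ψ : Euc I → ℝ}

/-- Comparison. A positive maximum of `φ - ψ` is interior, by the boundary values; there the
ellipticity `s_i² + e_{k,i} ≥ 0` and `γ > 0` give a contradiction. -/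
lemma Coef.isCl_le (D : Coef R Λ γ s ec bc cc) (h : IsCl R γ s ec bc cc φ)
    (h' : IsCl R γ s ec bc cc ψ) {y : Euc I} (hy : y ∈ closedBall (0 : Euc I) R) :
    φ y ≤ ψ y := by
  by_contra! hlt
  obtain ⟨K, hK⟩ := h.lip
  obtain ⟨K', hK'⟩ := h'.lip
  obtain ⟨x, hx, hmax⟩ := (isCompact_closedBall (0 : Euc I) R).exists_isMaxOn ⟨y, hy⟩
    (hK.continuousOn.sub hK'.continuousOn)
  have hmx : φ y - ψ y ≤ φ x - ψ x := hmax hy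
  have hxR : ‖x‖ < R := by
    refine lt_of_le_of_ne (mem_closedBall_zero_iff.1 hx) fun he => ?_
    rw [h.bd x he, h'.bd x he] at hmx
    linarith
  have hxb : x ∈ ball (0 : Euc I) R := mem_ball_zero_iff.2 hxR
  have hloc : IsLocalMax (fun y => φ y - ψ y) x := by
    filter_upwards [isOpen_ball.mem_nhds hxb] with z hz
    exact hmax (ball_subset_closedBall hz)
  have hp := fun i => pd_of_isLocalMax h.c2 h'.c2 hxb hloc i
  have e := h.eq x hxb
  have e' := h'.eq x hxb
  have : NeZero I := ⟨D.hI.ne'⟩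
  have hle : ∑ i, s i ^ 2 * pd2 φ i x
      + (⨅ k, (∑ i, ec k i x * pd2 φ i x + ∑ i, bc k i x * pd1 φ i x + cc k x))
      ≤ ∑ i, s i ^ 2 * pd2 ψ i x
      + ⨅ k, (∑ i, ec k i x * pd2 ψ i x + ∑ i, bc k i x * pd1 ψ i x + cc k x) := by
    have hk : ∀ k, (⨅ k, (∑ i, ec k i x * pd2 φ i x + ∑ i, bc k i x * pd1 φ i x + cc k x))
        ≤ (∑ i, s i ^ 2 * pd2 ψ i x - ∑ i, s i ^ 2 * pd2 φ i x) +
          (∑ i, ec k i x * pd2 ψ i x + ∑ i, bc k i x * pd1 ψ i x + cc k x) := by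
      intro k
      refine (ciInf_le (Finite.bddBelow_range _) k).trans ?_
      have h1 : ∑ i, bc k i x * pd1 φ i x = ∑ i, bc k i x * pd1 ψ i x :=
        Finset.sum_congr rfl fun i _ => by rw [(hp i).1]
      have h2 : ∑ i, (s i ^ 2 + ec k i x) * pd2 φ i x
          ≤ ∑ i, (s i ^ 2 + ec k i x) * pd2 ψ i x := by
        refine Finset.sum_le_sum fun i _ => mul_le_mul_of_nonneg_left (hp i).2 ?_
        have := D.e2 k i x hxR
        have h3 := (abs_le.1 this).1
        have h4 : eta0 I ≤ 1 := (eta0_le (I := I)).trans (by norm_num)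
        nlinarith [sq_nonneg (s i)]
      simp only [add_mul, Finset.sum_add_distrib] at h2
      linarith
    have : (⨅ k, (∑ i, ec k i x * pd2 φ i x + ∑ i, bc k i x * pd1 φ i x + cc k x))
        - (∑ i, s i ^ 2 * pd2 ψ i x - ∑ i, s i ^ 2 * pd2 φ i x)
        ≤ ⨅ k, (∑ i, ec k i x * pd2 ψ i x + ∑ i, bc k i x * pd1 ψ i x + cc k x) :=
      le_ciInf fun k => by linarith [hk k]
    linarith
  rw [← e, ← e'] at hle
  have := le_of_mul_le_mul_left hle D.hγ
  linarith

theorem Coef.isCl_unique (D : Coef R Λ γ s ec bc cc) (h : IsCl R γ s ec bc cc φ)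
    (h' : IsCl R γ s ec bc cc ψ) : EqOn φ ψ (closedBall 0 R) := fun _ hy =>
  le_antisymm (D.isCl_le h h' hy) (D.isCl_le h' h hy)
end

end

/-! ### The smoothed HJB equation as an instance -/

section
open Filter Topology

lemma fa_mid {a : ℝ} (ha : 0 < a) (y : ℝ) :
    a * y ^ 2 + y / 2 + 1 / (16 * a) = a * (y + 1 / (4 * a)) ^ 2 := by
  field_simp; ring

lemma fa_nonneg {a : ℝ} (ha : 0 < a) (y : ℝ) : 0 ≤ fa a y := by
  have hb : 0 < 1 / (4 * a) := by positivity
  unfold fa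
  split_ifs with h1 h2
  · linarith
  · rw [fa_mid ha]; positivity
  · exact le_rfl

lemma fa_mono_lip {a : ℝ} (ha : 0 < a) {y z : ℝ} (h : y ≤ z) :
    0 ≤ fa a z - fa a y ∧ fa a z - fa a y ≤ z - y := by
  have hb : 0 < 1 / (4 * a) := by positivity
  have hab : a * (1 / (4 * a)) = 1 / 4 := by field_simp
  unfold fa
  simp only [fa_mid ha]
  set b := 1 / (4 * a)
  have hq : ∀ w, w = a * (w + b) ^ 2 - a * (w - b) ^ 2 := fun w => by
    linear_combination (-4 * w) * hab
  have hy : y < b → -b ≤ y → a * (y + b) ^ 2 ≤ b := fun h1 h2 => by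
    have := mul_nonneg ha.le (mul_nonneg (by linarith : 0 ≤ 3 * b + y) (by linarith : 0 ≤ b - y))
    have e : a * (y + b) ^ 2 = 4 * (a * b) * b - a * ((3 * b + y) * (b - y)) := by ring
    rw [e, hab]
    linarith
  have hz : z < b → -b ≤ z → a * (z + b) ^ 2 ≤ z + b := fun h1 h2 => by
    have := mul_nonneg ha.le (mul_nonneg (by linarith : 0 ≤ z + b) (by linarith : 0 ≤ 3 * b - z))
    have e : a * (z + b) ^ 2 = 4 * (a * b) * (z + b) - a * ((z + b) * (3 * b - z)) := by ring
    rw [e, hab]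
    linarith
  have hp : ∀ w, 0 ≤ a * w ^ 2 := fun w => by positivity
  by_cases h1 : b ≤ z <;> by_cases h2 : b ≤ y <;> by_cases h3 : -b ≤ z <;> by_cases h4 : -b ≤ y <;>
    simp only [h1, h2, h3, h4, if_true, if_false] <;> first
    | (exfalso; linarith)
    | (constructor <;> linarith)
    | skip
  · constructor <;> linarith [hy (not_le.1 h2) h4, hq y, hp (y - b)]
  · have e : a * (z + b) ^ 2 - a * (y + b) ^ 2 = a * ((z - y) * (z + y + 2 * b)) := by ring
    have e1 : 0 ≤ (z - y) * (z + y + 2 * b) := mul_nonneg (by linarith) (by linarith)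
    have e2 : 0 ≤ a * ((z - y) * (2 * b - z - y)) :=
      mul_nonneg ha.le (mul_nonneg (by linarith) (by linarith))
    rw [e]
    refine ⟨mul_nonneg ha.le e1, ?_⟩
    have e3 : a * ((z - y) * (z + y + 2 * b))
        = 4 * (a * b) * (z - y) - a * ((z - y) * (2 * b - z - y)) := by ring
    rw [e3, hab]
    linarith
  · constructor <;> linarith [hz (not_le.1 h1) h3, hp (z + b)]

lemma fa_lip {a : ℝ} (ha : 0 < a) (y z : ℝ) : |fa a y - fa a z| ≤ |y - z| := by
  rcases le_total y z with h | h
  · have := fa_mono_lip ha h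
    rw [abs_sub_comm, abs_sub_comm y z, abs_of_nonneg this.1]
    exact this.2.trans (le_abs_self _)
  · have := fa_mono_lip ha h
    rw [abs_of_nonneg this.1]
    exact this.2.trans (le_abs_self _)

/-- The coefficient `f_a(e·x)` of the nonlinearity. -/
def Fr (aa : ℝ) (x : Euc I) : ℝ := fa aa (∑ j, x j)

lemma Fr_nonneg {aa : ℝ} (ha : 0 < aa) (x : Euc I) : 0 ≤ Fr aa x := fa_nonneg ha _

lemma abs_coord_le (x : Euc I) (i : Fin I) : |x i| ≤ ‖x‖ := by
  simpa using PiLp.norm_apply_le x i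

lemma Fr_lip {aa : ℝ} (ha : 0 < aa) (x y : Euc I) : |Fr aa x - Fr aa y| ≤ I * ‖x - y‖ := by
  refine (fa_lip ha _ _).trans ?_
  rw [← Finset.sum_sub_distrib]
  refine (Finset.abs_sum_le_sum_abs _ _).trans ?_
  refine (Finset.sum_le_sum fun i _ => abs_coord_le (x - y) i).trans ?_
  simp

lemma Fr_le {aa : ℝ} (ha : 0 < aa) (x : Euc I) : Fr aa x ≤ I * ‖x‖ + 1 / (16 * aa) := by
  have h := Fr_lip ha x 0
  have h0 : Fr aa (0 : Euc I) = 1 / (16 * aa) := by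
    have hb : 0 < 1 / (4 * aa) := by positivity
    simp only [Fr, fa, PiLp.zero_apply, Finset.sum_const_zero]
    rw [if_neg (by linarith), if_pos (by linarith)]
    ring
  rw [h0, sub_zero] at h
  linarith [(abs_le.1 h).2]

/-- The square root of the constant part `σ_i = (λ_i + μ_i ν_i n) / 2` of the diffusion coefficient.
-/
def sG (μ a : Fin I → ℝ) (l : ℝ) (n : ℕ) (i : Fin I) : ℝ :=
  √((1 / 2) * (a i * l + μ i * (nu μ a i * n)))

/-- Second-order perturbation of the `k`-th linear equation, which has the whole weight `f_a(e·x)`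
on class `k`. -/
def eG (μ : Fin I → ℝ) (aa : ℝ) (k i : Fin I) (x : Euc I) : ℝ :=
  (1 / 2) * μ i * x i - if i = k then (1 / 2) * μ i * Fr aa x else 0

/-- First-order coefficient of the `k`-th linear equation. -/
def bG (μ a : Fin I → ℝ) (l : ℝ) (n : ℕ) (aa : ℝ) (k i : Fin I) (x : Euc I) : ℝ :=
  (a i * l - μ i * nu μ a i * n) - μ i * x i + if i = k then μ i * Fr aa x else 0

/-- Zeroth-order term of the `k`-th linear equation. -/
def cF (c : Fin I → ℝ) (aa : ℝ) (k : Fin I) (x : Euc I) : ℝ := Fr aa x * c k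

section
variable {μ a c : Fin I → ℝ} {l aa γ R : ℝ} {n : ℕ}

lemma nu_pos (hI : 0 < I) (hμ : ∀ i, 0 < μ i) (ha : ∀ i, 0 < a i) (i : Fin I) : 0 < nu μ a i := by
  have : Nonempty (Fin I) := ⟨⟨0, hI⟩⟩
  have h : 0 < ∑ j, a j / μ j :=
    Finset.sum_pos (fun j _ => div_pos (ha j) (hμ j)) Finset.univ_nonempty
  exact mul_pos (div_pos (ha i) (hμ i)) (inv_pos.2 h)

/-- The smoothed HJB equation is a minimum of linear equations, because `f_a ≥ 0` can be moved
inside the minimum. -/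
lemma HJBgen_iff (hI : 0 < I) (haa : 0 < aa) {φ : Euc I → ℝ} {x : Euc I}
    (hσ : ∀ i, 0 ≤ a i * l + μ i * (nu μ a i * n)) :
    HJBgen μ a c γ l n (fa aa) φ x ↔
      γ * φ x = ∑ i, sG μ a l n i ^ 2 * pd2 φ i x + ⨅ k, (∑ i, eG μ aa k i x * pd2 φ i x
        + ∑ i, bG μ a l n aa k i x * pd1 φ i x + cF c aa k x) := by
  have : NeZero I := ⟨hI.ne'⟩
  have hF := Fr_nonneg haa x
  set A : ℝ := ∑ i, (1 / 2) * μ i * x i * pd2 φ i x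
  set B : ℝ := ∑ i, ((a i * l - μ i * nu μ a i * n) - μ i * x i) * pd1 φ i x with hB
  have hk : ∀ k, ∑ i, eG μ aa k i x * pd2 φ i x + ∑ i, bG μ a l n aa k i x * pd1 φ i x
      + cF c aa k x
      = (A + B) + Fr aa x * (c k + μ k * pd1 φ k x - (1 / 2) * μ k * pd2 φ k x) := by
    intro k
    have e1 : ∑ i, eG μ aa k i x * pd2 φ i x = A - (1 / 2) * μ k * Fr aa x * pd2 φ k x := by
      simp only [eG, sub_mul, ite_mul, zero_mul, Finset.sum_sub_distrib, Finset.sum_ite_eq',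
        Finset.mem_univ, if_true, A]
    have e2 : ∑ i, bG μ a l n aa k i x * pd1 φ i x = B + μ k * Fr aa x * pd1 φ k x := by
      simp only [bG, add_mul _ _ (pd1 φ _ x), ite_mul, zero_mul, Finset.sum_add_distrib,
        Finset.sum_ite_eq', Finset.mem_univ, if_true, hB]
    rw [e1, e2, cF]
    ring
  have hinf : (⨅ k, (∑ i, eG μ aa k i x * pd2 φ i x + ∑ i, bG μ a l n aa k i x * pd1 φ i x
      + cF c aa k x)) = (A + B) + Fr aa x *
        ⨅ k, (c k + μ k * pd1 φ k x - (1 / 2) * μ k * pd2 φ k x) := by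
    simp only [hk]
    rw [Real.mul_iInf_of_nonneg hF]
    exact (add_ciInf (Finite.bddBelow_range _) (A + B)).symm
  have hs : ∑ i, sG μ a l n i ^ 2 * pd2 φ i x
      = (1 / 2) * ∑ i, (a i * l + μ i * (nu μ a i * n + x i)) * pd2 φ i x - A := by
    rw [Finset.mul_sum, ← Finset.sum_sub_distrib]
    refine Finset.sum_congr rfl fun i _ => ?_
    rw [sG, Real.sq_sqrt (by linarith [hσ i])]
    ring
  rw [hinf, hs]
  unfold HJBgen
  rw [← hB, show fa aa (∑ j, x j) = Fr aa x from rfl]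
  constructor <;> intro h <;> linarith

lemma isSolGen_iff (hI : 0 < I) (haa : 0 < aa) {φ : Euc I → ℝ}
    (hσ : ∀ i, 0 ≤ a i * l + μ i * (nu μ a i * n)) :
    IsSolGen μ a c γ l n R (fa aa) φ ↔
      IsCl R γ (sG μ a l n) (eG μ aa) (bG μ a l n aa) (cF c aa) φ :=
  ⟨fun h => ⟨h.1, h.2.1, h.2.2.1, fun x hx => (HJBgen_iff hI haa hσ).1 (h.2.2.2 x hx)⟩,
    fun h => ⟨h.lip, h.c2, h.bd, fun x hx => (HJBgen_iff hI haa hσ).2 (h.eq x hx)⟩⟩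

/-- The data of the smoothed HJB equation are admissible as soon as the radius is small compared
with `n`. -/
lemma coefG (hI : 0 < I) (hμ : ∀ i, 0 < μ i) (ha : ∀ i, 0 < a i) (hc : ∀ i, 0 < c i)
    (hγ : 0 < γ) (haa : 0 < aa) (hR : 0 < R) (hl : 0 < l)
    (hsm : ∀ i, (I + 1) * R + 1 / (16 * aa) ≤ min (eps0 I) (eta0 I) * (nu μ a i * n)) :
    ∃ Λ, Coef R Λ γ (sG μ a l n) (eG μ aa) (bG μ a l n aa) (cF c aa) := by
  have hν := nu_pos hI hμ ha
  have hσ : ∀ i, 0 < a i * l + μ i * (nu μ a i * n) := fun i =>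
    add_pos_of_pos_of_nonneg (mul_pos (ha i) hl)
      (mul_nonneg (hμ i).le (mul_nonneg (hν i).le n.cast_nonneg))
  have hs2 : ∀ i, sG μ a l n i ^ 2 = (1 / 2) * (a i * l + μ i * (nu μ a i * n)) := fun i =>
    Real.sq_sqrt (by linarith [hσ i])
  have hI1 : (0:ℝ) ≤ I := I.cast_nonneg
  set G : ℝ := I * R + 1 / (16 * aa)
  have hG : 0 ≤ G := by positivity
  have hF0 : ∀ x : Euc I, ‖x‖ < R → |Fr aa x| ≤ G := fun x hx => by
    rw [abs_of_nonneg (Fr_nonneg haa x)]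
    refine (Fr_le haa x).trans ?_
    have : (I:ℝ) * ‖x‖ ≤ I * R := by gcongr
    linarith
  have hm0 : 0 < min (eps0 I) (eta0 I) := lt_min eps0_pos eta0_pos
  have he : ∀ k i (x : Euc I), ‖x‖ < R →
      |eG μ aa k i x| ≤ min (eps0 I) (eta0 I) * sG μ a l n i ^ 2 := by
    intro k i x hx
    have h1 : |eG μ aa k i x| ≤ (1 / 2) * μ i * (R + G) := by
      have e1 : |(1 / 2) * μ i * x i| ≤ (1 / 2) * μ i * R := by
        rw [abs_mul, abs_of_pos (by linarith [hμ i] : 0 < 1 / 2 * μ i)]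
        exact mul_le_mul_of_nonneg_left ((abs_coord_le x i).trans hx.le) (by linarith [hμ i])
      have e2 : |if i = k then (1 / 2) * μ i * Fr aa x else 0| ≤ (1 / 2) * μ i * G := by
        split_ifs
        · rw [abs_mul, abs_of_pos (by linarith [hμ i] : 0 < 1 / 2 * μ i)]
          exact mul_le_mul_of_nonneg_left (hF0 x hx) (by linarith [hμ i])
        · rw [abs_zero]; exact mul_nonneg (by linarith [hμ i]) hG
      rw [mul_add]
      exact (abs_sub _ _).trans (add_le_add e1 e2)
    refine h1.trans ?_
    rw [hs2]
    have h2 := mul_le_mul_of_nonneg_left (hsm i) (by linarith [hμ i] : 0 ≤ (1 / 2) * μ i)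
    have h3 : R + G = (I + 1) * R + 1 / (16 * aa) := by ring
    rw [h3]
    have h4 : 0 ≤ min (eps0 I) (eta0 I) * (a i * l) := mul_nonneg hm0.le (mul_pos (ha i) hl).le
    linarith
  set q : Fin I → ℝ := fun i => μ i * (1 + I) + |a i * l - μ i * nu μ a i * n| + μ i * R + μ i * G
    + c i * G + c i * I with hq
  have hq0 : ∀ i, 0 ≤ q i := fun i => by
    have := hμ i
    have := hc i
    positivity
  have hΛ : ∀ i, q i ≤ 1 + ∑ i, q i := fun i => by
    linarith [Finset.single_le_sum (fun j _ => hq0 j) (Finset.mem_univ i)]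
  have p1 : ∀ i, 0 ≤ μ i * (1 + I) := fun i => mul_nonneg (hμ i).le (by positivity)
  have p2 : ∀ i, 0 ≤ μ i * R := fun i => mul_nonneg (hμ i).le hR.le
  have p3 : ∀ i, 0 ≤ μ i * G := fun i => mul_nonneg (hμ i).le hG
  have p4 : ∀ i, 0 ≤ c i * G := fun i => mul_nonneg (hc i).le hG
  have p5 : ∀ i, 0 ≤ c i * I := fun i => mul_nonneg (hc i).le hI1
  have p6 : ∀ i, 0 ≤ |a i * l - μ i * nu μ a i * n| := fun i => abs_nonneg _
  have hd : ∀ k i (x y : Euc I),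
      |μ i * (x i - y i) - if i = k then μ i * (Fr aa x - Fr aa y) else 0|
        ≤ μ i * (1 + I) * ‖x - y‖ := by
    intro k i x y
    have e1 : |μ i * (x i - y i)| ≤ μ i * ‖x - y‖ := by
      rw [abs_mul, abs_of_pos (hμ i)]
      exact mul_le_mul_of_nonneg_left (abs_coord_le (x - y) i) (hμ i).le
    have e2 : |if i = k then μ i * (Fr aa x - Fr aa y) else 0| ≤ μ i * (I * ‖x - y‖) := by
      split_ifs
      · rw [abs_mul, abs_of_pos (hμ i)]
        exact mul_le_mul_of_nonneg_left (Fr_lip haa x y) (hμ i).le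
      · rw [abs_zero]; exact mul_nonneg (hμ i).le (by positivity)
    refine (abs_sub _ _).trans ((add_le_add e1 e2).trans (le_of_eq (by ring)))
  refine ⟨1 + ∑ i, q i, hI, hR, ?_, hγ, fun i => Real.sqrt_pos.2 (by linarith [hσ i]), ?_, ?_, ?_,
    ?_, ?_, ?_, ?_⟩
  · linarith [Finset.sum_nonneg fun i (_ : i ∈ (univ : Finset (Fin I))) => hq0 i]
  · exact fun k i x hx => (he k i x hx).trans
      (mul_le_mul_of_nonneg_right (min_le_left _ _) (sq_nonneg _))
  · exact fun k i x hx => (he k i x hx).trans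
      (mul_le_mul_of_nonneg_right (min_le_right _ _) (sq_nonneg _))
  · intro k i x y _ _
    have e : eG μ aa k i x - eG μ aa k i y
        = (1 / 2) * (μ i * (x i - y i) - if i = k then μ i * (Fr aa x - Fr aa y) else 0) := by
      unfold eG; split_ifs <;> ring
    rw [e, abs_mul, abs_of_pos (by norm_num : (0:ℝ) < 1 / 2)]
    have h1 := hd k i x y
    have h2 : μ i * (1 + I) * ‖x - y‖ ≤ (1 + ∑ i, q i) * ‖x - y‖ := by
      refine mul_le_mul_of_nonneg_right ?_ (norm_nonneg _)
      have := hΛ i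
      simp only [hq] at this ⊢
      linarith [p1 i, p2 i, p3 i, p4 i, p5 i, p6 i]
    linarith [abs_nonneg (μ i * (x i - y i) - if i = k then μ i * (Fr aa x - Fr aa y) else 0)]
  · intro k i x hx
    have e1 : |μ i * x i| ≤ μ i * R := by
      rw [abs_mul, abs_of_pos (hμ i)]
      exact mul_le_mul_of_nonneg_left ((abs_coord_le x i).trans hx.le) (hμ i).le
    have e2 : |if i = k then μ i * Fr aa x else 0| ≤ μ i * G := by
      split_ifs
      · rw [abs_mul, abs_of_pos (hμ i)]
        exact mul_le_mul_of_nonneg_left (hF0 x hx) (hμ i).le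
      · rw [abs_zero]; exact p3 i
    have e3 : |bG μ a l n aa k i x| ≤ |a i * l - μ i * nu μ a i * n| + μ i * R + μ i * G :=
      (abs_add_le _ _).trans (add_le_add ((abs_sub _ _).trans (add_le_add le_rfl e1)) e2)
    have := hΛ i
    simp only [hq] at this ⊢
    linarith [p1 i, p2 i, p3 i, p4 i, p5 i, p6 i]
  · intro k i x y _ _
    have e : bG μ a l n aa k i x - bG μ a l n aa k i y
        = -(μ i * (x i - y i) - if i = k then μ i * (Fr aa x - Fr aa y) else 0) := by
      unfold bG; split_ifs <;> ring
    rw [e, abs_neg]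
    refine (hd k i x y).trans (mul_le_mul_of_nonneg_right ?_ (norm_nonneg _))
    have := hΛ i
    simp only [hq] at this ⊢
    linarith [p1 i, p2 i, p3 i, p4 i, p5 i, p6 i]
  · intro k x hx
    rw [cF, abs_mul, abs_of_pos (hc k), mul_comm]
    have e := mul_le_mul_of_nonneg_left (hF0 x hx) (hc k).le
    have := hΛ k
    simp only [hq] at this ⊢
    linarith [p1 k, p2 k, p3 k, p4 k, p5 k, p6 k]
  · intro k x y _ _
    rw [cF, cF, ← sub_mul, abs_mul, abs_of_pos (hc k), mul_comm]
    have e := mul_le_mul_of_nonneg_left (Fr_lip haa x y) (hc k).le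
    refine e.trans ?_
    rw [← mul_assoc]
    refine mul_le_mul_of_nonneg_right ?_ (norm_nonneg _)
    have := hΛ k
    simp only [hq] at this ⊢
    linarith [p1 k, p2 k, p3 k, p4 k, p5 k, p6 k]

end

/-- The radius `κ √n (log n)^m` is `o(n)`. -/
lemma Rad_isLittleO (κ : ℝ) (m : ℕ) :
    (fun n : ℕ => Rad κ m n) =o[atTop] fun n : ℕ => (n : ℝ) := by
  have h1 : (fun x : ℝ => Real.log x ^ m) =o[atTop] fun x : ℝ => x ^ (1 / 2 : ℝ) := by
    simpa using isLittleO_log_rpow_rpow_atTop (s := 1 / 2) (m : ℝ) (by norm_num)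
  have h2 := ((Asymptotics.isBigO_refl (fun x : ℝ => κ * √x) atTop).mul_isLittleO h1)
  have h3 : (fun x : ℝ => κ * √x * x ^ (1 / 2 : ℝ)) =O[atTop] fun x : ℝ => x := by
    refine Asymptotics.IsBigO.of_bound |κ| ?_
    filter_upwards [eventually_ge_atTop 0] with x hx
    rw [← Real.sqrt_eq_rpow, mul_assoc, Real.mul_self_sqrt hx, norm_mul, Real.norm_eq_abs]
  exact (h2.trans_isBigO h3).comp_tendsto tendsto_natCast_atTop_atTop

lemma Rad_pos {κ : ℝ} (hκ : 0 < κ) (m : ℕ) {n : ℕ} (hn : 2 ≤ n) : 0 < Rad κ m n := by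
  have h : (1:ℝ) < n := by exact_mod_cast hn
  have := Real.log_pos h
  unfold Rad
  positivity

lemma HolderSecond.congr {α R : ℝ} {φ ψ : Euc I → ℝ} (h : HolderSecond α R φ)
    (e : EqOn φ ψ (ball 0 R)) : HolderSecond α R ψ := by
  intro K hK hKc
  obtain ⟨C, hC⟩ := h K hK hKc
  have key : ∀ x ∈ K, fderiv ℝ (fderiv ℝ ψ) x = fderiv ℝ (fderiv ℝ φ) x := fun x hx =>
    ((e.eventuallyEq_of_mem (isOpen_ball.mem_nhds (hK hx))).fderiv.fderiv_eq).symm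
  exact ⟨C, fun x hx y hy => by rw [key x hx, key y hy]; exact hC x hx y hy⟩

/-- For large `n` the second-order perturbation, of the size of the radius, is small relative to
`σ_i`, which grows like `n`. -/
lemma exists_large {μ a : Fin I → ℝ} (κ : ℝ) (m : ℕ) (aa : ℝ) (hν : ∀ i, 0 < nu μ a i) :
    ∃ N : ℕ, ∀ n : ℕ, N ≤ n → (∀ i,
      (I + 1) * Rad κ m n + 1 / (16 * aa) ≤ min (eps0 I) (eta0 I) * (nu μ a i * n)) ∧ 2 ≤ n := by
  have hm0 : 0 < min (eps0 I) (eta0 I) := lt_min eps0_pos eta0_pos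
  have hev : ∀ᶠ n : ℕ in atTop, ∀ i,
      (I + 1) * Rad κ m n + 1 / (16 * aa) ≤ min (eps0 I) (eta0 I) * (nu μ a i * n) := by
    refine eventually_all.2 fun i => ?_
    have h1 := ((Rad_isLittleO κ m).const_mul_left ((I:ℝ) + 1)).add
      (Asymptotics.isLittleO_const_left.2 (Or.inr (tendsto_norm_atTop_atTop.comp
        tendsto_natCast_atTop_atTop)) : (fun _ : ℕ => 1 / (16 * aa)) =o[atTop] fun n : ℕ => (n : ℝ))
    filter_upwards [h1.bound (mul_pos hm0 (hν i))] with n hn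
    rw [Real.norm_natCast, mul_assoc] at hn
    exact (le_abs_self _).trans hn
  exact eventually_atTop.1 (hev.and (eventually_ge_atTop 2))

end

/-- Fix `κ > 0`, `m ≥ 3` and `a > 0`.  For all sufficiently large `n`, the
smoothed HJB equation with parameter `a` on `B_κ^n` has exactly one classical solution
(unique as a function on the closed ball); moreover there is `α ∈ (0,1]` independent of `n`
and `a` such that the second derivatives of any such solution are `α`-Hölder continuous on
every compact subset of `B_κ^n`. -/
theorem stmt5
    (I : ℕ) (hI : 0 < I)
    (μ a c : Fin I → ℝ) (γ β : ℝ)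
    (hμ : ∀ i, 0 < μ i) (ha : ∀ i, 0 < a i) (hsum : ∑ i, a i = 1)
    (hc : ∀ i, 0 < c i) (hγ : 0 < γ)
    (lam : ℕ → ℝ)
    (hlam : ∀ n : ℕ, 1 ≤ n → 0 < lam n ∧
      (n : ℝ) = lam n * (∑ i, a i / μ i)
        + β * Real.sqrt (lam n * (∑ i, a i / μ i)))
    (κ : ℝ) (hκ : 0 < κ) (m : ℕ) (hm : 3 ≤ m) :
    ∃ α : ℝ, 0 < α ∧ α ≤ 1 ∧
      ∀ aa : ℝ, 0 < aa →
        ∃ N : ℕ, ∀ n : ℕ, N ≤ n →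
          (∃ φ : Euc I → ℝ,
              IsSolGen μ a c γ (lam n) n (Rad κ m n) (fa aa) φ) ∧
          (∀ φ ψ : Euc I → ℝ,
              IsSolGen μ a c γ (lam n) n (Rad κ m n) (fa aa) φ →
              IsSolGen μ a c γ (lam n) n (Rad κ m n) (fa aa) ψ →
              Set.EqOn φ ψ (closedBall 0 (Rad κ m n))) ∧
          (∀ φ : Euc I → ℝ,
              IsSolGen μ a c γ (lam n) n (Rad κ m n) (fa aa) φ →
              HolderSecond α (Rad κ m n) φ) := by
  refine ⟨1 / 2, by norm_num, by norm_num, fun aa haa => ?_⟩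
  have hν := nu_pos hI hμ ha
  obtain ⟨N, hN⟩ := exists_large κ m aa hν
  refine ⟨N, fun n hn => ?_⟩
  obtain ⟨hsm, hn2⟩ := hN n hn
  have hl := (hlam n (by omega)).1
  have hσ : ∀ i, 0 ≤ a i * lam n + μ i * (nu μ a i * n) := fun i =>
    add_nonneg (mul_pos (ha i) hl).le
      (mul_nonneg (hμ i).le (mul_nonneg (hν i).le n.cast_nonneg))
  obtain ⟨Λ, D⟩ := coefG hI hμ ha hc hγ haa (Rad_pos hκ m hn2) hl hsm
  simp only [isSolGen_iff hI haa hσ]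
  obtain ⟨φ, hφ, hH⟩ := D.exists_isCl
  exact ⟨⟨φ, hφ⟩, fun φ ψ h h' => D.isCl_unique h h',
    fun ψ hψ => hH.congr ((D.isCl_unique hφ hψ).mono ball_subset_closedBall)⟩

end HW
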